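/- arXiv:math/0309360 — 4 statements merged into one kernel-verified Lean document; each statement's English description precedes it below -/
import Mathlib

section
/- Let R be a finite-dimensional locally essential integral domain, written R = ⋂_{p∈Δ} R_p with each R_p a valuation domain. Then dim(Int(R)) ≤ dim(R[X]). -/
/- Preamble: integer-valued polynomials and essential domains. -/

noncomputable section

open Polynomial

/-- The image in the quotient field `FractionRing R` of the localization `R_p` of `R`
at (the complement of) an ideal `p`, as a subset of `FractionRing R`. -/
def locSet (R : Type*) [CommRing R] [IsDomain R] (p : Ideal R) : Set (FractionRing R) :=
  {x | ∃ a s : R, s ∉ p ∧ x = algebraMap R (FractionRing R) a / algebraMap R (FractionRing R) s}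

/-- An integral domain `R` is *essential* if there is a set `Δ` of prime ideals of `R`
such that `R = ⋂_{p ∈ Δ} R_p` (inside the quotient field) and each `R_p` is a valuation
domain (equivalently, for every `x` in the quotient field, `x ∈ R_p` or `x⁻¹ ∈ R_p`). -/
def IsEssential (R : Type*) [CommRing R] [IsDomain R] : Prop :=
  ∃ Δ : Set (Ideal R),
    (∀ p ∈ Δ, p.IsPrime) ∧
    (∀ p ∈ Δ, ∀ x : FractionRing R, x ∈ locSet R p ∨ x⁻¹ ∈ locSet R p) ∧
    Set.range (algebraMap R (FractionRing R)) = ⋂ p ∈ Δ, locSet R p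

/-- An integral domain `R` is *locally essential* if `R_q` is an essential domain for
every prime ideal `q` of `R`. -/
def IsLocallyEssential (R : Type*) [CommRing R] [IsDomain R] : Prop :=
  ∀ (q : Ideal R) (hq : q.IsPrime), IsEssential (Localization (@Ideal.primeCompl R _ q hq))

/-- The ring `Int(R) = {f ∈ K[X] : f(R) ⊆ R}` of integer-valued polynomials over `R`,
as a subring of `K[X]` where `K` is the quotient field of `R`. -/
def IntPoly (R : Type*) [CommRing R] [IsDomain R] : Subring (Polynomial (FractionRing R)) :=
  ⨅ a : R, Subring.comap (Polynomial.evalRingHom (algebraMap R (FractionRing R) a))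
    (algebraMap R (FractionRing R)).range

end


namespace IntPolyAux

open Polynomial

/-- elimination of one variable between two nested primes -/
lemma elim_step {A : Type*} [CommRing A] (Q Q' : Ideal A) (hQ : Q.IsPrime) (hle : Q ≤ Q')
    (w : A) (hw : w ∈ Q') (hw' : w ∉ Q) :
    ∀ (j : ℕ) (S : ℕ → Prop) (g : A[X]), (∀ i, ¬ S i → g.coeff i ∈ Q) → S j →
      g.eval w ∈ Q → ∃ i, S i ∧ g.coeff i ∈ Q' := by
  intro j
  induction j with
  | zero =>
    intro S g _ h0 hg
    refine ⟨0, h0, ?_⟩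
    have h := congrArg (Polynomial.eval w) (Polynomial.divX_mul_X_add g)
    simp only [eval_add, eval_mul, eval_X, eval_C] at h
    have : g.coeff 0 = g.eval w - g.divX.eval w * w := by rw [← h]; ring
    rw [this]
    exact Q'.sub_mem (hle hg) (Q'.mul_mem_left _ hw)
  | succ j ih =>
    intro S g hS hj hg
    have h := congrArg (Polynomial.eval w) (Polynomial.divX_mul_X_add g)
    simp only [eval_add, eval_mul, eval_X, eval_C] at h
    by_cases h0 : S 0
    · refine ⟨0, h0, ?_⟩
      have : g.coeff 0 = g.eval w - g.divX.eval w * w := by rw [← h]; ring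
      rw [this]
      exact Q'.sub_mem (hle hg) (Q'.mul_mem_left _ hw)
    · have h1 : g.divX.eval w * w ∈ Q := by
        have : g.divX.eval w * w = g.eval w - g.coeff 0 := by rw [← h]; ring
        rw [this]
        exact Q.sub_mem hg (hS 0 h0)
      have h2 : g.divX.eval w ∈ Q := (hQ.mem_or_mem h1).resolve_right hw'
      obtain ⟨i, hi, hi'⟩ := ih (fun i => S (i + 1)) g.divX
        (fun i hi => by rw [coeff_divX]; exact hS _ hi) hj h2
      exact ⟨i + 1, hi, by rwa [coeff_divX] at hi'⟩

/-- `R_q` is a valuation ring, expressed inside `R`. -/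
def ValAt (R : Type*) [CommRing R] (q : Ideal R) : Prop :=
  ∀ a b : R, ∃ s t : R, s ∉ q ∧ (s * a = t * b ∨ s * b = t * a)

lemma exists_content {R : Type*} [CommRing R] (q : Ideal R) (hq : q.IsPrime)
    (hv : ValAt R q) {ι : Type*} [DecidableEq ι] (c : ι → R) (T : Finset ι) (hT : T.Nonempty) :
    ∃ k ∈ T, ∃ s, s ∉ q ∧ ∀ i ∈ T, c k ∣ s * c i := by
  induction hT using Finset.Nonempty.cons_induction with
  | singleton a =>
    refine ⟨a, by simp, 1, fun h => hq.ne_top ((Ideal.eq_top_iff_one _).2 h), ?_⟩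
    intro i hi
    rw [Finset.mem_singleton] at hi
    simp [hi]
  | cons a T ha hT ih =>
    obtain ⟨k, hk, s, hs, h⟩ := ih
    obtain ⟨s', t, hs', h' | h'⟩ := hv (c a) (c k)
    · refine ⟨k, by simp [hk], s * s', fun hm => (hq.mem_or_mem hm).elim hs hs', ?_⟩
      intro i hi
      rcases Finset.mem_cons.1 hi with rfl | hi
      · exact ⟨s * t, by rw [mul_assoc, h']; ring⟩
      · obtain ⟨d, hd⟩ := h i hi
        exact ⟨s' * d, by rw [mul_right_comm, hd]; ring⟩
    · refine ⟨a, by simp, s * s', fun hm => (hq.mem_or_mem hm).elim hs hs', ?_⟩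
      intro i hi
      rcases Finset.mem_cons.1 hi with rfl | hi
      · exact ⟨s * s', by ring⟩
      · obtain ⟨d, hd⟩ := h i hi
        exact ⟨t * d, by rw [mul_right_comm, hd, mul_right_comm, mul_comm (c k), h']; ring⟩

lemma normalize_one {R : Type*} [CommRing R] [IsDomain R] (q : Ideal R) (hq : q.IsPrime)
    (hv : ValAt R q) (H : R[X]) (hH : H ≠ 0) :
    ∃ k s, ∃ H' : R[X], s ∉ q ∧ H'.coeff k = s ∧ C s * H = C (H.coeff k) * H' := by
  classical
  obtain ⟨k, hk, s, hs, h⟩ := exists_content q hq hv H.coeff H.support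
    (Polynomial.support_nonempty.2 hH)
  have : C (H.coeff k) ∣ C s * H := by
    rw [C_dvd_iff_dvd_coeff]
    intro i
    rw [coeff_C_mul]
    by_cases hi : i ∈ H.support
    · exact h i hi
    · simp [notMem_support_iff.1 hi]
  obtain ⟨H', hH'⟩ := this
  refine ⟨k, s, H', hs, ?_, hH'⟩
  have h2 := congrArg (fun p => coeff p k) hH'
  simp only [coeff_C_mul] at h2
  rw [mul_comm] at h2
  exact (mul_left_cancel₀ (mem_support_iff.1 hk) h2).symm

lemma normalize_two {R : Type*} [CommRing R] [IsDomain R] (q : Ideal R) (hq : q.IsPrime)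
    (hv : ValAt R q) (F : R[X][X]) (hF : F ≠ 0) :
    ∃ j k s c, ∃ F' : R[X][X], s ∉ q ∧ c ≠ 0 ∧ (F'.coeff j).coeff k = s ∧
      C (C s) * F = C (C c) * F' := by
  classical
  obtain ⟨j₀, hj₀⟩ := Polynomial.support_nonempty.2 hF
  obtain ⟨k₀, hk₀⟩ := Polynomial.support_nonempty.2 (mem_support_iff.1 hj₀)
  obtain ⟨⟨j, k⟩, hk, s, hs, h⟩ := exists_content q hq hv
    (fun x : (_ : ℕ) × ℕ => (F.coeff x.1).coeff x.2)
    (F.support.sigma fun j => (F.coeff j).support)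
    ⟨⟨j₀, k₀⟩, Finset.mem_sigma.2 ⟨hj₀, hk₀⟩⟩
  have hk2 := (Finset.mem_sigma.1 hk).2
  simp only at h hk2
  have : C (C ((F.coeff j).coeff k)) ∣ C (C s) * F := by
    rw [C_dvd_iff_dvd_coeff]
    intro i
    rw [coeff_C_mul, C_dvd_iff_dvd_coeff]
    intro l
    rw [coeff_C_mul]
    by_cases hl : (F.coeff i).coeff l = 0
    · simp [hl]
    · refine h ⟨i, l⟩ (Finset.mem_sigma.2 ⟨?_, mem_support_iff.2 hl⟩)
      rw [mem_support_iff]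
      intro h0
      exact hl (by simp [h0])
  obtain ⟨F', hF'⟩ := this
  refine ⟨j, k, s, _, F', hs, mem_support_iff.1 hk2, ?_, hF'⟩
  have h2 := congrArg (fun p => coeff (coeff p j) k) hF'
  simp only [coeff_C_mul] at h2
  rw [mul_comm] at h2
  exact (mul_left_cancel₀ (mem_support_iff.1 hk2) h2).symm

/-- No two repetitions over a valuation. -/
lemma no_two {R A : Type*} [CommRing R] [IsDomain R] [CommRing A] [IsDomain A] [Algebra R A]
    (hinj : Function.Injective (algebraMap R A))
    (hdep : ∀ u v : A, ∃ F : R[X][X], F ≠ 0 ∧ (F.map (aeval u).toRingHom).eval v = 0)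
    (q : Ideal R) (hq : q.IsPrime) (hv : ValAt R q)
    (Q₀ Q₁ Q₂ Q₃ : PrimeSpectrum A) (h01 : Q₀ < Q₁) (h12 : Q₁ ≤ Q₂) (h23 : Q₂ < Q₃)
    (hle : Q₃.asIdeal.comap (algebraMap R A) ≤ q)
    (e01 : Q₀.asIdeal.comap (algebraMap R A) = Q₁.asIdeal.comap (algebraMap R A))
    (e23 : Q₂.asIdeal.comap (algebraMap R A) = Q₃.asIdeal.comap (algebraMap R A)) : False := by
  obtain ⟨v, hv1, hv0⟩ := SetLike.exists_of_lt (show Q₀.asIdeal < Q₁.asIdeal from h01)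
  obtain ⟨u, hu3, hu2⟩ := SetLike.exists_of_lt (show Q₂.asIdeal < Q₃.asIdeal from h23)
  have h12' : Q₁.asIdeal ≤ Q₂.asIdeal := h12
  have h23' : Q₂.asIdeal ≤ Q₃.asIdeal := le_of_lt (show Q₂.asIdeal < Q₃.asIdeal from h23)
  have h01' : Q₀.asIdeal ≤ Q₁.asIdeal := le_of_lt (show Q₀.asIdeal < Q₁.asIdeal from h01)
  obtain ⟨F, hF, hF0⟩ := hdep u v
  obtain ⟨j, k, s, c, F', hs, hc, hcoef, hFF⟩ := normalize_two q hq hv F hF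
  have hF'0 : (F'.map (aeval u).toRingHom).eval v = 0 := by
    have h := congrArg (fun p => (p.map (aeval u : R[X] →ₐ[R] A).toRingHom).eval v) hFF
    simp only [Polynomial.map_mul, eval_mul, hF0, mul_zero, Polynomial.map_C, eval_C] at h
    have h' := h.symm
    rcases mul_eq_zero.1 h' with h' | h'
    · exfalso
      have : algebraMap R A c = 0 := by simpa using h'
      exact hc (hinj (by rw [this, map_zero]))
    · exact h'
  obtain ⟨i, hi, hi'⟩ := elim_step Q₀.asIdeal Q₁.asIdeal Q₀.2 h01' v hv1 hv0 j
    (fun j => ∃ k, (F'.coeff j).coeff k ∉ Q₀.asIdeal.comap (algebraMap R A))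
    (F'.map (aeval u).toRingHom)
    (by
      intro i hi
      push Not at hi
      rw [coeff_map]
      change aeval u (F'.coeff i) ∈ _
      rw [aeval_eq_sum_range]
      refine Ideal.sum_mem _ fun l _ => ?_
      rw [Algebra.smul_def]
      exact Ideal.mul_mem_right _ _ (hi l))
    ⟨k, fun hm => hs (by
      rw [hcoef] at hm
      exact hle (h23' (h12' (h01' hm))))⟩
    (by rw [hF'0]; exact Ideal.zero_mem _)
  obtain ⟨l, hl⟩ := hi
  rw [coeff_map] at hi'
  change aeval u (F'.coeff i) ∈ _ at hi'
  set G := F'.coeff i with hG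
  have hG0 : G ≠ 0 := by
    intro h0
    rw [h0] at hl
    simp at hl
  obtain ⟨m, s', H, hs', hHm, hGH⟩ := normalize_one q hq hv G hG0
  have hGm : G.coeff m ∉ Q₁.asIdeal.comap (algebraMap R A) := by
    intro hm
    apply hl
    rw [e01]
    have h := congrArg (fun p => coeff p l) hGH
    simp only [coeff_C_mul] at h
    have h2 : s' * G.coeff l ∈ Q₁.asIdeal.comap (algebraMap R A) := by
      rw [h]; exact Ideal.mul_mem_right _ _ hm
    have hp : (Q₁.asIdeal.comap (algebraMap R A)).IsPrime := inferInstance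
    refine (hp.mem_or_mem h2).resolve_left fun h3 => hs' (hle (h23' (h12' h3)))
  have hHu : aeval u H ∈ Q₁.asIdeal := by
    have h := congrArg (aeval u) hGH
    simp only [map_mul, aeval_C] at h
    have h2 : algebraMap R A (G.coeff m) * aeval u H ∈ Q₁.asIdeal := by
      rw [← h]; exact Ideal.mul_mem_left _ _ hi'
    exact (Q₁.2.mem_or_mem h2).resolve_left hGm
  obtain ⟨n, hn, hn'⟩ := elim_step Q₂.asIdeal Q₃.asIdeal Q₂.2 h23' u hu3 hu2 m
    (fun n => H.coeff n ∉ Q₂.asIdeal.comap (algebraMap R A))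
    (H.map (algebraMap R A))
    (by
      intro i hi
      rw [coeff_map]
      exact not_not.1 hi)
    (fun hm => hs' (by
      rw [hHm] at hm
      exact hle (h23' hm)))
    (by rw [eval_map_algebraMap]; exact h12' hHu)
  rw [coeff_map] at hn'
  apply hn
  rw [e23]
  exact hn'

lemma chain_bound {α β : Type*} [PartialOrder α] [PartialOrder β] (f : α → β) (hf : Monotone f)
    (l : LTSeries α)
    (h : ∀ a b c d : Fin (l.length + 1), a < b → b ≤ c → c < d →
      f (l a) = f (l b) → f (l c) = f (l d) → False) :
    (l.length : WithBot ℕ∞) ≤ Order.krullDim β + 1 := by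
  by_cases hs : ∀ i j : Fin (l.length + 1), i < j → f (l i) ≠ f (l j)
  · have hm : StrictMono fun i => f (l i) := fun i j hij =>
      lt_of_le_of_ne (hf (l.strictMono hij).le) (hs i j hij)
    have := Order.LTSeries.length_le_krullDim (LTSeries.mk l.length _ hm)
    refine le_trans this ?_
    exact le_add_of_nonneg_right zero_le_one
  · push Not at hs
    obtain ⟨i, k, hik, hf'⟩ := hs
    have hpos : 0 < l.length := by
      have := i.2
      have := k.2
      have : (i : ℕ) < k := hik
      omega
    obtain ⟨m, hm⟩ : ∃ m, l.length = m + 1 := ⟨l.length - 1, by omega⟩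
    -- reindex the series
    let g : Fin (m + 1 + 1) → α := fun x => l (Fin.cast (by omega) x)
    have hg : StrictMono g := fun x y hxy => l.strictMono hxy
    have h' : ∀ a b c d : Fin (m + 1 + 1), a < b → b ≤ c → c < d →
        f (g a) = f (g b) → f (g c) = f (g d) → False := by
      intro a b c d hab hbc hcd
      exact h _ _ _ _ hab hbc hcd
    obtain ⟨i, k, hik, hf'⟩ : ∃ i k, i < k ∧ f (g i) = f (g k) :=
      ⟨Fin.cast (by omega) i, Fin.cast (by omega) k, hik, hf'⟩
    have hmono : StrictMono fun x => f (g (k.succAbove x)) := by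
      intro x y hxy
      have hab : k.succAbove x < k.succAbove y := Fin.strictMono_succAbove k hxy
      refine lt_of_le_of_ne (hf (hg hab).le) ?_
      intro hE
      change f (g (k.succAbove x)) = f (g (k.succAbove y)) at hE
      have hak := Fin.succAbove_ne k x
      have hbk := Fin.succAbove_ne k y
      generalize k.succAbove x = a at *
      generalize k.succAbove y = b at *
      rcases lt_or_gt_of_ne hbk with hb | hb
      · -- b < k
        have hik' : f (g b) = f (g k) ∨ b ≤ i := by
          rcases le_total b i with hbi | hbi
          · exact Or.inr hbi
          · left
            exact le_antisymm (hf (hg.monotone hb.le)) (hf' ▸ hf (hg.monotone hbi))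
        rcases hik' with h1 | h1
        · exact h' a b b k hab le_rfl hb hE h1
        · exact h' a b i k hab h1 hik hE hf'
      · rcases le_total k a with ha | ha
        · exact h' i k a b hik ha hab hf' hE
        · have : f (g k) = f (g b) :=
            le_antisymm (hf (hg.monotone hb.le)) (hE ▸ hf (hg.monotone ha))
          exact h' i k k b hik le_rfl hb hf' this
    have := Order.LTSeries.length_le_krullDim (LTSeries.mk m _ hmono)
    rw [hm]
    push_cast
    gcongr
    exact this

/-- algebraic dependence in `K[X]` -/
lemma dep_KX (R : Type*) [CommRing R] [IsDomain R] (u v : (FractionRing R)[X]) :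
    ∃ F : R[X][X], F ≠ 0 ∧
      (F.map (aeval u : R[X] →ₐ[R] (FractionRing R)[X]).toRingHom).eval v = 0 := by
  have htr : Algebra.trdeg R (FractionRing R)[X] = 1 := by
    have : FaithfulSMul R (FractionRing R) := inferInstance
    have := trdeg_add_eq R (FractionRing R) (A := (FractionRing R)[X])
    have h0 : Algebra.trdeg R (FractionRing R) = 0 := by
      have : Algebra.IsAlgebraic R (FractionRing R) :=
        IsLocalization.isAlgebraic _ (nonZeroDivisors R)
      exact trdeg_eq_zero
    rw [← this, h0, Polynomial.trdeg_of_isDomain, zero_add]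
  have hnot : ¬ AlgebraicIndependent R (fun o : Option Unit => o.elim v (fun _ => u)) := by
    intro hind
    have hle := hind.lift_cardinalMk_le_trdeg
    rw [htr] at hle
    simp at hle
  rw [algebraicIndependent_iff] at hnot
  push Not at hnot
  obtain ⟨p, hp0, hp⟩ := hnot
  let e : MvPolynomial (Option Unit) R ≃ₐ[R] R[X][X] :=
    (MvPolynomial.optionEquivLeft R Unit).trans
      (Polynomial.mapAlgEquiv (MvPolynomial.uniqueAlgEquiv R Unit))
  refine ⟨e p, by simpa using hp, ?_⟩
  have key : ((Polynomial.evalRingHom v).comp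
      (Polynomial.mapRingHom (aeval u : R[X] →ₐ[R] (FractionRing R)[X]).toRingHom)).comp
      (e : MvPolynomial (Option Unit) R →+* R[X][X]) =
      (MvPolynomial.aeval (R := R) (fun o : Option Unit => o.elim v (fun _ => u))).toRingHom := by
    apply MvPolynomial.ringHom_ext
    · intro r
      simp [e]
    · intro o
      rcases o with _ | o
      · simp [e]
      · simp [e]
  have := congrArg (fun f => f p) key
  simp only [RingHom.comp_apply] at this
  exact this.trans hp0

lemma mem_intPoly {R : Type*} [CommRing R] [IsDomain R] (f : (FractionRing R)[X]) :
    f ∈ IntPoly R ↔ ∀ a : R, ∃ b : R, algebraMap R (FractionRing R) b =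
      f.eval (algebraMap R (FractionRing R) a) := by
  simp [IntPoly, Subring.mem_iInf]

/-- coefficients of integer-valued polynomials at a prime with infinite residue ring -/
lemma coeff_denom {R : Type*} [CommRing R] [IsDomain R] (f : (FractionRing R)[X])
    (hf : f ∈ IntPoly R) (p : Ideal R) [p.IsPrime] (hp : ¬ p.IsMaximal) (j : ℕ) :
    ∃ s t : R, s ∉ p ∧ algebraMap R (FractionRing R) s * f.coeff j =
      algebraMap R (FractionRing R) t := by
  have hinf : Infinite (R ⧸ p) := by
    rw [← not_finite_iff_infinite]
    intro hfin
    exact hp (Ideal.Quotient.maximal_of_isField p (Finite.isField_of_domain (R ⧸ p)))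
  rw [mem_intPoly] at hf
  by_cases hj : f.natDegree < j
  · refine ⟨1, 0, fun h => ?_, by simp [coeff_eq_zero_of_natDegree_lt hj]⟩
    exact (inferInstance : p.IsPrime).ne_top ((Ideal.eq_top_iff_one _).2 h)
  push Not at hj
  set n := f.natDegree + 1 with hn
  let x : Fin n → R ⧸ p := fun i => Infinite.natEmbedding (R ⧸ p) i
  have hx : Function.Injective x := fun a b h => Fin.ext ((Infinite.natEmbedding (R ⧸ p)).injective h)
  choose a ha using fun i => Ideal.Quotient.mk_surjective (x i)
  choose b hb using hf
  let M : Matrix (Fin n) (Fin n) R := Matrix.vandermonde a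
  let φ := algebraMap R (FractionRing R)
  have hdet : M.det ∉ p := by
    intro h
    rw [← Ideal.Quotient.eq_zero_iff_mem, RingHom.map_det] at h
    have h2 : (Ideal.Quotient.mk p).mapMatrix M = Matrix.vandermonde x := by
      ext i k
      simp [M, Matrix.vandermonde_apply, ha]
    rw [h2] at h
    exact (Matrix.det_vandermonde_ne_zero_iff.2 hx) h
  let c : Fin n → FractionRing R := fun k => f.coeff k
  have hMc : (φ.mapMatrix M).mulVec c = fun i => φ (b (a i)) := by
    ext i
    rw [hb, eval_eq_sum_range, Matrix.mulVec, dotProduct, ← Fin.sum_univ_eq_sum_range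
      (fun k => f.coeff k * (algebraMap R (FractionRing R) (a i)) ^ k)]
    refine Finset.sum_congr rfl fun k _ => ?_
    simp [M, c, φ, Matrix.vandermonde_apply, mul_comm]
  have h3 : (φ.mapMatrix M.adjugate).mulVec ((φ.mapMatrix M).mulVec c) = φ M.det • c := by
    rw [Matrix.mulVec_mulVec, ← map_mul, Matrix.adjugate_mul]
    ext i
    simp [Matrix.mulVec, dotProduct, Matrix.one_apply, apply_ite φ]
  have h4 := congrFun h3 ⟨j, by omega⟩
  rw [hMc] at h4
  refine ⟨M.det, ∑ i, M.adjugate ⟨j, by omega⟩ i * b (a i), hdet, ?_⟩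
  rw [map_sum]
  simp only [map_mul]
  exact h4.symm

lemma dichotomy {R : Type*} [CommRing R] [IsDomain R] (q : Ideal R) (hq : q.IsPrime)
    (S : Type*) [CommRing S] [IsDomain S] [Algebra R S]
    [IsLocalization.AtPrime S q] (h : IsEssential S) :
    ValAt R q ∨ ∀ f ∈ IntPoly R, ∃ s : R, s ∉ q ∧ ∃ g : R[X],
      C (algebraMap R (FractionRing R) s) * f = g.map (algebraMap R (FractionRing R)) := by
  have hloc : IsLocalRing S := IsLocalization.AtPrime.isLocalRing S q
  have hinjS : Function.Injective (algebraMap R S) :=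
    IsLocalization.injective S q.primeCompl_le_nonZeroDivisors
  have hinjL : Function.Injective (algebraMap S (FractionRing S)) := IsFractionRing.injective S (FractionRing S)
  obtain ⟨Δ, hprime, hval, hcap⟩ := h
  -- membership of a fraction in `S`
  have back : ∀ (a b : R) (r : S), b ≠ 0 →
      algebraMap S (FractionRing S) (algebraMap R S a) / algebraMap S (FractionRing S) (algebraMap R S b) = algebraMap S (FractionRing S) r →
      ∃ s t : R, s ∉ q ∧ s * a = t * b := by
    intro a b r hb hr
    have hb' : algebraMap S (FractionRing S) (algebraMap R S b) ≠ 0 := by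
      intro h0
      exact hb (hinjS (hinjL (by rw [h0]; simp)))
    rw [div_eq_iff hb', ← map_mul] at hr
    have hr := hinjL hr
    obtain ⟨⟨t, s⟩, hts⟩ := IsLocalization.surj (@Ideal.primeCompl R _ q hq) r
    refine ⟨s, t, s.2, hinjS ?_⟩
    simp only at hts
    rw [map_mul, map_mul, hr, ← hts]
    ring
  by_cases hmax : IsLocalRing.maximalIdeal S ∈ Δ
  · left
    intro a b
    have h1q : (1 : R) ∉ q := fun h => hq.ne_top ((Ideal.eq_top_iff_one _).2 h)
    by_cases ha : a = 0
    · exact ⟨1, 0, h1q, Or.inl (by simp [ha])⟩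
    by_cases hb : b = 0
    · exact ⟨1, 0, h1q, Or.inr (by simp [hb])⟩
    have inS : ∀ x : FractionRing S, x ∈ locSet S (IsLocalRing.maximalIdeal S) → ∃ r : S, x = algebraMap S (FractionRing S) r := by
      rintro x ⟨y, z, hz, rfl⟩
      have hz' : IsUnit z := by
        by_contra hz'
        exact hz ((IsLocalRing.mem_maximalIdeal z).2 hz')
      obtain ⟨w, rfl⟩ := hz'
      refine ⟨y * (↑w⁻¹ : S), ?_⟩
      have hw : algebraMap S (FractionRing S) (w : S) ≠ 0 := (w.isUnit.map (algebraMap S (FractionRing S))).ne_zero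
      rw [div_eq_iff hw, ← map_mul, mul_assoc, Units.inv_mul, mul_one]
    rcases hval _ hmax (algebraMap S (FractionRing S) (algebraMap R S a) / algebraMap S (FractionRing S) (algebraMap R S b))
      with h | h
    · obtain ⟨r, hr⟩ := inS _ h
      obtain ⟨s, t, hs, hst⟩ := back a b r hb hr
      exact ⟨s, t, hs, Or.inl hst⟩
    · obtain ⟨r, hr⟩ := inS _ h
      rw [inv_div] at hr
      obtain ⟨s, t, hs, hst⟩ := back b a r ha hr
      exact ⟨s, t, hs, Or.inr hst⟩
  · right
    intro f hf
    have hc : ∀ j, ∃ s t : R, s ∉ q ∧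
        algebraMap R (FractionRing R) s * f.coeff j = algebraMap R (FractionRing R) t := by
      intro j
      obtain ⟨a, b, hb, hab⟩ := IsFractionRing.div_surjective (A := R) (f.coeff j)
      have hb0 : b ≠ 0 := nonZeroDivisors.ne_zero hb
      have hbK : algebraMap R (FractionRing R) b ≠ 0 := by simpa using hb0
      have hmem : algebraMap S (FractionRing S) (algebraMap R S a) / algebraMap S (FractionRing S) (algebraMap R S b) ∈
          Set.range (algebraMap S (FractionRing S)) := by
        rw [hcap]
        simp only [Set.mem_iInter]
        intro p hpΔ
        have hp := hprime p hpΔ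
        have hp0 : (p.comap (algebraMap R S)).IsPrime := inferInstance
        have hne : p ≠ IsLocalRing.maximalIdeal S := fun h => hmax (h ▸ hpΔ)
        have hnm : ¬ (p.comap (algebraMap R S)).IsMaximal := by
          intro hm
          have hle : p.comap (algebraMap R S) ≤ q := by
            intro x hx
            by_contra hxq
            have hu : IsUnit (algebraMap R S x) :=
              IsLocalization.map_units S (⟨x, hxq⟩ : @Ideal.primeCompl R _ q hq)
            exact hp.ne_top (Ideal.eq_top_of_isUnit_mem _ hx hu)
          have heq := hm.eq_of_le hq.ne_top hle
          apply hne
          refine le_antisymm (IsLocalRing.le_maximalIdeal hp.ne_top) ?_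
          intro z hz
          obtain ⟨⟨t, s⟩, hts⟩ := IsLocalization.surj (@Ideal.primeCompl R _ q hq) z
          simp only at hts
          have hsu : IsUnit (algebraMap R S s) := IsLocalization.map_units S s
          have htq : t ∈ q := by
            by_contra htq
            have hu : IsUnit (algebraMap R S t) :=
              IsLocalization.map_units S (⟨t, htq⟩ : @Ideal.primeCompl R _ q hq)
            rw [← hts] at hu
            exact (IsLocalRing.mem_maximalIdeal z).1 hz (isUnit_of_mul_isUnit_left hu)
          rw [← heq] at htq
          have : algebraMap R S t ∈ p := htq
          rw [← hts] at this
          exact (hp.mem_or_mem this).resolve_right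
            fun h => hp.ne_top (Ideal.eq_top_of_isUnit_mem _ h hsu)
        obtain ⟨s, t, hs, hst⟩ := coeff_denom f hf (p.comap (algebraMap R S)) hnm j
        have hs0 : s ≠ 0 := fun h0 => hs (h0 ▸ Ideal.zero_mem _)
        rw [← hab, ← mul_div_assoc, div_eq_iff hbK, ← map_mul, ← map_mul] at hst
        have hst := IsFractionRing.injective R (FractionRing R) hst
        refine ⟨algebraMap R S t, algebraMap R S s, hs, ?_⟩
        have nz : ∀ x : R, x ≠ 0 → algebraMap S (FractionRing S) (algebraMap R S x) ≠ 0 := by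
          intro x hx h0
          exact hx (hinjS (hinjL (by rw [h0]; simp)))
        change _ = algebraMap S (FractionRing S) _ / algebraMap S (FractionRing S) _
        rw [div_eq_div_iff (nz b hb0) (nz s hs0), ← map_mul, ← map_mul, ← map_mul, ← map_mul,
          mul_comm a, hst]
      obtain ⟨r, hr⟩ := hmem
      obtain ⟨s, t, hs, hst⟩ := back a b r hb0 hr.symm
      refine ⟨s, t, hs, ?_⟩
      rw [← hab, ← mul_div_assoc, div_eq_iff hbK, ← map_mul, ← map_mul, hst]
    choose s t hs hst using hc
    refine ⟨∏ j ∈ f.support, s j, ?_, ?_⟩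
    · intro hm
      obtain ⟨j, _, hj⟩ := (hq.prod_mem_iff).1 hm
      exact hs j hj
    · have : C (algebraMap R (FractionRing R) (∏ j ∈ f.support, s j)) * f ∈
          Polynomial.lifts (algebraMap R (FractionRing R)) := by
        rw [Polynomial.lifts_iff_coeff_lifts]
        intro j
        rw [coeff_C_mul]
        by_cases hj : j ∈ f.support
        · rw [← Finset.mul_prod_erase _ _ hj, mul_comm (s j), map_mul, mul_assoc, hst, ← map_mul]
          exact ⟨_, rfl⟩
        · rw [notMem_support_iff.1 hj, mul_zero]
          exact ⟨0, by simp⟩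
      obtain ⟨g, hg⟩ := (Polynomial.mem_lifts _).1 this
      exact ⟨g, hg.symm⟩

/-- The embedding `R[X] → Int(R)`. -/
noncomputable def emb (R : Type*) [CommRing R] [IsDomain R] : R[X] →+* IntPoly R :=
  (Polynomial.mapRingHom (algebraMap R (FractionRing R))).codRestrict (IntPoly R) (by
    intro f
    rw [mem_intPoly]
    intro a
    exact ⟨f.eval a, by simp [eval_map, eval₂_at_apply]⟩)

lemma coe_emb {R : Type*} [CommRing R] [IsDomain R] (f : R[X]) :
    (emb R f : (FractionRing R)[X]) = f.map (algebraMap R (FractionRing R)) := rfl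

theorem main {R : Type*} [CommRing R] [IsDomain R] (hloc : IsLocallyEssential R) :
    ringKrullDim (IntPoly R) ≤ ringKrullDim (Polynomial R) := by
  refine iSup_le fun l => ?_
  letI : Algebra R (IntPoly R) := ((emb R).comp C).toAlgebra
  have halg : ∀ r, algebraMap R (IntPoly R) r = emb R (C r) := fun _ => rfl
  set q : Ideal R := l.last.asIdeal.comap (algebraMap R (IntPoly R)) with hqdef
  have hq : q.IsPrime := inferInstance
  have hlast : ∀ i, l i ≤ l.last := fun i => l.monotone (Fin.le_last i)
  rcases dichotomy q hq _ (hloc q hq) with hv | hint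
  · refine le_trans ?_ (ringKrullDim_succ_le_ringKrullDim_polynomial (R := R))
    have hinj : Function.Injective (algebraMap R (IntPoly R)) := by
      intro a b hab
      have h := congrArg (fun z : IntPoly R => (z : (FractionRing R)[X])) hab
      simp only [halg, coe_emb, Polynomial.map_C] at h
      exact IsFractionRing.injective R (FractionRing R) (C_injective h)
    have hdep : ∀ u v : IntPoly R, ∃ F : R[X][X], F ≠ 0 ∧
        (F.map (aeval u : R[X] →ₐ[R] IntPoly R).toRingHom).eval v = 0 := by
      intro u v
      obtain ⟨F, hF, h⟩ := dep_KX R (u : (FractionRing R)[X]) v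
      refine ⟨F, hF, Subtype.ext ?_⟩
      rw [ZeroMemClass.coe_zero, ← h]
      have hcomp : (IntPoly R).subtype.comp (aeval u : R[X] →ₐ[R] IntPoly R).toRingHom =
          (aeval (u : (FractionRing R)[X]) : R[X] →ₐ[R] (FractionRing R)[X]).toRingHom := by
        apply Polynomial.ringHom_ext
        · intro r
          simp [halg, coe_emb, Polynomial.algebraMap_apply]
        · simp
      rw [← hcomp, ← Polynomial.map_map]
      change (IntPoly R).subtype _ = eval ((IntPoly R).subtype v) _
      rw [Polynomial.eval_map_apply]
    refine chain_bound (PrimeSpectrum.comap (algebraMap R (IntPoly R))) ?_ l ?_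
    · intro P P' h
      exact Ideal.comap_mono h
    · intro a b c d hab hbc hcd e1 e2
      refine no_two hinj hdep q hq hv (l a) (l b) (l c) (l d) (l.strictMono hab)
        (l.monotone hbc) (l.strictMono hcd) (Ideal.comap_mono (hlast d)) ?_ ?_
      · exact congrArg PrimeSpectrum.asIdeal e1
      · exact congrArg PrimeSpectrum.asIdeal e2
  · have hm : StrictMono fun i => PrimeSpectrum.comap (emb R) (l i) := by
      intro i j hij
      have hlt : (l i).asIdeal < (l j).asIdeal := l.strictMono hij
      refine lt_of_le_not_ge (Ideal.comap_mono hlt.le) ?_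
      intro hge
      obtain ⟨f, hfj, hfi⟩ := SetLike.exists_of_lt hlt
      obtain ⟨s, hs, g, hg⟩ := hint f f.2
      have hg' : emb R (C s) * f = emb R g := by
        apply Subtype.ext
        change (emb R (C s) : (FractionRing R)[X]) * f = _
        rw [coe_emb, coe_emb, Polynomial.map_C, hg]
      have h1 : emb R g ∈ (l j).asIdeal := by
        rw [← hg']; exact Ideal.mul_mem_left _ _ hfj
      have h2 : emb R g ∈ (l i).asIdeal := hge h1
      rw [← hg'] at h2
      refine ((l i).2.mem_or_mem h2).elim (fun h => hs ?_) hfi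
      exact hlast i h
    exact Order.LTSeries.length_le_krullDim (LTSeries.mk l.length _ hm)

end IntPolyAux

/-- If `R` is a finite-dimensional locally essential integral domain,
written `R = ⋂_{p ∈ Δ} R_p` with each `R_p` a valuation domain, then
`dim(Int(R)) ≤ dim(R[X])`. -/
theorem dim_intPoly_le_dim_polynomial_of_locallyEssential
    (R : Type*) [CommRing R] [IsDomain R]
    (hfin : ringKrullDim R ≠ ⊤)
    (Δ : Set (Ideal R))
    (hΔprime : ∀ p ∈ Δ, p.IsPrime)
    (hΔval : ∀ p ∈ Δ, ∀ x : FractionRing R, x ∈ locSet R p ∨ x⁻¹ ∈ locSet R p)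
    (hΔcap : Set.range (algebraMap R (FractionRing R)) = ⋂ p ∈ Δ, locSet R p)
    (hloc : IsLocallyEssential R) :
    ringKrullDim (IntPoly R) ≤ ringKrullDim (Polynomial R) := by
  exact IntPolyAux.main hloc
end

section
/- Let R be a finite-dimensional locally essential integral domain, written R = ⋂_{p∈Δ} R_p with each R_p a valuation domain. Then dim(R[X]) ≤ dim(Int(R)). -/
namespace IntPolyDim

open Polynomial

/-- Elementary form of: `R_q` is a valuation domain. -/
def IsValAt {R : Type*} [CommRing R] (q : Ideal R) : Prop :=
  ∀ a b : R, ∃ s ∉ q, ∃ t, s * a = t * b ∨ s * b = t * a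

lemma fiber {R : Type*} [CommRing R] (P Q Q' : PrimeSpectrum R[X])
    (h1 : P < Q) (h2 : Q < Q')
    (e1 : PrimeSpectrum.comap C P = PrimeSpectrum.comap C Q)
    (e2 : PrimeSpectrum.comap C Q' = PrimeSpectrum.comap C Q) : False := by
  set p := PrimeSpectrum.comap C Q with hp
  have key : Order.krullDim (PrimeSpectrum.comap (C : R →+* R[X]) ⁻¹' {p}) ≤ 1 := by
    rw [show C = (algebraMap R (Polynomial R)) from rfl, Order.krullDim_eq_of_orderIso
      (PrimeSpectrum.preimageOrderIsoFiber R (Polynomial R) p), ← ringKrullDim,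
      ← ringKrullDim_eq_of_ringEquiv (polyEquivTensor R (p.asIdeal.ResidueField)).toRingEquiv]
    have := (Ring.krullDimLE_iff (n := 1) (R := (p.asIdeal.ResidueField)[X])).1 inferInstance
    exact_mod_cast this
  rw [Order.krullDim_le_one_iff] at key
  rcases key ⟨Q, hp.symm⟩ with h | h
  · have := h (b := ⟨P, e1⟩) (Subtype.mk_le_mk.2 h1.le)
    exact absurd (Subtype.mk_le_mk.1 this) h1.not_ge
  · have := h (b := ⟨Q', e2⟩) (Subtype.mk_le_mk.2 h2.le)
    exact absurd (Subtype.mk_le_mk.1 this) h2.not_ge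

lemma exists_min {R ι : Type*} [CommRing R] {q : Ideal R} (hq : q.IsPrime) (hv : IsValAt q)
    (a : ι → R) (T : Finset ι) (hT : T.Nonempty) :
    ∃ i ∈ T, ∃ s ∉ q, ∀ j ∈ T, ∃ b, s * a j = b * a i := by
  induction hT using Finset.Nonempty.cons_induction with
  | singleton k =>
    refine ⟨k, by simp, 1, fun h => hq.ne_top ((Ideal.eq_top_iff_one _).2 h), ?_⟩
    intro j hj
    rw [Finset.mem_singleton] at hj
    exact ⟨1, by rw [hj]⟩
  | cons k T hk hT ih =>
    obtain ⟨i, hi, s, hs, h⟩ := ih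
    obtain ⟨u, hu, t, ht | ht⟩ := hv (a i) (a k)
    · refine ⟨k, by simp, s * u, fun h' => (hq.mem_or_mem h').elim hs hu, ?_⟩
      intro j hj
      rcases Finset.mem_cons.1 hj with rfl | hj
      · exact ⟨_, rfl⟩
      · obtain ⟨b, hb⟩ := h j hj
        exact ⟨b * t, by linear_combination u * hb + b * ht⟩
    · refine ⟨i, by simp [hi], s * u, fun h' => (hq.mem_or_mem h').elim hs hu, ?_⟩
      intro j hj
      rcases Finset.mem_cons.1 hj with rfl | hj
      · exact ⟨s * t, by linear_combination s * ht⟩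
      · obtain ⟨b, hb⟩ := h j hj
        exact ⟨u * b, by linear_combination u * hb⟩

lemma content {R : Type*} [CommRing R] [IsDomain R] {q : Ideal R} (hq : q.IsPrime)
    (hv : IsValAt q) (f : R[X]) (hf : f ≠ 0) :
    ∃ s ∉ q, ∃ c, ∃ g : R[X], C s * f = C c * g ∧ ∃ i, g.coeff i ∉ q := by
  obtain ⟨i, hi, s, hs, h⟩ := exists_min hq hv f.coeff f.support (nonempty_support_iff.2 hf)
  choose! b hb using h
  refine ⟨s, hs, f.coeff i, ∑ j ∈ f.support, monomial j (b j), ?_, i, ?_⟩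
  · ext n
    simp only [coeff_C_mul, finsetSum_coeff, coeff_monomial, Finset.sum_ite_eq']
    split_ifs with h
    · rw [hb n h, mul_comm]
    · rw [notMem_support_iff.1 h]; simp
  · simp only [finsetSum_coeff, coeff_monomial, Finset.sum_ite_eq', hi, if_true]
    have := mul_right_cancel₀ (mem_support_iff.1 hi) (hb i hi)
    rwa [← this]

/-- The strictly increasing rank on primes of `R[X]`. -/
noncomputable def rk {R : Type*} [CommRing R] (P : PrimeSpectrum R[X]) : ℕ∞ := by
  classical
  exact Order.height (PrimeSpectrum.comap C P) +
    if P.asIdeal ≤ (P.asIdeal.comap C).map C then 0 else 1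

lemma rk_lt {R : Type*} [CommRing R] [IsDomain R] {q : Ideal R} (hq : q.IsPrime)
    (hv : IsValAt q) (hfin : ringKrullDim R ≠ ⊤) (P Q : PrimeSpectrum R[X]) (h : P < Q)
    (hQ : Q.asIdeal.comap C ≤ q) : rk P < rk Q := by
  have hle : PrimeSpectrum.comap C P ≤ PrimeSpectrum.comap C Q := Ideal.comap_mono h.le
  have hft : ∀ p : PrimeSpectrum R, Order.height p < ⊤ := fun p =>
    WithBot.coe_lt_coe.mp (lt_of_le_of_lt (Order.height_le_krullDim p) hfin.lt_top)
  have hPp : P.asIdeal.IsPrime := P.isPrime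
  have hPq : P.asIdeal.comap C ≤ q := le_trans (Ideal.comap_mono h.le) hQ
  have flag : ¬ P.asIdeal ≤ (P.asIdeal.comap C).map C →
      ¬ Q.asIdeal ≤ (Q.asIdeal.comap C).map C := by
    intro h1 h2
    obtain ⟨f, hfP, hf⟩ := SetLike.not_le_iff_exists.1 h1
    have hf0 : f ≠ 0 := by rintro rfl; exact hf (zero_mem _)
    obtain ⟨s, hs, c, g, e, i, hi⟩ := content hq hv f hf0
    have hcg : C c * g ∈ P.asIdeal := e ▸ Ideal.mul_mem_left _ _ hfP
    rcases hPp.mem_or_mem hcg with hc | hg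
    · apply hf
      rw [Ideal.mem_map_C_iff]
      intro n
      have e2 : s * f.coeff n = c * g.coeff n := by
        have := congrArg (fun r => coeff r n) e
        simpa using this
      have : s * f.coeff n ∈ P.asIdeal.comap C := by
        rw [e2]; exact Ideal.mul_mem_right _ _ hc
      have hpr : (P.asIdeal.comap C).IsPrime := Ideal.comap_isPrime _ _
      exact (hpr.mem_or_mem this).resolve_left fun h => hs (hPq h)
    · have := h2 (h.le hg)
      rw [Ideal.mem_map_C_iff] at this
      exact hi (hQ (this i))
  unfold rk
  rcases hle.lt_or_eq with hlt | heq
  · have := Order.height_strictMono hlt (hft _)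
    split_ifs with h1 h2 h2
    · simpa using this
    · simpa using this.trans_le le_self_add
    · exact absurd h2 (flag h1)
    · exact (ENat.add_lt_add_iff_right (by simp)).2 this
  · have hcm : P.asIdeal.comap C = Q.asIdeal.comap C := congrArg PrimeSpectrum.asIdeal heq
    rw [heq]
    split_ifs with h1 h2 h2
    · refine absurd (h2.trans ?_) h.not_ge
      rw [← hcm]
      exact Ideal.map_comap_le
    · exact (ENat.add_lt_add_iff_left (hft _).ne).2 (by simp)
    · exact absurd h2 (flag h1)
    · exfalso
      have hpr : (P.asIdeal.comap C).IsPrime := Ideal.comap_isPrime _ _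
      have hpr2 : ((P.asIdeal.comap C).map C).IsPrime := Ideal.isPrime_map_C_of_isPrime
      refine fiber ⟨_, hpr2⟩ P Q (lt_of_le_not_ge Ideal.map_comap_le h1) h ?_ heq.symm
      ext x
      simp only [PrimeSpectrum.comap_asIdeal, Ideal.mem_comap, Ideal.mem_map_C_iff]
      constructor
      · intro hx; simpa using hx 0
      · intro hx n
        rw [coeff_C]; split_ifs
        · exact hx
        · simp

lemma length_le {R : Type*} [CommRing R] [IsDomain R] {q : Ideal R} (hq : q.IsPrime)
    (hv : IsValAt q) (hfin : ringKrullDim R ≠ ⊤) (l : LTSeries (PrimeSpectrum R[X]))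
    (hl : l.last.asIdeal.comap C ≤ q) : (l.length : WithBot ℕ∞) ≤ ringKrullDim R + 1 := by
  have key : ∀ k : ℕ, ∀ hk : k < l.length + 1, (k : ℕ∞) ≤ rk (l ⟨k, hk⟩) := by
    intro k
    induction k with
    | zero => intro _; simp
    | succ k ih =>
      intro hk
      have h1 := ih (by omega)
      have h2 : l ⟨k, by omega⟩ < l ⟨k + 1, hk⟩ := l.strictMono (Fin.mk_lt_mk.2 (by omega))
      have h3 := rk_lt hq hv hfin _ _ h2
        (le_trans (Ideal.comap_mono (l.monotone (Fin.le_last _))) hl)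
      push_cast
      exact Order.add_one_le_of_lt (h1.trans_lt h3)
  have h := key l.length (by omega)
  have h2 : rk (l ⟨l.length, by omega⟩) ≤
      Order.height (PrimeSpectrum.comap C (l ⟨l.length, by omega⟩)) + 1 := by
    unfold rk
    split_ifs <;> simp
  have h3 := WithBot.coe_le_coe.2 (h.trans h2)
  refine le_trans (b := ((Order.height (PrimeSpectrum.comap C (l ⟨l.length, by omega⟩)) + 1 : ℕ∞) :
    WithBot ℕ∞)) h3 ?_
  push_cast
  exact add_le_add_left (Order.height_le_krullDim _) 1

lemma mem_intPoly {R : Type*} [CommRing R] [IsDomain R] (f : (FractionRing R)[X]) :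
    f ∈ IntPoly R ↔ ∀ a : R, ∃ b : R,
      algebraMap R (FractionRing R) b = f.eval (algebraMap R (FractionRing R) a) := by
  simp [IntPoly, Subring.mem_iInf]

/-- The inclusion `R[X] → Int(R)`. -/
noncomputable def inc (R : Type*) [CommRing R] [IsDomain R] : R[X] →+* IntPoly R :=
  (mapRingHom (algebraMap R (FractionRing R))).codRestrict (IntPoly R) (fun f => by
    rw [mem_intPoly]
    intro a
    exact ⟨f.eval a, by simp [eval_map_algebraMap, aeval_algebraMap_apply]⟩)

lemma inc_coe {R : Type*} [CommRing R] [IsDomain R] (f : R[X]) :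
    (inc R f : (FractionRing R)[X]) = f.map (algebraMap R (FractionRing R)) := rfl

lemma inc_inj {R : Type*} [CommRing R] [IsDomain R] : Function.Injective (inc R) := by
  intro f g h
  have := congrArg Subtype.val h
  rw [inc_coe, inc_coe] at this
  exact map_injective _ (IsFractionRing.injective R (FractionRing R)) this

lemma succ_le {R : Type*} [CommRing R] [IsDomain R] :
    ringKrullDim R + 1 ≤ ringKrullDim (IntPoly R) := by
  let e : R ≃+* (algebraMap R (FractionRing R)).range :=
    RingEquiv.ofBijective (algebraMap R (FractionRing R)).rangeRestrict
      ⟨fun a b h => IsFractionRing.injective R (FractionRing R) (congrArg Subtype.val h),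
        (algebraMap R (FractionRing R)).rangeRestrict_surjective⟩
  let ev : IntPoly R →+* (algebraMap R (FractionRing R)).range :=
    ((evalRingHom (0 : FractionRing R)).comp (IntPoly R).subtype).codRestrict _ (fun f => by
      obtain ⟨b, hb⟩ := (mem_intPoly _).1 f.2 0
      exact ⟨b, by rw [hb]; simp⟩)
  have hev : Function.Surjective ev := by
    rintro ⟨_, b, rfl⟩
    refine ⟨inc R (C b), Subtype.ext ?_⟩
    change eval 0 (inc R (C b) : (FractionRing R)[X]) = _
    rw [inc_coe]; simp
  rw [ringKrullDim_eq_of_ringEquiv e]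
  refine ringKrullDim_succ_le_of_surjective ev hev (r := inc R X) ?_ ?_
  · rw [mem_nonZeroDivisors_iff_ne_zero]
    intro h
    exact X_ne_zero (inc_inj (h.trans (map_zero _).symm))
  · apply Subtype.ext
    change eval 0 (inc R X : (FractionRing R)[X]) = _
    rw [inc_coe]; simp


/-- The extension of a prime of `R[X]` to `Int(R)` when `Int(R) ⊆ R_q[X]`. -/
noncomputable def extI {R : Type*} [CommRing R] [IsDomain R] {q : Ideal R} (hq : q.IsPrime)
    (hB : ∀ f : IntPoly R, ∃ s ∉ q, ∃ g, inc R (C s) * f = inc R g)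
    (P : Ideal R[X]) : Ideal (IntPoly R) where
  carrier := {f | ∃ s ∉ q, ∃ g ∈ P, inc R (C s) * f = inc R g}
  zero_mem' := ⟨1, fun h => hq.ne_top ((Ideal.eq_top_iff_one _).2 h), 0, zero_mem _, by simp⟩
  add_mem' := by
    rintro a b ⟨s, hs, g, hg, e⟩ ⟨t, ht, g', hg', e'⟩
    refine ⟨s * t, fun h' => (hq.mem_or_mem h').elim hs ht, C t * g + C s * g',
      add_mem (Ideal.mul_mem_left _ _ hg) (Ideal.mul_mem_left _ _ hg'), ?_⟩
    simp only [map_add, map_mul]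
    linear_combination inc R (C t) * e + inc R (C s) * e'
  smul_mem' := by
    rintro c a ⟨s, hs, g, hg, e⟩
    obtain ⟨t, ht, h, e'⟩ := hB c
    refine ⟨s * t, fun h' => (hq.mem_or_mem h').elim hs ht, h * g,
      Ideal.mul_mem_left _ _ hg, ?_⟩
    simp only [map_mul, smul_eq_mul]
    linear_combination inc R (C t) * c * e + inc R g * e'

section
variable {R : Type*} [CommRing R] [IsDomain R] {q : Ideal R} (hq : q.IsPrime)
    (hB : ∀ f : IntPoly R, ∃ s ∉ q, ∃ g, inc R (C s) * f = inc R g)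

lemma mem_extI {P : Ideal R[X]} {f : IntPoly R} :
    f ∈ extI hq hB P ↔ ∃ s ∉ q, ∃ g ∈ P, inc R (C s) * f = inc R g := Iff.rfl

lemma inc_mem_extI {P : Ideal R[X]} (hP : P.IsPrime) (hPq : P.comap C ≤ q) (f : R[X]) :
    inc R f ∈ extI hq hB P ↔ f ∈ P := by
  rw [mem_extI]
  constructor
  · rintro ⟨s, hs, g, hg, e⟩
    rw [← map_mul] at e
    rw [← inc_inj e] at hg
    exact (hP.mem_or_mem hg).resolve_left fun h => hs (hPq h)
  · intro hf
    exact ⟨1, fun h => hq.ne_top ((Ideal.eq_top_iff_one _).2 h), f, hf, by simp⟩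

lemma extI_prime {P : Ideal R[X]} (hP : P.IsPrime) (hPq : P.comap C ≤ q) :
    (extI hq hB P).IsPrime := by
  refine ⟨?_, ?_⟩
  · rw [Ne, Ideal.eq_top_iff_one, ← map_one (inc R), inc_mem_extI hq hB hP hPq,
      ← Ideal.eq_top_iff_one]
    exact hP.ne_top
  · rintro f f' ⟨s, hs, g, hg, e⟩
    obtain ⟨t, ht, h, et⟩ := hB f
    obtain ⟨u, hu, h', eu⟩ := hB f'
    have key : C s * (h * h') = C t * C u * g := by
      apply inc_inj
      simp only [map_mul]
      rw [← et, ← eu, ← e]; ring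
    have hm : C s * (h * h') ∈ P := key ▸ Ideal.mul_mem_left _ _ hg
    have := (hP.mem_or_mem hm).resolve_left fun h => hs (hPq h)
    rcases hP.mem_or_mem this with hh | hh
    · exact Or.inl ⟨t, ht, h, hh, et⟩
    · exact Or.inr ⟨u, hu, h', hh, eu⟩

lemma length_le_of_subset {R : Type*} [CommRing R] [IsDomain R] {q : Ideal R} (hq : q.IsPrime)
    (hB : ∀ f : IntPoly R, ∃ s ∉ q, ∃ g, inc R (C s) * f = inc R g)
    (l : LTSeries (PrimeSpectrum R[X]))
    (hl : l.last.asIdeal.comap C ≤ q) :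
    (l.length : WithBot ℕ∞) ≤ ringKrullDim (IntPoly R) := by
  have hle : ∀ i, (l i).asIdeal.comap C ≤ q := fun i =>
    le_trans (Ideal.comap_mono (l.monotone (Fin.le_last _))) hl
  let l' : LTSeries (PrimeSpectrum (IntPoly R)) :=
    LTSeries.mk l.length (fun i => ⟨extI hq hB (l i).asIdeal,
      extI_prime hq hB (l i).isPrime (hle i)⟩) (by
      intro i j hij
      have hlt : l i < l j := l.strictMono hij
      refine lt_of_le_not_ge ?_ ?_
      · rintro f ⟨s, hs, g, hg, e⟩
        exact ⟨s, hs, g, hlt.le hg, e⟩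
      · intro hh
        refine hlt.not_ge fun f hf => ?_
        have := hh ((inc_mem_extI hq hB (l j).isPrime (hle j) f).2 hf)
        exact (inc_mem_extI hq hB (l i).isPrime (hle i) f).1 this)
  exact Order.LTSeries.length_le_krullDim l'

end

lemma cramer_aux {R K : Type*} [CommRing R] [CommRing K] {N : ℕ} (φ : R →+* K)
    (M : Matrix (Fin N) (Fin N) R) (c : Fin N → K) (w : Fin N → R)
    (hw : (φ.mapMatrix M).mulVec c = fun i => φ (w i)) (n : Fin N) :
    φ M.det * c n = φ (∑ i, M.adjugate n i * w i) := by
  have h2 := congrArg (fun w => (φ.mapMatrix M.adjugate).mulVec w) hw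
  simp only [Matrix.mulVec_mulVec] at h2
  rw [← map_mul, Matrix.adjugate_mul] at h2
  have h3 := congrFun h2 n
  have hL : (φ.mapMatrix (M.det • (1 : Matrix (Fin N) (Fin N) R))).mulVec c n =
      φ M.det * c n := by
    simp [Matrix.mulVec, dotProduct, Matrix.one_apply, apply_ite φ]
  rw [map_sum]
  rw [hL] at h3
  rw [h3]
  simp [Matrix.mulVec, dotProduct]

lemma coeff_of_infinite {R : Type*} [CommRing R] [IsDomain R] {p : Ideal R} (hp : p.IsPrime)
    [Infinite (R ⧸ p)] (f : (FractionRing R)[X]) (hf : f ∈ IntPoly R) (n : ℕ) :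
    ∃ s ∉ p, ∃ t, algebraMap R (FractionRing R) s * f.coeff n = algebraMap R _ t := by
  rw [mem_intPoly] at hf
  choose F hF using hf
  set K := FractionRing R
  set N := max f.natDegree n + 1 with hN
  let v : Fin N → R := fun i =>
    Function.surjInv Ideal.Quotient.mk_surjective (Infinite.natEmbedding (R ⧸ p) i)
  have hv : ∀ i, Ideal.Quotient.mk p (v i) = Infinite.natEmbedding (R ⧸ p) i := fun i =>
    Function.surjInv_eq _ _
  let M := Matrix.vandermonde v
  let φ := algebraMap R K
  have hdet : M.det ∉ p := by
    rw [← Ideal.Quotient.eq_zero_iff_mem, RingHom.map_det]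
    have : (Ideal.Quotient.mk p).mapMatrix M =
        Matrix.vandermonde (fun i => Ideal.Quotient.mk p (v i)) := by
      ext i j; simp [M, Matrix.vandermonde_apply]
    rw [this]
    refine Matrix.det_vandermonde_ne_zero_iff.2 ?_
    intro i j hij
    simp only [hv] at hij
    exact Fin.ext ((Infinite.natEmbedding (R ⧸ p)).injective hij)
  let c : Fin N → K := fun j => f.coeff j
  have hw : (φ.mapMatrix M).mulVec c = fun i => φ (F (v i)) := by
    ext i
    rw [hF, eval_eq_sum_range' (n := N) (by omega), ← Fin.sum_univ_eq_sum_range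
      (fun j => f.coeff j * (algebraMap R K (v i)) ^ j)]
    simp [Matrix.mulVec, dotProduct, M, Matrix.vandermonde_apply, c, φ, mul_comm]
  exact ⟨M.det, hdet, ∑ i, M.adjugate ⟨n, by omega⟩ i * F (v i),
    cramer_aux φ M c (fun i => F (v i)) hw ⟨n, by omega⟩⟩

section
variable {R : Type*} [CommRing R] [IsDomain R] {q : Ideal R} [hq : q.IsPrime]

lemma lift_rel {L : Type*} [CommRing L] [Algebra R L]
    [IsLocalization q.primeCompl L] (P : Ideal L) (hP : P.IsPrime)
    (σ α : L) (hσ : σ ∉ P) (a b : R)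
    (h : algebraMap R L a * σ = α * algebraMap R L b) :
    ∃ s ∉ P.comap (algebraMap R L), ∃ t, s * a = t * b := by
  have hunit : ∀ u : q.primeCompl, algebraMap R L u ∉ P := fun u hu =>
    hP.ne_top (Ideal.eq_top_of_isUnit_mem _ hu (IsLocalization.map_units _ u))
  obtain ⟨⟨s, u⟩, hs⟩ := IsLocalization.surj q.primeCompl σ
  obtain ⟨⟨t, v⟩, ht⟩ := IsLocalization.surj q.primeCompl α
  refine ⟨s * v, ?_, t * u, ?_⟩
  · rw [Ideal.mem_comap, map_mul, ← hs]
    intro h'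
    rcases hP.mem_or_mem h' with h' | h'
    · exact (hP.mem_or_mem h').elim hσ (hunit u)
    · exact hunit v h'
  · apply IsLocalization.injective L q.primeCompl_le_nonZeroDivisors
    simp only [map_mul]
    rw [← hs, ← ht]
    linear_combination algebraMap R L u *
      algebraMap R L v * h

lemma transfer (L : Type*) [CommRing L] [IsDomain L] [Algebra R L]
    [IsLocalization q.primeCompl L] (h : IsEssential L) :
    ∃ Δ : Set (Ideal R), (∀ p ∈ Δ, p.IsPrime ∧ p ≤ q ∧ IsValAt p) ∧
      ∀ a b : R, b ≠ 0 → (∀ p ∈ Δ, ∃ s ∉ p, ∃ t, s * a = t * b) →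
        ∃ s ∉ q, ∃ t, s * a = t * b := by
  obtain ⟨Δ, h1, h2, h3⟩ := h
  have hinj : Function.Injective (algebraMap R L) :=
    IsLocalization.injective L q.primeCompl_le_nonZeroDivisors
  have hinj2 : Function.Injective (algebraMap L (FractionRing L)) :=
    IsFractionRing.injective L (FractionRing L)
  have hne : ∀ b : R, b ≠ 0 → algebraMap L (FractionRing L) (algebraMap R L b) ≠ 0 := by
    intro b hb
    rw [Ne, map_eq_zero_iff _ hinj2, map_eq_zero_iff _ hinj]
    exact hb
  have hne' : ∀ P : Ideal L, ∀ s : L, s ∉ P → algebraMap L (FractionRing L) s ≠ 0 := by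
    intro P s hs
    rw [Ne, map_eq_zero_iff _ hinj2]
    rintro rfl
    exact hs (zero_mem _)
  have hrel : ∀ P ∈ Δ, ∀ a b : R, b ≠ 0 →
      algebraMap L (FractionRing L) (algebraMap R L a) /
        algebraMap L (FractionRing L) (algebraMap R L b) ∈ locSet L P →
      ∃ s ∉ P.comap (algebraMap R L), ∃ t, s * a = t * b := by
    rintro P hP a b hb ⟨α, σ, hσ, e⟩
    refine lift_rel (q := q) P (h1 P hP) σ α hσ a b ?_
    apply hinj2
    rw [div_eq_div_iff (hne b hb) (hne' P σ hσ)] at e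
    simpa only [map_mul] using e
  refine ⟨(fun P => P.comap (algebraMap R L)) '' Δ, ?_, ?_⟩
  · rintro _ ⟨P, hP, rfl⟩
    have hPp := h1 P hP
    refine ⟨Ideal.comap_isPrime _ _, ?_, ?_⟩
    · intro x hx
      by_contra hxq
      exact hPp.ne_top (Ideal.eq_top_of_isUnit_mem _ hx
        (IsLocalization.map_units L (⟨x, hxq⟩ : q.primeCompl)))
    · intro a b
      have h1' : (1 : R) ∉ P.comap (algebraMap R L) := by
        rw [Ideal.mem_comap, map_one]
        exact fun h => hPp.ne_top ((Ideal.eq_top_iff_one _).2 h)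
      by_cases hb : b = 0
      · exact ⟨1, h1', 0, Or.inr (by simp [hb])⟩
      by_cases ha : a = 0
      · exact ⟨1, h1', 0, Or.inl (by simp [ha])⟩
      rcases h2 P hP (algebraMap L (FractionRing L) (algebraMap R L a) /
        algebraMap L (FractionRing L) (algebraMap R L b)) with h | h
      · obtain ⟨s, hs, t, e⟩ := hrel P hP a b hb h
        exact ⟨s, hs, t, Or.inl e⟩
      · rw [inv_div] at h
        obtain ⟨s, hs, t, e⟩ := hrel P hP b a ha h
        exact ⟨s, hs, t, Or.inr e⟩
  · intro a b hb hab
    have hx : algebraMap L (FractionRing L) (algebraMap R L a) /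
        algebraMap L (FractionRing L) (algebraMap R L b) ∈ ⋂ p ∈ Δ, locSet L p := by
      simp only [Set.mem_iInter]
      intro P hP
      obtain ⟨s, hs, t, e⟩ := hab _ ⟨P, hP, rfl⟩
      refine ⟨algebraMap R L t, algebraMap R L s, hs, ?_⟩
      rw [div_eq_div_iff (hne b hb) (hne' P _ hs)]
      simp only [← map_mul]
      rw [← e, mul_comm]
    rw [← h3] at hx
    obtain ⟨y, hy⟩ := hx
    rw [eq_div_iff (hne b hb), ← map_mul] at hy
    have hy := hinj2 hy
    obtain ⟨⟨t, s⟩, hs⟩ := IsLocalization.surj q.primeCompl y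
    refine ⟨s, s.2, t, hinj ?_⟩
    simp only [map_mul]
    rw [← hy, ← hs]; ring

lemma subset_of_coeff
    (hc : ∀ f ∈ IntPoly R, ∀ n, ∃ s ∉ q, ∃ t,
      algebraMap R (FractionRing R) s * f.coeff n = algebraMap R _ t) (f : IntPoly R) :
    ∃ s ∉ q, ∃ g, inc R (C s) * f = inc R g := by
  classical
  have h := hc f.1 f.2
  choose s hs t ht using h
  refine ⟨∏ n ∈ f.1.support, s n, ?_,
    ∑ n ∈ f.1.support, monomial n (t n * ∏ m ∈ f.1.support.erase n, s m), Subtype.ext ?_⟩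
  · intro h
    obtain ⟨n, -, hn⟩ := (Ideal.IsPrime.prod_mem_iff).1 h
    exact hs n hn
  · change (inc R (C _) : (FractionRing R)[X]) * f.1 = _
    rw [inc_coe, inc_coe]
    ext n
    simp only [map_C, coeff_C_mul, coeff_map, finsetSum_coeff, coeff_monomial,
      Finset.sum_ite_eq']
    split_ifs with h
    · rw [map_mul, ← ht, ← Finset.mul_prod_erase _ _ h, map_mul]; ring
    · rw [notMem_support_iff.1 h]; simp

lemma main_aux (hfin : ringKrullDim R ≠ ⊤) (h : IsEssential (Localization q.primeCompl))
    (l : LTSeries (PrimeSpectrum R[X])) (hl : l.last.asIdeal.comap C ≤ q) :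
    (l.length : WithBot ℕ∞) ≤ ringKrullDim (IntPoly R) := by
  obtain ⟨Δ, h1, h2⟩ := transfer (q := q) (Localization q.primeCompl) h
  by_cases hqΔ : q ∈ Δ
  · exact (length_le hq (h1 q hqΔ).2.2 hfin l hl).trans succ_le
  refine length_le_of_subset hq (subset_of_coeff fun f hf n => ?_) l hl
  obtain ⟨a, b, hb, e⟩ := IsFractionRing.div_surjective (A := R) (f.coeff n)
  have hinj := IsFractionRing.injective R (FractionRing R)
  have hb0 : b ≠ 0 := nonZeroDivisors.ne_zero hb
  have hb' : algebraMap R (FractionRing R) b ≠ 0 := by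
    rwa [Ne, map_eq_zero_iff _ hinj]
  have hiff : ∀ s t : R, s * a = t * b ↔
      algebraMap R (FractionRing R) s * f.coeff n = algebraMap R _ t := by
    intro s t
    rw [← e, mul_div_assoc', div_eq_iff hb', ← map_mul, ← map_mul, hinj.eq_iff]
  simp only [← hiff]
  refine h2 a b hb0 fun p hp => ?_
  obtain ⟨hpp, hpq, -⟩ := h1 p hp
  have hinf : Infinite (R ⧸ p) := by
    by_contra hnot
    rw [not_infinite_iff_finite] at hnot
    have hmax := Ideal.Quotient.maximal_of_isField p (Finite.isField_of_domain (R ⧸ p))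
    exact hqΔ (hmax.eq_of_le hq.ne_top hpq ▸ hp)
  simp only [hiff]
  exact coeff_of_infinite hpp f hf n

end

end IntPolyDim

/-- If `R` is a finite-dimensional locally essential integral domain,
written `R = ⋂_{p ∈ Δ} R_p` with each `R_p` a valuation domain, then
`dim(R[X]) ≤ dim(Int(R))`. -/
theorem dim_polynomial_le_dim_intPoly_of_locallyEssential
    (R : Type*) [CommRing R] [IsDomain R]
    (hfin : ringKrullDim R ≠ ⊤)
    (Δ : Set (Ideal R))
    (hΔprime : ∀ p ∈ Δ, p.IsPrime)
    (hΔval : ∀ p ∈ Δ, ∀ x : FractionRing R, x ∈ locSet R p ∨ x⁻¹ ∈ locSet R p)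
    (hΔcap : Set.range (algebraMap R (FractionRing R)) = ⋂ p ∈ Δ, locSet R p)
    (hloc : IsLocallyEssential R) :
    ringKrullDim (Polynomial R) ≤ ringKrullDim (IntPoly R) := by
  refine iSup_le fun l => ?_
  have hq : (l.last.asIdeal.comap Polynomial.C).IsPrime := Ideal.comap_isPrime _ _
  exact IntPolyDim.main_aux hfin (hloc _ hq) l le_rfl
end

section
/- Let R be a Prüfer v-multiplication domain (PVMD) of finite Krull dimension. Then dim(Int(R)) = dim(R[X]). -/
noncomputable section

/-- The `t`-closure of an integral ideal `I` of `R`: the set of elements of `R` lying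
in some `J_v = (J⁻¹)⁻¹` where `J` ranges over the nonzero finitely generated fractional
ideals contained in `I`. -/
def tClosure (R : Type*) [CommRing R] [IsDomain R] (I : Ideal R) : Set R :=
  {x | ∃ J : FractionalIdeal (nonZeroDivisors R) (FractionRing R),
      J ≠ 0 ∧ (J : Submodule R (FractionRing R)).FG ∧ J ≤ (I : FractionalIdeal (nonZeroDivisors R) (FractionRing R)) ∧
      algebraMap R (FractionRing R) x ∈ (J⁻¹)⁻¹}

/-- An integral ideal `I` is a `t`-ideal if `I_t = I`. -/
def IsTIdeal (R : Type*) [CommRing R] [IsDomain R] (I : Ideal R) : Prop :=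
  tClosure R I = (I : Set R)

/-- `R` is a Prüfer `v`-multiplication domain (PVMD) if `R_p` is a valuation domain for
every prime ideal `p` that is maximal among proper integral `t`-ideals of `R`. -/
def IsPVMD (R : Type*) [CommRing R] [IsDomain R] : Prop :=
  ∀ (p : Ideal R) (hp : p.IsPrime),
    (IsTIdeal R p ∧ p ≠ ⊤ ∧
      ∀ J : Ideal R, IsTIdeal R J → J ≠ ⊤ → p ≤ J → p = J) →
    haveI := hp
    ValuationRing (Localization.AtPrime p)

end

section Upper
open Polynomial

/-- `R_p` is a valuation ring, elementwise. -/
def VP {R : Type*} [CommRing R] (p : Ideal R) : Prop :=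
  ∀ a b : R, ∃ s, s ∉ p ∧ (a ∣ s * b ∨ b ∣ s * a)

theorem VP.mono {R : Type*} [CommRing R] {p q : Ideal R} (hpq : p ≤ q) (h : VP q) : VP p := by
  intro a b
  obtain ⟨s, hs, h⟩ := h a b
  exact ⟨s, fun h' => hs (hpq h'), h⟩

theorem VP.exists_min {R ι : Type*} [CommRing R] {q : Ideal R} [hq : q.IsPrime] (h : VP q)
    (c : ι → R) (S : Finset ι) (hS : S.Nonempty) :
    ∃ i ∈ S, ∃ s, s ∉ q ∧ ∀ j ∈ S, c i ∣ s * c j := by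
  classical
  induction hS using Finset.Nonempty.cons_induction with
  | singleton a =>
    refine ⟨a, by simp, 1, fun h1 => hq.ne_top ((Ideal.eq_top_iff_one _).2 h1), ?_⟩
    simp
  | cons a T ha hT ih =>
    obtain ⟨i, hi, s, hs, hd⟩ := ih
    obtain ⟨t, ht, h1 | h1⟩ := h (c i) (c a)
    · refine ⟨i, by simp [hi], t * s, fun h' => (hq.mem_or_mem h').elim ht hs, ?_⟩
      intro j hj
      rcases Finset.mem_cons.1 hj with rfl | hj
      · rw [mul_right_comm]; exact h1.mul_right _
      · rw [mul_assoc]; exact (hd j hj).mul_left _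
    · refine ⟨a, by simp, t * s, fun h' => (hq.mem_or_mem h').elim ht hs, ?_⟩
      intro j hj
      rcases Finset.mem_cons.1 hj with rfl | hj
      · exact dvd_mul_left _ _
      · rw [mul_assoc]; exact h1.trans (mul_dvd_mul_left _ (hd j hj))

theorem VP.exists_div {R : Type*} [CommRing R] [IsDomain R] {q : Ideal R} [hq : q.IsPrime]
    (h : VP q) (F : R[X]) (hF : F ≠ 0) :
    ∃ (c s : R) (g : R[X]), c ≠ 0 ∧ s ∉ q ∧ C s * F = C c * g ∧ ∃ i, g.coeff i ∉ q := by
  obtain ⟨i, hi, s, hs, hd⟩ := h.exists_min F.coeff F.support (by simpa using hF)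
  have hi0 : F.coeff i ≠ 0 := by simpa using hi
  have : ∀ j, F.coeff i ∣ (C s * F).coeff j := by
    intro j
    rw [coeff_C_mul]
    by_cases hj : j ∈ F.support
    · exact hd j hj
    · rw [notMem_support_iff.1 hj]; simp
  obtain ⟨g, hg⟩ := (C_dvd_iff_dvd_coeff _ _).2 this
  refine ⟨F.coeff i, s, g, hi0, hs, hg, i, ?_⟩
  have h2 := congrArg (fun f => f.coeff i) hg
  simp only [coeff_C_mul] at h2
  rw [mul_comm] at h2
  rwa [← mul_left_cancel₀ hi0 h2]

theorem VP.polynomial {R : Type*} [CommRing R] [IsDomain R] {q : Ideal R} [hq : q.IsPrime]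
    (h : VP q) : VP (q.map (C : R →+* R[X])) := by
  have hP : (q.map (C : R →+* R[X])).IsPrime := Ideal.isPrime_map_C_of_isPrime
  have h1 : (1 : R[X]) ∉ q.map (C : R →+* R[X]) :=
    fun h1 => hP.ne_top ((Ideal.eq_top_iff_one _).2 h1)
  have hC : ∀ s, s ∉ q → (C s : R[X]) ∉ q.map (C : R →+* R[X]) := by
    intro s hs h'
    rw [Ideal.mem_map_C_iff] at h'
    exact hs (by simpa using h' 0)
  have hN : ∀ g : R[X], (∃ i, g.coeff i ∉ q) → g ∉ q.map (C : R →+* R[X]) := by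
    rintro g ⟨i, hi⟩ h'
    rw [Ideal.mem_map_C_iff] at h'
    exact hi (h' i)
  intro F G
  by_cases hF : F = 0
  · exact ⟨1, h1, Or.inr (by simp [hF])⟩
  by_cases hG : G = 0
  · exact ⟨1, h1, Or.inl (by simp [hG])⟩
  obtain ⟨c, s, F1, hc, hs, e1, n1⟩ := h.exists_div F hF
  obtain ⟨e, t, G1, he, ht, e2, n2⟩ := h.exists_div G hG
  obtain ⟨u, hu, ⟨k, hk⟩ | ⟨k, hk⟩⟩ := h c e
  · refine ⟨C t * C u * F1, fun h' => (hP.mem_or_mem h').elim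
      (fun h' => (hP.mem_or_mem h').elim (hC _ ht) (hC _ hu)) (hN _ n1), Or.inl ⟨C k * C s * G1, ?_⟩⟩
    have hk' : (C u * C e : R[X]) = C c * C k := by rw [← C_mul, ← C_mul, hk]
    linear_combination C u * F1 * e2 + G1 * F1 * hk' - C k * G1 * e1
  · refine ⟨C s * C u * G1, fun h' => (hP.mem_or_mem h').elim
      (fun h' => (hP.mem_or_mem h').elim (hC _ hs) (hC _ hu)) (hN _ n2), Or.inr ⟨C k * C t * F1, ?_⟩⟩
    have hk' : (C u * C c : R[X]) = C e * C k := by rw [← C_mul, ← C_mul, hk]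
    linear_combination C u * G1 * e1 + G1 * F1 * hk' - C k * F1 * e2

/-- The element `y` is transcendental modulo `P` over the base. -/
def TrAt {R B : Type*} [CommRing R] [CommRing B] (φ : R →+* B) (P : Ideal B) (y : B) : Prop :=
  ∀ F : R[X], F.eval₂ φ y ∈ P → ∀ n, φ (F.coeff n) ∈ P

theorem TrAt.anti {R B : Type*} [CommRing R] [IsDomain R] [CommRing B] {φ : R →+* B}
    {P P' : Ideal B} [hP : P.IsPrime] {q : Ideal R} [hq : q.IsPrime] (hV : VP q)
    (hPP : P ≤ P') (hq' : P'.comap φ ≤ q) {y : B} (h : TrAt φ P' y) : TrAt φ P y := by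
  intro F hF n
  by_contra hn
  have hF0 : F ≠ 0 := by rintro rfl; simp at hn
  obtain ⟨c, s, g, hc, hs, e, i, hi⟩ := hV.exists_div F hF0
  have hs' : φ s ∉ P := fun h' => hs (hq' (hPP h'))
  have hc' : φ c ∉ P := by
    intro h'
    have h2 := congrArg (fun f => φ (f.coeff n)) e
    simp only [coeff_C_mul, map_mul] at h2
    have : φ s * φ (F.coeff n) ∈ P := h2 ▸ P.mul_mem_right _ h'
    exact (hP.mem_or_mem this).elim hs' hn
  have h3 := congrArg (fun f => f.eval₂ φ y) e
  simp only [eval₂_mul, eval₂_C] at h3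
  have : φ c * g.eval₂ φ y ∈ P := h3 ▸ P.mul_mem_left _ hF
  have hg := (hP.mem_or_mem this).resolve_left hc'
  exact hi (hq' (h g (hPP hg) i))

theorem trAt_of_mem {R B : Type*} [CommRing R] [CommRing B] {φ : R →+* B}
    {P P' : Ideal B} [hP : P.IsPrime] (hPP : P ≤ P') (he : P'.comap φ ≤ P.comap φ)
    {z : B} (hz' : z ∈ P') (hz : z ∉ P) : TrAt φ P z := by
  have key : ∀ F : R[X], F.eval₂ φ z ∈ P → F.divX.eval₂ φ z ∈ P ∧ φ (F.coeff 0) ∈ P := by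
    intro F hF
    have e : F.eval₂ φ z = F.divX.eval₂ φ z * z + φ (F.coeff 0) := by
      conv_lhs => rw [← divX_mul_X_add F]
      simp
    have h0 : φ (F.coeff 0) ∈ P := by
      apply he
      have := P'.sub_mem (hPP hF) (P'.mul_mem_left (F.divX.eval₂ φ z) hz')
      rw [e, add_sub_cancel_left] at this
      exact this
    refine ⟨?_, h0⟩
    have := P.sub_mem hF h0
    rw [e, add_sub_cancel_right] at this
    exact (hP.mem_or_mem this).resolve_right hz
  intro F hF n
  induction n generalizing F with
  | zero => exact (key F hF).2
  | succ n ih =>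
    have := ih _ (key F hF).1
    rwa [coeff_divX] at this

theorem not_trAt {R B : Type*} [CommRing R] [IsDomain R] [CommRing B] [IsDomain B] {φ : R →+* B}
    (hφ : Function.Injective φ)
    (hdep : ∀ y z : B, (∀ F : R[X], F.eval₂ φ y = 0 → F = 0) →
      ∃ F : R[X][X], F ≠ 0 ∧ F.eval₂ (eval₂RingHom φ y) z = 0)
    {P P' : Ideal B} [hP : P.IsPrime] [P'.IsPrime] {q : Ideal R} [hq : q.IsPrime] (hV : VP q)
    (hPP : P < P') (he : P'.comap φ ≤ P.comap φ) (hq' : P'.comap φ ≤ q) (y : B) :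
    ¬ TrAt φ P' y := by
  intro h
  obtain ⟨z, hz', hz⟩ := SetLike.exists_of_lt hPP
  have hmem : ∀ F : R[X], eval₂RingHom φ y F ∈ P' → F ∈ (P.comap φ).map (C : R →+* R[X]) := by
    intro F hF
    rw [Ideal.mem_map_C_iff]
    exact fun n => he (h F hF n)
  have hy : ∀ F : R[X], F.eval₂ φ y = 0 → F = 0 := by
    intro F hF
    have h0 : TrAt φ (⊥ : Ideal B) y := h.anti hV bot_le hq'
    ext n
    apply hφ
    simpa using h0 F (by simpa using hF) n
  obtain ⟨G, hG, hGz⟩ := hdep y z hy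
  have hQ : (q.map (C : R →+* R[X])).IsPrime := Ideal.isPrime_map_C_of_isPrime
  obtain ⟨c, s, g, hc, hs, e, i, hi⟩ := hV.polynomial.exists_div G hG
  have h3 := congrArg (fun f => f.eval₂ (eval₂RingHom φ y) z) e
  simp only [eval₂_mul, eval₂_C, hGz, mul_zero] at h3
  have hg : g.eval₂ (eval₂RingHom φ y) z = 0 :=
    (mul_eq_zero.1 h3.symm).resolve_left fun h' => hc (hy c h')
  have hT : TrAt (eval₂RingHom φ y) P z := by
    apply trAt_of_mem hPP.le _ hz' hz
    intro F hF
    have := (Ideal.mem_map_C_iff.1 (hmem F hF))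
    change F.eval₂ φ y ∈ P
    rw [eval₂_eq_sum_range]
    exact P.sum_mem fun n _ => P.mul_mem_right _ (this n)
  have hgi := hT g (by rw [hg]; exact P.zero_mem) i
  apply hi
  have := (Ideal.mem_map_C_iff.1 (hmem _ (hPP.le hgi)))
  rw [Ideal.mem_map_C_iff]
  exact fun n => hq' (hPP.le (this n))

theorem chain_le {R B : Type*} [CommRing R] [IsDomain R] [CommRing B] [IsDomain B] {φ : R →+* B}
    (hφ : Function.Injective φ)
    (hdep : ∀ y z : B, (∀ F : R[X], F.eval₂ φ y = 0 → F = 0) →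
      ∃ F : R[X][X], F ≠ 0 ∧ F.eval₂ (eval₂RingHom φ y) z = 0)
    (l : LTSeries (PrimeSpectrum B)) (hV : VP (l.last.asIdeal.comap φ)) :
    (l.length : WithBot ℕ∞) ≤ ringKrullDim R + 1 := by
  classical
  have key : ∀ i : Fin (l.length + 1), ((i : ℕ) : ℕ∞) ≤
      Order.height (PrimeSpectrum.comap φ (l i)) +
        (if ∃ y, TrAt φ (l i).asIdeal y then 0 else 1) := by
    intro i
    induction i using Fin.induction with
    | zero => simp
    | succ i ih =>
      have hlt : l i.castSucc < l i.succ := l.step i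
      have hle : (l i.succ).asIdeal.comap φ ≤ l.last.asIdeal.comap φ :=
        Ideal.comap_mono (l.monotone (Fin.le_last _))
      have hlt' : (l i.castSucc).asIdeal < (l i.succ).asIdeal := hlt
      have hanti : (∃ y, TrAt φ (l i.succ).asIdeal y) → ∃ y, TrAt φ (l i.castSucc).asIdeal y :=
        fun ⟨y, hy⟩ => ⟨y, hy.anti hV hlt'.le hle⟩
      have hm : PrimeSpectrum.comap φ (l i.castSucc) ≤ PrimeSpectrum.comap φ (l i.succ) :=
        Ideal.comap_mono hlt'.le
      simp only [Fin.val_castSucc] at ih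
      rw [Fin.val_succ, Nat.cast_add, Nat.cast_one]
      rcases hm.lt_or_eq with h | h
      · have h1 := Order.height_add_one_le h
        calc ((i : ℕ) : ℕ∞) + 1 ≤ _ := add_le_add_left ih 1
          _ = (Order.height (PrimeSpectrum.comap φ (l i.castSucc)) + 1) +
            (if ∃ y, TrAt φ (l i.castSucc).asIdeal y then 0 else 1) := by
              rw [add_right_comm]
          _ ≤ _ := add_le_add h1 (by
              by_cases hs : ∃ y, TrAt φ (l i.succ).asIdeal y
              · simp [hs, hanti hs]
              · rw [if_neg hs]; split_ifs <;> simp)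
      · have he : (l i.succ).asIdeal.comap φ ≤ (l i.castSucc).asIdeal.comap φ := h.ge
        have h1 : ∃ y, TrAt φ (l i.castSucc).asIdeal y := by
          obtain ⟨z, hz', hz⟩ := SetLike.exists_of_lt hlt'
          exact ⟨z, trAt_of_mem hlt'.le he hz' hz⟩
        have h2 : ¬ ∃ y, TrAt φ (l i.succ).asIdeal y := by
          rintro ⟨y, hy⟩
          exact not_trAt hφ hdep hV hlt' he hle y hy
        rw [if_pos h1, h, add_zero] at ih
        rw [if_neg h2]
        exact add_le_add_left ih 1
  have h1 := key (Fin.last _)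
  have h2 : ((l.length : ℕ) : ℕ∞) ≤ Order.height (PrimeSpectrum.comap φ (l (Fin.last _))) + 1 :=
    h1.trans (add_le_add_right (by split_ifs <;> simp) _)
  have h3 : ((Order.height (PrimeSpectrum.comap φ (l (Fin.last _))) : ℕ∞) : WithBot ℕ∞)
    ≤ ringKrullDim R := Order.height_le_krullDim _
  calc (l.length : WithBot ℕ∞) = (((l.length : ℕ) : ℕ∞) : WithBot ℕ∞) := rfl
    _ ≤ ((Order.height (PrimeSpectrum.comap φ (l (Fin.last _))) + 1 : ℕ∞) : WithBot ℕ∞) :=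
      WithBot.coe_le_coe.2 h2
    _ = (Order.height (PrimeSpectrum.comap φ (l (Fin.last _))) : WithBot ℕ∞) + 1 := rfl
    _ ≤ _ := add_le_add_left h3 1

theorem dep_poly (R : Type*) [CommRing R] [IsDomain R] (y z : (FractionRing R)[X])
    (hy : ∀ F : R[X], aeval y F = 0 → F = 0) :
    ∃ F : R[X][X], F ≠ 0 ∧ F.eval₂ (aeval y : R[X] →ₐ[R] (FractionRing R)[X]).toRingHom z = 0 := by
  have ht : Transcendental R y := by
    rw [transcendental_iff]; exact hy
  have hi : AlgebraicIndependent R (fun _ : Unit => y) := by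
    rw [algebraicIndependent_unique_type_iff]; exact ht
  have htr : Algebra.trdeg R (FractionRing R)[X] = 1 := by
    have : Algebra.IsAlgebraic R (FractionRing R) :=
      IsLocalization.isAlgebraic _ (nonZeroDivisors R)
    rw [← trdeg_add_eq R (FractionRing R) (A := (FractionRing R)[X])]
    rw [Polynomial.trdeg_of_isDomain, trdeg_eq_zero, zero_add]
  have hb := hi.isTranscendenceBasis_of_lift_trdeg_le_of_finite (by rw [htr]; simp)
  have ha := hb.isAlgebraic
  obtain ⟨G, hG, hz⟩ := ha.isAlgebraic z
  have hmem : ∀ x : Algebra.adjoin R (Set.range fun _ : Unit => y), ∃ f : R[X], aeval y f = x.1 := by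
    rintro ⟨x, hx⟩
    rw [Set.range_const, Algebra.adjoin_singleton_eq_range_aeval] at hx
    exact hx
  choose g hg using hmem
  let F : R[X][X] := ∑ i ∈ G.support, monomial i (g (G.coeff i))
  have hcF : ∀ i, aeval y (F.coeff i) = (G.coeff i).1 := by
    intro i
    simp only [F, finsetSum_coeff, coeff_monomial, Finset.sum_ite_eq']
    split_ifs with h
    · exact hg _
    · rw [notMem_support_iff.1 h]; simp
  refine ⟨F, ?_, ?_⟩
  · intro h0
    apply hG
    ext i
    rw [← hcF i, h0]; simp
  · have : F.map (aeval y : R[X] →ₐ[R] (FractionRing R)[X]).toRingHom =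
        G.map (algebraMap (Algebra.adjoin R (Set.range fun _ : Unit => y)) _) := by
      ext1 i
      rw [coeff_map, coeff_map]
      exact hcF i
    rw [← eval_map, this, eval_map]
    exact hz
end Upper

section TIdeals
open Polynomial

/-- `y` lies in the `v`-closure of the integral ideal `J`. -/
def InV {R : Type*} [CommRing R] [IsDomain R] (J : Ideal R) (y : R) : Prop :=
  ∀ z : FractionRing R, (∀ j ∈ J, z * algebraMap R _ j ∈ (algebraMap R (FractionRing R)).range) →
    z * algebraMap R _ y ∈ (algebraMap R (FractionRing R)).range

theorem mem_tClosure_iff {R : Type*} [CommRing R] [IsDomain R] (I : Ideal R) (y : R) :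
    y ∈ tClosure R I ↔ ∃ J : Ideal R, J ≠ ⊥ ∧ J.FG ∧ J ≤ I ∧ InV J y := by
  have key : ∀ J : Ideal R, J ≠ ⊥ →
      (algebraMap R (FractionRing R) y ∈
        ((J : FractionalIdeal (nonZeroDivisors R) (FractionRing R))⁻¹)⁻¹ ↔ InV J y) := by
    intro J hJ
    have hJ0 : (J : FractionalIdeal (nonZeroDivisors R) (FractionRing R)) ≠ 0 := by
      simpa using hJ
    have h1 : (1 : FractionRing R) ∈ (J : FractionalIdeal (nonZeroDivisors R) (FractionRing R))⁻¹ := by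
      rw [FractionalIdeal.mem_inv_iff hJ0]
      intro z hz
      rw [one_mul]
      exact FractionalIdeal.coeIdeal_le_one hz
    have hJi : (J : FractionalIdeal (nonZeroDivisors R) (FractionRing R))⁻¹ ≠ 0 := by
      intro h0
      rw [h0] at h1
      simp at h1
    rw [FractionalIdeal.mem_inv_iff hJi]
    have hz : ∀ z, z ∈ (J : FractionalIdeal (nonZeroDivisors R) (FractionRing R))⁻¹ ↔
        ∀ j ∈ J, z * algebraMap R _ j ∈ (algebraMap R (FractionRing R)).range := by
      intro z
      rw [FractionalIdeal.mem_inv_iff hJ0]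
      constructor
      · intro h j hj
        have := h _ (FractionalIdeal.mem_coeIdeal_of_mem _ hj)
        rw [FractionalIdeal.mem_one_iff] at this
        exact this
      · intro h w hw
        obtain ⟨j, hj, rfl⟩ := (FractionalIdeal.mem_coeIdeal _).1 hw
        rw [FractionalIdeal.mem_one_iff]
        exact h j hj
    refine forall_congr' fun z => ?_
    rw [hz, FractionalIdeal.mem_one_iff, mul_comm]
    rfl
  constructor
  · rintro ⟨J, hJ0, hfg, hle, hy⟩
    obtain ⟨J', rfl⟩ := FractionalIdeal.le_one_iff_exists_coeIdeal.1
      (hle.trans FractionalIdeal.coeIdeal_le_one)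
    have h0 : J' ≠ ⊥ := by simpa using hJ0
    refine ⟨J', h0, ?_, ?_, (key _ h0).1 hy⟩
    · exact (FractionalIdeal.coeIdeal_fg _ (IsFractionRing.injective R (FractionRing R)) _).1 hfg
    · exact (FractionalIdeal.coeIdeal_le_coeIdeal _).1 hle
  · rintro ⟨J, h0, hfg, hle, hy⟩
    refine ⟨J, by simpa using h0, ?_, ?_, (key _ h0).2 hy⟩
    · exact (FractionalIdeal.coeIdeal_fg _ (IsFractionRing.injective R (FractionRing R)) _).2 hfg
    · exact (FractionalIdeal.coeIdeal_le_coeIdeal _).2 hle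

theorem InV.mono {R : Type*} [CommRing R] [IsDomain R] {J J' : Ideal R} {y : R} (h : J ≤ J')
    (hy : InV J y) : InV J' y := fun z hz => hy z fun j hj => hz j (h hj)

theorem inV_of_mem {R : Type*} [CommRing R] [IsDomain R] {J : Ideal R} {y : R}
    (hy : y ∈ J) : InV J y := fun _ hz => hz y hy

theorem InV.mul_one {R : Type*} [CommRing R] [IsDomain R] {J J' : Ideal R} (h : InV J 1)
    (h' : InV J' 1) : InV (J * J') 1 := by
  intro z hz
  have : ∀ j' ∈ J', z * algebraMap R _ j' ∈ (algebraMap R (FractionRing R)).range := by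
    intro j' hj'
    have := h (z * algebraMap R _ j') (fun j hj => by
      have := hz _ (Ideal.mul_mem_mul hj hj')
      rwa [map_mul, mul_left_comm, mul_comm] at this)
    simpa using this
  exact h' z this

theorem InV.pow {R : Type*} [CommRing R] [IsDomain R] {J : Ideal R} {y : R} (h : InV J y)
    (k : ℕ) : InV (J ^ k) (y ^ k) := by
  induction k with
  | zero => exact inV_of_mem (by simp)
  | succ k ih =>
    intro w hw
    have : ∀ m ∈ J ^ k, (w * algebraMap R _ y) * algebraMap R _ m ∈
        (algebraMap R (FractionRing R)).range := by
      intro m hm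
      have := h (w * algebraMap R _ m) (fun j hj => by
        have := hw _ (by rw [pow_succ]; exact Ideal.mul_mem_mul hm hj)
        rwa [map_mul, ← mul_assoc] at this)
      rwa [mul_right_comm] at this
    have := ih _ this
    rwa [mul_assoc, ← map_mul, ← pow_succ'] at this

theorem exists_tmax {R : Type*} [CommRing R] [IsDomain R] (p : Ideal R) (hp0 : p ≠ ⊥)
    (hp : (1 : R) ∉ tClosure R p) :
    ∃ m : Ideal R, p ≤ m ∧ m.IsPrime ∧ IsTIdeal R m ∧ m ≠ ⊤ ∧
      ∀ J : Ideal R, IsTIdeal R J → J ≠ ⊤ → m ≤ J → m = J := by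
  obtain ⟨m, hpm, hm⟩ := zorn_le_nonempty₀ {I : Ideal R | (1 : R) ∉ tClosure R I} (by
    intro c hc hch y hy
    refine ⟨sSup c, ?_, fun z hz => le_sSup hz⟩
    intro h1
    rw [mem_tClosure_iff] at h1
    obtain ⟨J, hJ0, hfg, hle, hv⟩ := h1
    obtain ⟨S, rfl⟩ := hfg
    have : ∃ I ∈ c, (S : Set R) ⊆ I := by
      have hS : ∀ x ∈ S, ∃ I ∈ c, x ∈ I := fun x hx =>
        (Submodule.mem_sSup_of_directed ⟨y, hy⟩ hch.directedOn).1 (hle (Ideal.subset_span hx))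
      clear hle hv hJ0
      classical
      induction S using Finset.induction_on with
      | empty => exact ⟨y, hy, by simp⟩
      | insert a T ha ih =>
        obtain ⟨I, hI, hTI⟩ := ih fun x hx => hS x (by simp [hx])
        obtain ⟨I', hI', haI⟩ := hS a (by simp)
        rcases hch.total hI hI' with h | h
        · refine ⟨I', hI', ?_⟩
          rw [Finset.coe_insert, Set.insert_subset_iff]
          exact ⟨haI, hTI.trans h⟩
        · refine ⟨I, hI, ?_⟩
          rw [Finset.coe_insert, Set.insert_subset_iff]
          exact ⟨h haI, hTI⟩
    obtain ⟨I, hI, hSI⟩ := this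
    apply hc hI
    rw [mem_tClosure_iff]
    exact ⟨_, hJ0, ⟨S, rfl⟩, Ideal.span_le.2 hSI, hv⟩) p hp
  have hm1 : (1 : R) ∉ tClosure R m := hm.1
  have hm1' := hm1
  rw [mem_tClosure_iff] at hm1'
  have hm0 : m ≠ ⊥ := fun h => hp0 (le_bot_iff.1 (h ▸ hpm))
  have ext : ∀ a, a ∉ m → ∃ J : Ideal R, J ≠ ⊥ ∧ J.FG ∧ J ≤ m ⊔ Ideal.span {a} ∧ InV J 1 := by
    intro a ha
    rw [← mem_tClosure_iff]
    by_contra h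
    have := hm.2 (show (m ⊔ Ideal.span {a}) ∈ {I : Ideal R | (1 : R) ∉ tClosure R I} from h)
      le_sup_left
    exact ha (this (Ideal.mem_sup_right (Ideal.mem_span_singleton_self a)))
  obtain ⟨x0, hx0, hx00⟩ := Submodule.exists_mem_ne_zero_of_ne_bot hm0
  have hsp : ∀ x : R, x ≠ 0 → Ideal.span {x} ≠ ⊥ := by
    intro x hx h
    exact hx (Ideal.span_singleton_eq_bot.1 h)
  have htop : m ≠ ⊤ := by
    intro h
    apply hm1'
    exact ⟨⊤, top_ne_bot, ⟨{1}, by simp⟩, by rw [h], inV_of_mem trivial⟩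
  refine ⟨m, hpm, ?_, ?_, htop, ?_⟩
  · refine ⟨htop, ?_⟩
    intro a b hab
    by_contra hcon
    push Not at hcon
    obtain ⟨J, hJ0, hJf, hJ, hJ1⟩ := ext a hcon.1
    obtain ⟨J', hJ0', hJf', hJ', hJ1'⟩ := ext b hcon.2
    apply hm1'
    refine ⟨J * J', mul_ne_zero hJ0 hJ0', hJf.mul hJf', ?_, hJ1.mul_one hJ1'⟩
    refine (Ideal.mul_mono hJ hJ').trans ?_
    rw [Ideal.sup_mul, Ideal.mul_sup, Ideal.mul_sup, Ideal.span_singleton_mul_span_singleton]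
    refine sup_le (sup_le Ideal.mul_le_left Ideal.mul_le_left) (sup_le Ideal.mul_le_right ?_)
    rw [Ideal.span_singleton_le_iff_mem]; exact hab
  · ext x
    rw [mem_tClosure_iff]
    constructor
    · rintro ⟨J, hJ0, hJf, hJ, hx⟩
      by_contra hxm
      obtain ⟨J', hJ0', hJf', hJ', hJ1'⟩ := ext x hxm
      have : ∃ J'' : Ideal R, J''.FG ∧ J'' ≤ m ∧ J' ≤ J'' ⊔ Ideal.span {x} := by
        obtain ⟨S, rfl⟩ := hJf'
        clear hJ0' hJ1'
        classical
        induction S using Finset.induction_on with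
        | empty => exact ⟨⊥, Submodule.fg_bot, bot_le, by simp⟩
        | insert a T ha ih =>
          rw [Finset.coe_insert] at hJ'
          obtain ⟨J'', h1, h2, h3⟩ := ih ((Ideal.span_mono (Set.subset_insert _ _)).trans hJ')
          have := hJ' (Ideal.subset_span (Set.mem_insert _ _))
          obtain ⟨u, hu, v, hv, huv⟩ := Submodule.mem_sup.1 this
          refine ⟨J'' ⊔ Ideal.span {u}, Submodule.FG.sup h1 ⟨{u}, by simp⟩,
            sup_le h2 ((Ideal.span_singleton_le_iff_mem _).2 hu), ?_⟩
          rw [Finset.coe_insert, Ideal.span_le, Set.insert_subset_iff]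
          constructor
          · rw [← huv]
            exact Ideal.add_mem _ (Ideal.mem_sup_left (Ideal.mem_sup_right
              (Ideal.mem_span_singleton_self u))) (Ideal.mem_sup_right hv)
          · exact Ideal.subset_span.trans (h3.trans (sup_le_sup_right le_sup_left _))
      obtain ⟨J'', h1, h2, h3⟩ := this
      apply hm1'
      refine ⟨J'' ⊔ J, fun h => hJ0 (le_bot_iff.1 (h ▸ le_sup_right)), Submodule.FG.sup h1 hJf, sup_le h2 hJ, ?_⟩
      intro z hz
      apply hJ1' z
      have hzx := hx z fun j hj => hz j (Ideal.mem_sup_right hj)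
      intro j hj
      obtain ⟨u, hu, v, hv, rfl⟩ := Submodule.mem_sup.1 (h3 hj)
      obtain ⟨w, rfl⟩ := Ideal.mem_span_singleton'.1 hv
      rw [map_add, mul_add]
      refine add_mem (hz u (Ideal.mem_sup_left hu)) ?_
      rw [map_mul, mul_left_comm]
      exact mul_mem ⟨w, rfl⟩ hzx
    · intro hx
      refine ⟨Ideal.span {x0} ⊔ Ideal.span {x}, fun h => hsp x0 hx00 (le_bot_iff.1 (h ▸ le_sup_left)),
        Submodule.FG.sup ⟨{x0}, by simp⟩ ⟨{x}, by simp⟩, sup_le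
          ((Ideal.span_singleton_le_iff_mem _).2 hx0) ((Ideal.span_singleton_le_iff_mem _).2 hx), ?_⟩
      exact inV_of_mem (Ideal.mem_sup_right (Ideal.mem_span_singleton_self x))
  · intro J hJ hJt hmJ
    refine le_antisymm hmJ (hm.2 ?_ hmJ)
    change (1 : R) ∉ tClosure R J
    rw [show tClosure R J = J from hJ]
    exact fun h => hJt ((Ideal.eq_top_iff_one _).2 h)

theorem vp_of_valuationRing {R : Type*} [CommRing R] [IsDomain R] (p : Ideal R) [hp : p.IsPrime]
    (h : ValuationRing (Localization.AtPrime p)) : VP p := by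
  intro a b
  obtain ⟨c, hc⟩ := ValuationRing.cond (algebraMap R (Localization.AtPrime p) a) (algebraMap R _ b)
  obtain ⟨⟨r, t⟩, hrt⟩ := IsLocalization.surj p.primeCompl c
  have hinj : Function.Injective (algebraMap R (Localization.AtPrime p)) :=
    IsLocalization.injective _ p.primeCompl_le_nonZeroDivisors
  refine ⟨t, t.2, ?_⟩
  simp only at hrt
  rcases hc with hc | hc
  · left
    refine ⟨r, hinj ?_⟩
    rw [map_mul, map_mul, ← hrt, ← hc]; ring
  · right
    refine ⟨r, hinj ?_⟩
    rw [map_mul, map_mul, ← hrt, ← hc]; ring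

/-- A PVMD is locally essential. -/
theorem IsPVMD.exists_vp {R : Type*} [CommRing R] [IsDomain R] (hR : IsPVMD R)
    (q : Ideal R) [hq : q.IsPrime] (x : FractionRing R)
    (hx : ∀ s, s ∉ q → algebraMap R _ s * x ∉ (algebraMap R (FractionRing R)).range) :
    ∃ p : Ideal R, p ≤ q ∧ p.IsPrime ∧ VP p ∧
      ∀ s, s ∉ p → algebraMap R _ s * x ∉ (algebraMap R (FractionRing R)).range := by
  let I : Ideal R :=
    { carrier := {r | algebraMap R _ r * x ∈ (algebraMap R (FractionRing R)).range}
      add_mem' := by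
        intro a b ha hb
        simp only [Set.mem_ofPred_eq, map_add, add_mul] at *
        exact add_mem ha hb
      zero_mem' := by simp
      smul_mem' := by
        intro c r hr
        simp only [Set.mem_ofPred_eq, smul_eq_mul, map_mul, mul_assoc] at *
        exact mul_mem ⟨c, rfl⟩ hr }
  have hI : ∀ r, r ∈ I ↔ algebraMap R _ r * x ∈ (algebraMap R (FractionRing R)).range :=
    fun r => Iff.rfl
  have hIq : I ≤ q := by
    intro r hr
    by_contra h
    exact hx r h hr
  obtain ⟨p, hpI, hpq⟩ := Ideal.exists_minimalPrimes_le hIq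
  have hp : p.IsPrime := hpI.1.1
  have hIp : I ≤ p := hpI.1.2
  have hp0 : p ≠ ⊥ := by
    intro h
    obtain ⟨r, s, hs, hrs⟩ := IsFractionRing.div_surjective (A := R) x
    have hs0 : s ≠ 0 := nonZeroDivisors.ne_zero hs
    have : s ∈ I := by
      rw [hI, ← hrs, mul_div_cancel₀]
      · exact ⟨r, rfl⟩
      · simpa using hs0
    have := hIp this
    rw [h] at this
    exact hs0 this
  -- the saturation of `I` at `p`
  let Ip : Ideal R :=
    { carrier := {r | ∃ s, s ∉ p ∧ s * r ∈ I}
      add_mem' := by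
        rintro a b ⟨s, hs, ha⟩ ⟨t, ht, hb⟩
        refine ⟨s * t, fun h => (hp.mem_or_mem h).elim hs ht, ?_⟩
        have : s * t * (a + b) = t * (s * a) + s * (t * b) := by ring
        rw [this]
        exact I.add_mem (I.mul_mem_left _ ha) (I.mul_mem_left _ hb)
      zero_mem' := ⟨1, fun h => hp.ne_top ((Ideal.eq_top_iff_one _).2 h), by simp⟩
      smul_mem' := by
        rintro c r ⟨s, hs, ha⟩
        refine ⟨s, hs, ?_⟩
        rw [smul_eq_mul, mul_left_comm]
        exact I.mul_mem_left _ ha }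
  have hrad : p ≤ Ip.radical := by
    intro a ha
    by_contra hna
    have hd : Disjoint (I : Set R) ((p.primeCompl ⊔ Submonoid.powers a : Submonoid R) : Set R) := by
      rw [Set.disjoint_left]
      intro r hr hrS
      obtain ⟨s, hs, t, ⟨n, rfl⟩, rfl⟩ := Submonoid.mem_sup.1 hrS
      exact hna ⟨n, s, hs, hr⟩
    obtain ⟨P, hP, hIP, hdP⟩ := Ideal.exists_le_prime_disjoint I _ hd
    rw [Set.disjoint_left] at hdP
    have hPp : P ≤ p := by
      intro r hr
      by_contra hrp
      exact hdP hr ((le_sup_left : p.primeCompl ≤ _) hrp)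
    have haP := hpI.2 ⟨hP, hIP⟩ hPp ha
    exact hdP haP ((le_sup_right : Submonoid.powers a ≤ _) (Submonoid.mem_powers a))
  have hfgs : ∀ M : Ideal R, M.FG → M ≤ Ip → ∃ s, s ∉ p ∧ ∀ m ∈ M, s * m ∈ I := by
    rintro M ⟨S, rfl⟩
    classical
    induction S using Finset.induction_on with
    | empty =>
      intro _
      refine ⟨1, fun h => hp.ne_top ((Ideal.eq_top_iff_one _).2 h), ?_⟩
      intro m hm
      simp at hm
      simp [hm]
    | insert a T ha ih =>
      intro hle
      rw [Finset.coe_insert] at hle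
      obtain ⟨s, hs, h⟩ := ih ((Ideal.span_mono (Set.subset_insert _ _)).trans hle)
      obtain ⟨t, ht, h'⟩ := hle (Ideal.subset_span (Set.mem_insert _ _))
      refine ⟨s * t, fun h => (hp.mem_or_mem h).elim hs ht, ?_⟩
      intro m hm
      rw [Finset.coe_insert] at hm
      obtain ⟨c, z, hz, rfl⟩ := Ideal.mem_span_insert.1 hm
      have : s * t * (c * a + z) = s * c * (t * a) + t * (s * z) := by ring
      rw [this]
      exact I.add_mem (I.mul_mem_left _ h') (I.mul_mem_left _ (h z hz))
  have hpt : (1 : R) ∉ tClosure R p := by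
    intro h1
    rw [mem_tClosure_iff] at h1
    obtain ⟨J, hJ0, hJf, hJp, hJ1⟩ := h1
    obtain ⟨n, hn⟩ := Ideal.exists_pow_le_of_le_radical_of_fg (hJp.trans hrad) hJf
    obtain ⟨s, hs, h⟩ := hfgs _ (hJf.pow (n := n)) hn
    have := hJ1.pow n (algebraMap R _ s * x) (fun m hm => by
      have := h m hm
      rw [hI, map_mul] at this
      rwa [mul_right_comm])
    rw [one_pow, map_one, mul_one] at this
    exact hs (hIp this)
  obtain ⟨m, hpm, hm, hmax⟩ := exists_tmax p hp0 hpt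
  refine ⟨p, hpq, hp, (vp_of_valuationRing m (hR m hm hmax)).mono hpm, ?_⟩
  intro s hs h
  exact hs (hIp h)
end TIdeals

section Main
open Polynomial

theorem mem_intPoly_iff {R : Type*} [CommRing R] [IsDomain R] (f : (FractionRing R)[X]) :
    f ∈ IntPoly R ↔ ∀ a : R, f.eval (algebraMap R _ a) ∈ (algebraMap R (FractionRing R)).range := by
  simp only [IntPoly, Subring.mem_iInf]
  rfl

/-- `Int(R) ⊆ R_p[X]` if `R/p` is infinite. -/
theorem coeff_of_infinite {R : Type*} [CommRing R] [IsDomain R] (p : Ideal R) [hp : p.IsPrime]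
    (hinf : Infinite (R ⧸ p)) (f : (FractionRing R)[X]) (hf : f ∈ IntPoly R) (i : ℕ) :
    ∃ s, s ∉ p ∧ algebraMap R _ s * f.coeff i ∈ (algebraMap R (FractionRing R)).range := by
  rw [mem_intPoly_iff] at hf
  choose r hr using hf
  let n := max (i + 1) (f.natDegree + 1)
  let e : Fin n → R ⧸ p := fun k => Infinite.natEmbedding (R ⧸ p) k
  have he : Function.Injective e := fun a b h =>
    Fin.ext ((Infinite.natEmbedding (R ⧸ p)).injective h)
  have hlift : ∀ k, ∃ a : R, Ideal.Quotient.mk p a = e k :=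
    fun k => Ideal.Quotient.mk_surjective _
  choose a ha using hlift
  let M := Matrix.vandermonde a
  refine ⟨M.det, ?_, ?_⟩
  · rw [← Ideal.Quotient.eq_zero_iff_mem, RingHom.map_det]
    have : (Ideal.Quotient.mk p).mapMatrix M = Matrix.vandermonde e := by
      ext k l
      simp [M, Matrix.vandermonde_apply, ha]
    rw [this]
    exact Matrix.det_vandermonde_ne_zero_iff.2 he
  · let ι := algebraMap R (FractionRing R)
    let c : Fin n → FractionRing R := fun k => f.coeff k
    have h1 : (M.map ι).mulVec c = fun k => ι (r (a k)) := by
      ext k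
      rw [hr, Matrix.mulVec, dotProduct, eval_eq_sum_range' (n := n) (by simp [n]),
        ← Fin.sum_univ_eq_sum_range (fun i => f.coeff i * (algebraMap R (FractionRing R)) (a k) ^ i)]
      refine Finset.sum_congr rfl fun l _ => ?_
      simp [M, Matrix.vandermonde_apply, c, ι, mul_comm]
    have h2 : ((M.adjugate).map ι).mulVec ((M.map ι).mulVec c) = ι M.det • c := by
      rw [Matrix.mulVec_mulVec, ← Matrix.map_mul, Matrix.adjugate_mul]
      ext k
      simp [Matrix.mulVec, dotProduct, Matrix.smul_apply, Matrix.one_apply, apply_ite]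
    rw [h1] at h2
    have h3 := congrFun h2 ⟨i, by simp [n]⟩
    change ι M.det * f.coeff i ∈ _
    have h4 : ι M.det * f.coeff i = (ι M.det • c) ⟨i, by simp [n]⟩ := rfl
    rw [h4, ← h3, Matrix.mulVec, dotProduct]
    exact sum_mem fun k _ => mul_mem ⟨_, rfl⟩ ⟨_, rfl⟩

/-- `R[X] → Int(R)`. -/
noncomputable def jInt (R : Type*) [CommRing R] [IsDomain R] : R[X] →+* IntPoly R :=
  (mapRingHom (algebraMap R (FractionRing R))).codRestrict (IntPoly R) (by
    intro f
    rw [mem_intPoly_iff]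
    intro a
    refine ⟨f.eval a, ?_⟩
    simp [eval_map_algebraMap, aeval_algebraMap_apply])

theorem jInt_coe {R : Type*} [CommRing R] [IsDomain R] (f : R[X]) :
    (jInt R f : (FractionRing R)[X]) = f.map (algebraMap R _) := rfl

theorem jInt_injective (R : Type*) [CommRing R] [IsDomain R] : Function.Injective (jInt R) := by
  intro f g h
  have := congrArg Subtype.val h
  exact map_injective _ (IsFractionRing.injective R (FractionRing R)) this

theorem IsPVMD.clear {R : Type*} [CommRing R] [IsDomain R] (hR : IsPVMD R)
    (q : Ideal R) [hq : q.IsPrime] (hV : ¬ VP q) (f : IntPoly R) :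
    ∃ s, s ∉ q ∧ ∃ g : R[X], jInt R (C s) * f = jInt R g := by
  have h1 : ∀ i, ∃ s, s ∉ q ∧
      algebraMap R _ s * f.1.coeff i ∈ (algebraMap R (FractionRing R)).range := by
    intro i
    by_contra hcon
    push Not at hcon
    obtain ⟨p, hpq, hp, hVp, h⟩ := hR.exists_vp q _ hcon
    have hne : p ≠ q := by rintro rfl; exact hV hVp
    have hinf : Infinite (R ⧸ p) := by
      by_contra hfin
      rw [not_infinite_iff_finite] at hfin
      have := Ideal.Quotient.maximal_of_isField p (Finite.isField_of_domain (R ⧸ p))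
      exact hne (this.eq_of_le hq.ne_top hpq)
    obtain ⟨s, hs, h'⟩ := coeff_of_infinite p hinf f.1 f.2 i
    exact h s hs h'
  choose s hs r hr using h1
  let t := ∏ i ∈ f.1.support, s i
  have ht : t ∉ q := by
    intro h
    rw [hq.prod_mem_iff] at h
    obtain ⟨i, _, hi⟩ := h
    exact hs i hi
  refine ⟨t, ht, ?_⟩
  have : (jInt R (C t) * f : IntPoly R).1 ∈ lifts (algebraMap R (FractionRing R)) := by
    rw [lifts_iff_coeff_lifts]
    intro i
    rw [Subring.coe_mul, jInt_coe, map_C, coeff_C_mul]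
    by_cases hi : i ∈ f.1.support
    · refine ⟨(∏ k ∈ f.1.support.erase i, s k) * r i, ?_⟩
      rw [map_mul, hr, ← mul_assoc, ← map_mul, Finset.prod_erase_mul _ _ hi]
    · rw [notMem_support_iff.1 hi]
      exact ⟨0, by simp⟩
  obtain ⟨g, hg⟩ := this
  exact ⟨g, Subtype.ext hg.symm⟩

theorem dep_sub {R B : Type*} [CommRing R] [IsDomain R] [CommRing B] (φ : R →+* B)
    (ι : B →+* (FractionRing R)[X]) (hι : Function.Injective ι)
    (hc : ι.comp φ = algebraMap R (FractionRing R)[X]) (y z : B)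
    (hy : ∀ F : R[X], F.eval₂ φ y = 0 → F = 0) :
      ∃ F : R[X][X], F ≠ 0 ∧ F.eval₂ (eval₂RingHom φ y) z = 0 := by
  have h1 : ∀ F : R[X], ι (F.eval₂ φ y) = aeval (ι y) F := by
    intro F
    rw [hom_eval₂, hc]; rfl
  obtain ⟨F, hF, h⟩ := dep_poly R (ι y) (ι z) (fun F hF => hy F (hι (by rw [h1, hF, map_zero])))
  refine ⟨F, hF, hι ?_⟩
  rw [hom_eval₂, map_zero, ← h]
  congr 1
  exact RingHom.ext h1

end Main

/-- If `R` is a PVMD of finite Krull dimension, then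
`dim(Int(R)) = dim(R[X])`. -/
theorem dim_intPoly_eq_dim_polynomial_of_isPVMD
    (R : Type*) [CommRing R] [IsDomain R]
    (hfin : ringKrullDim R ≠ ⊤)
    (hR : IsPVMD R) :
    ringKrullDim (IntPoly R) = ringKrullDim (Polynomial R) := by
  have hφinj : Function.Injective ((jInt R).comp Polynomial.C) :=
    (jInt_injective R).comp Polynomial.C_injective
  apply le_antisymm
  · refine iSup_le fun l => ?_
    by_cases hV : VP (l.last.asIdeal.comap ((jInt R).comp Polynomial.C))
    · refine le_trans (chain_le hφinj ?_ l hV) ringKrullDim_succ_le_ringKrullDim_polynomial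
      refine dep_sub _ (IntPoly R).subtype Subtype.val_injective ?_
      ext x : 1
      change Polynomial.map _ (Polynomial.C x) = _
      rw [Polynomial.map_C]; rfl
    · let l' : LTSeries (PrimeSpectrum (Polynomial R)) :=
        LTSeries.mk l.length (fun i => PrimeSpectrum.comap (jInt R) (l i)) (by
          intro i k hik
          have hlt : (l i).asIdeal < (l k).asIdeal := l.strictMono hik
          change (l i).asIdeal.comap (jInt R) < (l k).asIdeal.comap (jInt R)
          refine lt_of_le_of_ne (Ideal.comap_mono hlt.le) fun he => ?_
          obtain ⟨f, hf, hf'⟩ := SetLike.exists_of_lt hlt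
          obtain ⟨s, hs, g, hg⟩ := hR.clear _ hV f
          have h1 : g ∈ (l k).asIdeal.comap (jInt R) := by
            change jInt R g ∈ (l k).asIdeal
            rw [← hg]; exact Ideal.mul_mem_left _ _ hf
          rw [← he] at h1
          change jInt R g ∈ (l i).asIdeal at h1
          rw [← hg] at h1
          have h2 := ((l i).isPrime.mem_or_mem h1).resolve_right hf'
          have hle : (l i).asIdeal ≤ l.last.asIdeal := l.monotone (Fin.le_last _)
          exact hs (hle h2))
      exact le_trans le_rfl (Order.LTSeries.length_le_krullDim l')
  · refine iSup_le fun l => ?_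
    by_cases hV : VP (l.last.asIdeal.comap (Polynomial.C : R →+* _))
    · refine le_trans (chain_le Polynomial.C_injective ?_ l hV) ?_
      · refine dep_sub _ (Polynomial.mapRingHom (algebraMap R (FractionRing R)))
          (Polynomial.map_injective _ (IsFractionRing.injective R (FractionRing R))) ?_
        ext x : 1
        change Polynomial.map _ (Polynomial.C x) = _
        rw [Polynomial.map_C]; rfl
      · -- evaluation at zero
        have hev : ∀ f : IntPoly R, ∃ r, algebraMap R (FractionRing R) r = f.1.eval 0 := by
          intro f
          have := (mem_intPoly_iff f.1).1 f.2 0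
          rwa [map_zero] at this
        choose ev hev using hev
        have hinj := IsFractionRing.injective R (FractionRing R)
        let E : IntPoly R →+* R :=
          { toFun := ev
            map_one' := hinj (by simp [hev])
            map_zero' := hinj (by simp [hev])
            map_add' := fun x y => hinj (by simp [hev])
            map_mul' := fun x y => hinj (by simp [hev]) }
        refine ringKrullDim_succ_le_of_surjective E ?_ (r := jInt R Polynomial.X) ?_ ?_
        · intro r
          refine ⟨jInt R (Polynomial.C r), hinj ?_⟩
          change algebraMap _ _ (ev _) = _
          rw [hev, jInt_coe]; simp
        · apply mem_nonZeroDivisors_of_ne_zero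
          intro h
          exact Polynomial.X_ne_zero (jInt_injective R (h.trans (map_zero _).symm))
        · apply hinj
          change algebraMap _ _ (ev _) = _
          rw [hev, jInt_coe]; simp
    · set q := l.last.asIdeal.comap (Polynomial.C : R →+* _) with hqdef
      have hq : q.IsPrime := inferInstance
      have hq1 : (1 : R) ∉ q := fun h => hq.ne_top ((Ideal.eq_top_iff_one _).2 h)
      let P : Ideal (Polynomial R) → Ideal (IntPoly R) := fun Q =>
        { carrier := {f | ∃ s, s ∉ q ∧ ∃ g ∈ Q, jInt R (Polynomial.C s) * f = jInt R g}
          add_mem' := by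
            rintro a b ⟨s, hs, g, hg, h⟩ ⟨t, ht, g', hg', h'⟩
            refine ⟨s * t, fun h => (hq.mem_or_mem h).elim hs ht, Polynomial.C t * g + Polynomial.C s * g',
              Q.add_mem (Q.mul_mem_left _ hg) (Q.mul_mem_left _ hg'), ?_⟩
            rw [map_add, (jInt R).map_mul, (jInt R).map_mul, ← h, ← h', Polynomial.C_mul, (jInt R).map_mul]
            ring
          zero_mem' := ⟨1, hq1, 0, Q.zero_mem, by simp⟩
          smul_mem' := by
            rintro c f ⟨s, hs, g, hg, h⟩
            obtain ⟨t, ht, k, hk⟩ := hR.clear q hV c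
            refine ⟨t * s, fun h => (hq.mem_or_mem h).elim ht hs, k * g, Q.mul_mem_left _ hg, ?_⟩
            rw [(jInt R).map_mul k, ← h, ← hk, Polynomial.C_mul, (jInt R).map_mul, smul_eq_mul]
            ring }
      have hP : ∀ Q f, f ∈ P Q ↔ ∃ s, s ∉ q ∧ ∃ g ∈ Q, jInt R (Polynomial.C s) * f = jInt R g :=
        fun Q f => Iff.rfl
      have hmono : ∀ Q Q', Q ≤ Q' → P Q ≤ P Q' := by
        rintro Q Q' hQ f ⟨s, hs, g, hg, h⟩
        exact ⟨s, hs, g, hQ hg, h⟩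
      have hcon : ∀ i g, jInt R g ∈ P (l i).asIdeal ↔ g ∈ (l i).asIdeal := by
        intro i g
        have hle : (l i).asIdeal ≤ l.last.asIdeal := l.monotone (Fin.le_last _)
        constructor
        · rintro ⟨s, hs, g', hg', h⟩
          rw [← map_mul] at h
          have := jInt_injective R h
          rw [← this] at hg'
          exact ((l i).isPrime.mem_or_mem hg').resolve_left fun h => hs (hle h)
        · intro hg
          exact ⟨1, hq1, g, hg, by simp⟩
      have hprime : ∀ i, (P (l i).asIdeal).IsPrime := by
        intro i
        have hle : (l i).asIdeal ≤ l.last.asIdeal := l.monotone (Fin.le_last _)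
        refine ⟨fun h => ?_, ?_⟩
        · have : jInt R 1 ∈ P (l i).asIdeal := by rw [h]; trivial
          rw [hcon] at this
          exact (l i).isPrime.ne_top ((Ideal.eq_top_iff_one _).2 this)
        · intro a b hab
          obtain ⟨u, hu, g, hg⟩ := hR.clear q hV a
          obtain ⟨v, hv, k, hk⟩ := hR.clear q hV b
          have : jInt R (g * k) ∈ P (l i).asIdeal := by
            rw [map_mul, ← hg, ← hk, mul_mul_mul_comm]
            exact Ideal.mul_mem_left _ _ hab
          rw [hcon] at this
          rcases (l i).isPrime.mem_or_mem this with h | h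
          · exact Or.inl ⟨u, hu, g, h, hg⟩
          · exact Or.inr ⟨v, hv, k, h, hk⟩
      let l' : LTSeries (PrimeSpectrum (IntPoly R)) :=
        LTSeries.mk l.length (fun i => ⟨P (l i).asIdeal, hprime i⟩) (by
          intro i k hik
          have hlt : (l i).asIdeal < (l k).asIdeal := l.strictMono hik
          change P (l i).asIdeal < P (l k).asIdeal
          refine lt_of_le_of_ne (hmono _ _ hlt.le) fun he => ?_
          obtain ⟨f, hf, hf'⟩ := SetLike.exists_of_lt hlt
          rw [← hcon, ← he, hcon] at hf
          exact hf' hf)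
      exact le_trans le_rfl (Order.LTSeries.length_le_krullDim l')
end

section
/- For every integer r ≥ 2 there exists an integral domain D such that: (i) D is essential; (ii) dim(D) = dim_v(D) = r (so D is an r-dimensional Jaffard domain); and (iii) D is not locally essential, i.e., there exists a prime ideal q of D such that the localization D_q is not an essential domain. -/
/-- The valuative dimension of a domain `R`: the supremum of the Krull dimensions of
the valuation overrings of `R` (valuation subrings of the quotient field containing `R`). -/
noncomputable def valuativeDim (R : Type*) [CommRing R] [IsDomain R] : WithBot ℕ∞ :=
  ⨆ W : {W : ValuationSubring (FractionRing R) //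
      Set.range (algebraMap R (FractionRing R)) ⊆ (W : Set (FractionRing R))},
    ringKrullDim (W : ValuationSubring (FractionRing R))

namespace EssJ

open Polynomial

variable {F : Type*} [Field F]

theorem exists_dominating {B κ : Type*} [CommRing B] [CommRing κ] [IsDomain κ]
    (φ : B →+* F) (hφ : Function.Injective φ) (ψ : B →+* κ) :
    ∃ V : ValuationSubring F, ∀ b, φ b ∈ V ∧ (ψ b = 0 → φ b = 0 ∨ (φ b)⁻¹ ∉ V) ∧
      (ψ b ≠ 0 → (φ b)⁻¹ ∈ V) := by
  have hbij : Function.Bijective φ.rangeRestrict :=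
    ⟨fun a b h => hφ (congrArg Subtype.val h), φ.rangeRestrict_surjective⟩
  let e : B ≃+* φ.range := RingEquiv.ofBijective φ.rangeRestrict hbij
  let ψ' : φ.range →+* κ := ψ.comp e.symm.toRingHom
  let P : Ideal φ.range := RingHom.ker ψ'
  have : P.IsPrime := RingHom.ker_isPrime ψ'
  obtain ⟨V, hV⟩ := (LocalSubring.ofPrime φ.range P).exists_le_valuationSubring
  obtain ⟨hle, hloc⟩ := hV
  have hle' : ∀ x ∈ (LocalSubring.ofPrime φ.range P).toSubring, x ∈ V := fun x hx => hle hx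
  have key : ∀ b, ψ' (e b) = ψ b := fun b => by simp [ψ']
  have hAm : ∀ b, φ b ∈ (LocalSubring.ofPrime φ.range P).toSubring := fun b =>
    LocalSubring.le_ofPrime _ _ ⟨b, rfl⟩
  have hunit : ∀ b, IsUnit (⟨φ b, hAm b⟩ : (LocalSubring.ofPrime φ.range P).toSubring) ↔
      ψ b ≠ 0 := by
    intro b
    have := IsLocalization.AtPrime.isUnit_to_map_iff
      (LocalSubring.ofPrime φ.range P).toSubring P (e b)
    have h2 : algebraMap φ.range (LocalSubring.ofPrime φ.range P).toSubring (e b)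
      = ⟨φ b, hAm b⟩ := rfl
    rw [h2] at this
    rw [this, Ideal.primeCompl]
    change ¬ (e b ∈ P) ↔ _
    rw [RingHom.mem_ker, key]
  refine ⟨V, fun b => ⟨hle' _ (hAm b), fun h => ?_, fun h => ?_⟩⟩
  · by_contra hc
    push Not at hc
    have : IsUnit (⟨φ b, hAm b⟩ : (LocalSubring.ofPrime φ.range P).toSubring) := by
      apply hloc.map_nonunit
      refine isUnit_iff_exists_inv.2 ⟨⟨(φ b)⁻¹, hc.2⟩, Subtype.ext ?_⟩
      exact mul_inv_cancel₀ hc.1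
    exact (hunit b).1 this h
  · have := (hunit b).2 h
    obtain ⟨⟨c, hc⟩, hc'⟩ := isUnit_iff_exists_inv.1 this
    have h3 : φ b * c = 1 := congrArg Subtype.val hc'
    have : (φ b)⁻¹ = c := (eq_inv_of_mul_eq_one_right h3).symm
    rw [this]
    exact hle' _ hc

/-- extend by a small element -/
theorem exists_step (K : Subfield F) (t : F) (ht : Transcendental K t) (U : ValuationSubring F) :
    ∃ V : ValuationSubring F, (∀ c ∈ K, c ∈ U → c ∈ V) ∧
      (∀ c ∈ K, c ∉ U → c ∉ V) ∧ (∀ c ∈ K, c = 0 ∨ (c * t)⁻¹ ∉ V) := by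
  let O : Subring K := U.toSubring.comap K.subtype
  let B : Subring K[X] := O.comap Polynomial.constantCoeff
  let c0 : B →+* U := 
    { toFun := fun p => ⟨(p.1.coeff 0 : K), p.2⟩
      map_one' := by ext; simp
      map_zero' := by ext; simp
      map_mul' := fun p q => by ext; simp [Polynomial.mul_coeff_zero]
      map_add' := fun p q => by ext; simp }
  let φ : B →+* F := (Polynomial.aeval (R := K) t).toRingHom.comp B.subtype
  have hφ : Function.Injective φ := by
    intro a b h
    exact Subtype.ext ((transcendental_iff_injective.1 ht) h)
  obtain ⟨V, hV⟩ := exists_dominating φ hφ ((IsLocalRing.residue U).comp c0)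
  have hC : ∀ c : K, ∀ h : (c : F) ∈ U, φ ⟨C c, by simpa [B, O] using! h⟩ = c := by
    intro c h
    exact Polynomial.aeval_C _ _
  refine ⟨V, fun c hc hcU => ?_, fun c hc hcU hcV => ?_, fun c hc => ?_⟩
  · have := (hV ⟨C ⟨c, hc⟩, by simpa [B, O] using! hcU⟩).1
    rwa [hC ⟨c, hc⟩ hcU] at this
  · have hc0 : c ≠ 0 := by rintro rfl; exact hcU U.zero_mem
    have hi : c⁻¹ ∈ U := (U.mem_or_inv_mem c).resolve_left hcU
    have := (hV ⟨C ⟨c⁻¹, K.inv_mem hc⟩, by simpa [B, O] using! hi⟩).2.1 ?_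
    · rw [hC ⟨c⁻¹, K.inv_mem hc⟩ hi] at this
      simp [hc0, hcV] at this
    · rw [RingHom.comp_apply, IsLocalRing.residue_eq_zero_iff, ← ValuationSubring.coe_mem_nonunits_iff,
        ValuationSubring.mem_nonunits_iff_or]
      right
      simpa [c0] using hcU
  · by_cases hc0 : c = 0
    · exact Or.inl hc0
    right
    have hm : C (⟨c, hc⟩ : K) * X ∈ B := by simp [B, O]
    have := (hV ⟨_, hm⟩).2.1 ?_
    · have h4 : φ ⟨_, hm⟩ = c * t := by
        change Polynomial.aeval t (C (⟨c, hc⟩ : K) * X) = _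
        rw [map_mul, aeval_C, aeval_X]; rfl
      rw [h4] at this
      rcases this with h | h
      · have ht0 : t ≠ 0 := by
          rintro rfl
          exact ht (isAlgebraic_zero)
        simp [hc0, ht0] at h
      · exact h
    · have : c0 ⟨_, hm⟩ = 0 := by ext; simp [c0]
      rw [RingHom.comp_apply, this, map_zero]


theorem exists_gauss {ι : Type*} (K : Subfield F) (x : ι → F) (hx : AlgebraicIndependent K x)
    (hgen : ∀ f : F, ∃ p q : MvPolynomial ι K,
      f = MvPolynomial.aeval x p / MvPolynomial.aeval x q)
    (c : ι → F) (hcK : ∀ i, c i ∈ K) (hc : ∀ i, c i ≠ 0) (U : ValuationSubring F) :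
    ∃ V : ValuationSubring F, (∀ a ∈ K, a ∈ V ↔ a ∈ U) ∧
      (∀ i, x i / c i ∈ V ∧ c i / x i ∈ V) ∧
      ∀ f : F, f ≠ 0 → ∃ a ∈ K, a ≠ 0 ∧ f / a ∈ V ∧ a / f ∈ V := by
  classical
  let O : Subring K := U.toSubring.comap K.subtype
  let ρ : O →+* IsLocalRing.ResidueField U := (IsLocalRing.residue U).comp
    { toFun := fun p => ⟨(p.1 : K), p.2⟩
      map_one' := rfl
      map_zero' := rfl
      map_mul' := fun _ _ => rfl
      map_add' := fun _ _ => rfl }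
  have hρ : ∀ a : O, ρ a = 0 ↔ ((a : K) : F) = 0 ∨ ((a : K) : F)⁻¹ ∉ U := by
    intro a
    rw [RingHom.comp_apply, IsLocalRing.residue_eq_zero_iff,
      ← ValuationSubring.coe_mem_nonunits_iff, ValuationSubring.mem_nonunits_iff_or]
    rfl
  let ξ : ι → F := fun i => x i / c i
  -- change of variables
  let τ : MvPolynomial ι K →ₐ[K] MvPolynomial ι K :=
    MvPolynomial.aeval fun i => MvPolynomial.C ⟨c i, hcK i⟩ * MvPolynomial.X i
  let τ' : MvPolynomial ι K →ₐ[K] MvPolynomial ι K :=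
    MvPolynomial.aeval fun i => MvPolynomial.C ⟨c i, hcK i⟩⁻¹ * MvPolynomial.X i
  have hττ' : ∀ p, τ (τ' p) = p := by
    intro p
    have : τ.comp τ' = AlgHom.id K _ := by
      ext1 i
      have : (⟨c i, hcK i⟩ : K) ≠ 0 := fun h => hc i (congrArg Subtype.val h)
      simp only [τ, τ', AlgHom.comp_apply, MvPolynomial.aeval_X, map_mul, MvPolynomial.algHom_C,
        MvPolynomial.algebraMap_eq, AlgHom.id_apply]
      rw [← mul_assoc, ← MvPolynomial.C_mul, inv_mul_cancel₀ this]
      simp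
    exact DFunLike.congr_fun this p
  have hev : ∀ p, MvPolynomial.aeval ξ (τ p) = MvPolynomial.aeval x p := by
    intro p
    have : (MvPolynomial.aeval ξ).comp τ = MvPolynomial.aeval x := by
      ext1 i
      simp only [τ, AlgHom.comp_apply, MvPolynomial.aeval_X, map_mul, MvPolynomial.algHom_C, ξ]
      change c i * (x i / c i) = x i
      field_simp [hc i]
    exact DFunLike.congr_fun this p
  have hev' : ∀ p, MvPolynomial.aeval x (τ' p) = MvPolynomial.aeval ξ p := by
    intro p
    rw [← hev, hττ']
  have hξ : Function.Injective (MvPolynomial.aeval ξ : MvPolynomial ι K →ₐ[K] F) := by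
    intro p q h
    rw [← hev', ← hev'] at h
    have := hx h
    rw [← hττ' p, ← hττ' q, this]
  let ψ : MvPolynomial ι O →+* MvPolynomial ι (IsLocalRing.ResidueField U) := MvPolynomial.map ρ
  let φ : MvPolynomial ι O →+* F :=
    (MvPolynomial.aeval ξ : MvPolynomial ι K →ₐ[K] F).toRingHom.comp (MvPolynomial.map O.subtype)
  have hφ : Function.Injective φ := by
    exact hξ.comp (MvPolynomial.map_injective _ Subtype.val_injective)
  obtain ⟨V, hV⟩ := exists_dominating φ hφ ψ
  have hφC : ∀ a : O, φ (MvPolynomial.C a) = ((a : K) : F) := by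
    intro a
    simp only [φ, RingHom.comp_apply, MvPolynomial.map_C]
    exact MvPolynomial.aeval_C _ _
  have hφX : ∀ i, φ (MvPolynomial.X i) = x i / c i := by
    intro a
    simp only [φ, RingHom.comp_apply, MvPolynomial.map_X]
    exact MvPolynomial.aeval_X _ _
  have hψX : ∀ i, ψ (MvPolynomial.X i) ≠ 0 := by
    intro i
    simp [ψ]
  have hnorm : ∀ p : MvPolynomial ι K, p ≠ 0 → ∃ a ∈ K, a ≠ 0 ∧
      MvPolynomial.aeval ξ p / a ∈ V ∧ a / MvPolynomial.aeval ξ p ∈ V := by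
    intro p hp
    obtain ⟨m, hm, hmax⟩ := Finset.exists_max_image p.support
      (fun m => U.valuation ((p.coeff m : K) : F)) (MvPolynomial.support_nonempty.2 hp)
    have ha0 : p.coeff m ≠ 0 := MvPolynomial.mem_support_iff.1 hm
    set a : K := p.coeff m with ha
    have ha0' : (a : F) ≠ 0 := fun h => ha0 (Subtype.ext h)
    have hcoef : ∀ n, (a⁻¹ * p.coeff n : K) ∈ O := by
      intro n
      change ((a⁻¹ * p.coeff n : K) : F) ∈ U
      rw [← ValuationSubring.valuation_le_one_iff]
      by_cases hn : n ∈ p.support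
      · have := hmax n hn
        have hva : U.valuation (a : F) ≠ 0 := (Valuation.ne_zero_iff _).2 ha0'
        push_cast
        rw [map_mul, map_inv₀, ← div_eq_inv_mul]
        exact div_le_one_of_le₀ this zero_le
      · rw [MvPolynomial.notMem_support_iff.1 hn]; simp
    obtain ⟨p1, hp1⟩ : ∃ p1 : MvPolynomial ι O,
        MvPolynomial.map O.subtype p1 = MvPolynomial.C a⁻¹ * p := by
      have : MvPolynomial.C a⁻¹ * p ∈ Set.range (MvPolynomial.map (σ := ι) O.subtype) := by
        rw [MvPolynomial.mem_range_map_iff_coeffs_subset]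
        intro y hy
        obtain ⟨n, hn, rfl⟩ := MvPolynomial.mem_coeffs_iff.1 hy
        rw [MvPolynomial.coeff_C_mul]
        exact ⟨⟨_, hcoef n⟩, rfl⟩
      exact this
    have hpe : φ p1 = MvPolynomial.aeval ξ p / a := by
      change MvPolynomial.aeval ξ (MvPolynomial.map O.subtype p1) = _
      rw [hp1, map_mul, MvPolynomial.algHom_C, map_inv₀, div_eq_inv_mul]
      rfl
    have hψp : ψ p1 ≠ 0 := by
      intro h
      have h1 := congrArg (MvPolynomial.coeff m) h
      simp only [ψ, MvPolynomial.coeff_map, MvPolynomial.coeff_zero] at h1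
      have h2 := congrArg (MvPolynomial.coeff m) hp1
      rw [MvPolynomial.coeff_map, MvPolynomial.coeff_C_mul, ← ha, inv_mul_cancel₀ ha0] at h2
      have h3 : p1.coeff m = 1 := Subtype.ext h2
      rw [h3, map_one] at h1
      exact one_ne_zero h1
    refine ⟨a, a.2, ha0', ?_, ?_⟩
    · rw [← hpe]; exact (hV p1).1
    · have := (hV p1).2.2 hψp
      rwa [hpe, inv_div] at this
  refine ⟨V, fun a ha => ⟨fun haV => ?_, fun haU => ?_⟩, fun i => ⟨?_, ?_⟩, fun f hf => ?_⟩
  · by_contra haU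
    have hi : a⁻¹ ∈ U := (U.mem_or_inv_mem a).resolve_left haU
    have ha0 : a ≠ 0 := by rintro rfl; exact haU U.zero_mem
    let b : O := ⟨⟨a⁻¹, K.inv_mem ha⟩, hi⟩
    have h1 : ψ (MvPolynomial.C b) = 0 := by
      simp only [ψ, MvPolynomial.map_C]
      have : ρ b = 0 := by
        rw [hρ]; right; simpa [b] using haU
      rw [this, map_zero]
    have := (hV _).2.1 h1
    rw [hφC] at this
    simp [b, ha0, haV] at this
  · have := (hV (MvPolynomial.C (⟨⟨a, ha⟩, haU⟩ : O))).1
    rwa [hφC] at this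
  · have := (hV (MvPolynomial.X i)).1
    rwa [hφX] at this
  · have := (hV (MvPolynomial.X i)).2.2 (hψX i)
    rwa [hφX, inv_div] at this
  · obtain ⟨p, q, rfl⟩ := hgen f
    have hp : τ p ≠ 0 := by
      intro h; apply hf; rw [← hev, h]; simp
    have hq : τ q ≠ 0 := by
      intro h; apply hf; rw [← hev q, h]; simp
    obtain ⟨a, ha, ha0, h1, h2⟩ := hnorm _ hp
    obtain ⟨b, hb, hb0, h3, h4⟩ := hnorm _ hq
    rw [hev] at h1 h2 h3 h4
    have hp0 : MvPolynomial.aeval x p ≠ 0 := by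
      intro h; apply hf; simp [h]
    have hq0 : MvPolynomial.aeval x q ≠ 0 := by
      intro h; apply hf; simp [h]
    refine ⟨a / b, K.div_mem ha hb, div_ne_zero ha0 hb0, ?_, ?_⟩
    · have := V.mul_mem _ _ h1 h4
      convert this using 1
      field_simp
    · have := V.mul_mem _ _ h2 h3
      convert this using 1
      field_simp
end EssJ

namespace EssJ

open Polynomial

variable {F : Type*} [Field F]

/-- A chain of elements of increasing, pairwise non comparable (archimedean) value. -/
def VChain (S : Set F) {m : ℕ} (a : Fin m → F) : Prop :=
  (∀ j, a j ≠ 0) ∧ (∀ j, (a j)⁻¹ ∉ S) ∧ ∀ l j, l < j → ∀ n : ℕ, a j ^ n / a l ∉ S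

theorem VChain.mono {S T : Set F} (h : S ⊆ T) {m : ℕ} {a : Fin m → F} (ha : VChain T a) :
    VChain S a :=
  ⟨ha.1, fun j hj => ha.2.1 j (h hj), fun l j hlj n hn => ha.2.2 l j hlj n (h hn)⟩

theorem rank_upper {D : Type*} [CommRing D] [IsDomain D] (f : D →+* F)
    (hf : Function.Injective f) (p : LTSeries (PrimeSpectrum D)) (S : Set F)
    (h1 : ∀ v ∈ S, ∀ y ∈ p.last.asIdeal, ∃ s ∉ p.last.asIdeal, ∃ d, f s * v * f y = f d)
    (h2 : ∀ y ∈ p.last.asIdeal, y ≠ 0 → (f y)⁻¹ ∉ S) :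
    ∃ a : Fin p.length → F, VChain S a := by
  have hlt : ∀ j : Fin p.length, ∃ a, a ∈ (p j.succ).asIdeal ∧ a ∉ (p j.castSucc).asIdeal := by
    intro j
    have : p j.castSucc < p j.succ := p.step j
    exact SetLike.exists_of_lt this
  choose a ha hb using hlt
  have hlast : ∀ i, (p i).asIdeal ≤ p.last.asIdeal := fun i => p.monotone (Fin.le_last i)
  have h0 : ∀ j, a j ≠ 0 := fun j hj => hb j (hj ▸ Ideal.zero_mem _)
  have hf0 : ∀ j, f (a j) ≠ 0 := fun j hj => h0 j (hf (by rw [hj, map_zero]))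
  refine ⟨fun j => f (a j), hf0, fun j => h2 _ (hlast _ (ha j)) (h0 j), ?_⟩
  intro l j hlj n hn
  obtain ⟨s, hs, d, hd⟩ := h1 _ hn (a j) (hlast _ (ha j))
  have hd' : f (s * a j ^ (n + 1)) = f (d * a l) := by
    rw [map_mul, map_mul, map_pow, ← hd, pow_succ]
    have := hf0 l
    field_simp
  have hd'' := hf hd'
  have hle : (p l.succ).asIdeal ≤ (p j.castSucc).asIdeal :=
    p.monotone (Fin.succ_le_castSucc_iff.2 hlj)
  have hmem : s * a j ^ (n + 1) ∈ (p j.castSucc).asIdeal := by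
    rw [hd'']
    exact Ideal.mul_mem_left _ _ (hle (ha l))
  rcases (p j.castSucc).isPrime.mem_or_mem hmem with h | h
  · exact hs (hlast _ h)
  · exact hb j ((p j.castSucc).isPrime.mem_of_pow_mem _ h)

theorem rank_upper' {D : Type*} [CommRing D] [IsDomain D] (f : D →+* F)
    (hf : Function.Injective f) (r : ℕ)
    (h : ∀ Q : PrimeSpectrum D, ∃ S : Set F,
      (∀ v ∈ S, ∀ y ∈ Q.asIdeal, ∃ s ∉ Q.asIdeal, ∃ d, f s * v * f y = f d) ∧
      (∀ y ∈ Q.asIdeal, y ≠ 0 → (f y)⁻¹ ∉ S) ∧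
      ∀ m (a : Fin m → F), VChain S a → m ≤ r) : ringKrullDim D ≤ r := by
  refine iSup_le fun p => ?_
  obtain ⟨S, h1, h2, h3⟩ := h p.last
  obtain ⟨a, ha⟩ := rank_upper f hf p S h1 h2
  exact_mod_cast h3 _ a ha

theorem mem_iff_le (V : ValuationSubring F) (x y : F) (hy : y ≠ 0) :
    x / y ∈ V ↔ V.valuation x ≤ V.valuation y := by
  rw [← V.valuation_le_one_iff, map_div₀, div_le_one₀]
  exact zero_lt_iff.2 ((Valuation.ne_zero_iff _).2 hy)

theorem inv_mem_iff (V : ValuationSubring F) (y : F) (hy : y ≠ 0) :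
    y⁻¹ ∈ V ↔ 1 ≤ V.valuation y := by
  rw [← one_div, mem_iff_le V _ _ hy, map_one]

theorem rank_lower {D : Type*} [CommRing D] [IsDomain D] (f : D →+* F)
    (V : ValuationSubring F) (hV : ∀ d, f d ∈ V) (m : ℕ) (a : Fin m → D)
    (ha : VChain (V : Set F) (fun j => f (a j))) : (m : WithBot ℕ∞) ≤ ringKrullDim D := by
  obtain ⟨h0, h1, h2⟩ := ha
  set v := V.valuation with hv
  have hv1 : ∀ d, v (f d) ≤ 1 := fun d => (V.valuation_le_one_iff _).2 (hV d)
  have ha1 : ∀ j, v (f (a j)) < 1 := fun j => by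
    have := h1 j
    rwa [SetLike.mem_coe, inv_mem_iff V _ (h0 j), not_le] at this
  have ha2 : ∀ l j, l < j → ∀ n : ℕ, v (f (a l)) < v (f (a j)) ^ n := fun l j hlj n => by
    have := h2 l j hlj n
    rwa [SetLike.mem_coe, mem_iff_le V _ _ (h0 l), not_le, map_pow] at this
  let I : Fin m → Ideal D := fun j =>
    { carrier := {d | ∃ n : ℕ, v (f d) ^ n ≤ v (f (a j))}
      add_mem' := by
        rintro x y ⟨n, hn⟩ ⟨k, hk⟩
        refine ⟨n + k, ?_⟩
        have h3 : v (f (x + y)) ≤ max (v (f x)) (v (f y)) := by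
          rw [map_add]; exact v.map_add _ _
        rcases le_max_iff.1 h3 with h | h
        · calc v (f (x + y)) ^ (n + k) ≤ v (f x) ^ (n + k) := pow_le_pow_left' h _
            _ ≤ v (f x) ^ n := pow_le_pow_right_of_le_one' (hv1 _) (by omega)
            _ ≤ _ := hn
        · calc v (f (x + y)) ^ (n + k) ≤ v (f y) ^ (n + k) := pow_le_pow_left' h _
            _ ≤ v (f y) ^ k := pow_le_pow_right_of_le_one' (hv1 _) (by omega)
            _ ≤ _ := hk
      zero_mem' := ⟨1, by simp⟩
      smul_mem' := by
        rintro c x ⟨n, hn⟩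
        refine ⟨n, le_trans (pow_le_pow_left' ?_ n) hn⟩
        rw [smul_eq_mul, map_mul, map_mul]
        exact mul_le_of_le_one_left' (hv1 _) }
  have hI : ∀ j, (I j).IsPrime := fun j => by
    constructor
    · rw [Ideal.ne_top_iff_one]
      rintro ⟨n, hn⟩
      rw [map_one, map_one, one_pow] at hn
      exact absurd (ha1 j) (not_lt.2 hn)
    · rintro x y ⟨n, hn⟩
      rw [map_mul, map_mul] at hn
      rcases le_total (v (f x)) (v (f y)) with h | h
      · refine Or.inl ⟨n + n, le_trans ?_ hn⟩
        rw [pow_add, mul_pow]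
        exact mul_le_mul_right (pow_le_pow_left' h n) _
      · refine Or.inr ⟨n + n, le_trans ?_ hn⟩
        rw [pow_add, mul_pow]
        exact mul_le_mul_left (pow_le_pow_left' h n) _
  let q : Fin m → PrimeSpectrum D := fun j => ⟨I j, hI j⟩
  have haI : ∀ j, a j ∈ I j := fun j => ⟨1, by rw [pow_one]⟩
  have hmono : StrictMono q := by
    intro l j hlj
    have : I l ≤ I j := by
      rintro x ⟨n, hn⟩
      refine ⟨n, hn.trans ?_⟩
      have := ha2 l j hlj 1
      rw [pow_one] at this
      exact this.le
    refine lt_of_le_of_ne this fun heq => ?_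
    have h4 : a j ∈ I l := by
      have h5 : I l = I j := congrArg PrimeSpectrum.asIdeal heq
      rw [h5]; exact haI j
    obtain ⟨n, hn⟩ := h4
    exact absurd (ha2 l j hlj n) (not_lt.2 hn)
  let z : PrimeSpectrum D := ⟨⊥, Ideal.isPrime_bot⟩
  have hz : ∀ j, z < q j := by
    intro j
    refine lt_of_le_of_ne (show (⊥ : Ideal D) ≤ I j from bot_le) fun heq => ?_
    have h5 : ⊥ = I j := congrArg PrimeSpectrum.asIdeal heq
    have h4 : a j ∈ (⊥ : Ideal D) := by
      rw [h5]; exact haI j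
    rw [Ideal.mem_bot] at h4
    exact h0 j (by simp only [h4, map_zero])
  let L : LTSeries (PrimeSpectrum D) :=
    ⟨m, Fin.cons z q, by
      intro i
      cases m with
      | zero => exact i.elim0
      | succ m =>
        refine Fin.cases ?_ (fun i => ?_) i
        · exact hz 0
        · exact hmono (Fin.castSucc_lt_succ)⟩
  exact le_iSup (fun p : LTSeries (PrimeSpectrum D) => ((p.length : ℕ) : WithBot ℕ∞)) L

theorem VChain.algebraicIndependent (E : Subfield F) (U : ValuationSubring F)
    (hE : ∀ e ∈ E, e ∈ U) {m : ℕ} (a : Fin m → F) (ha : VChain (U : Set F) a) :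
    AlgebraicIndependent E a := by
  obtain ⟨h0, h1, h2⟩ := ha
  set v := U.valuation with hv
  have ha1 : ∀ j, v (a j) < 1 := fun j => by
    have := h1 j
    rwa [SetLike.mem_coe, inv_mem_iff U _ (h0 j), not_le] at this
  have ha2 : ∀ l j, l < j → ∀ n : ℕ, v (a l) < v (a j) ^ n := fun l j hlj n => by
    have := h2 l j hlj n
    rwa [SetLike.mem_coe, mem_iff_le U _ _ (h0 l), not_le, map_pow] at this
  have hE1 : ∀ e : E, e ≠ 0 → v (e : F) = 1 := fun e he => by
    have he' : (e : F) ≠ 0 := by simpa using he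
    apply le_antisymm
    · exact (U.valuation_le_one_iff _).2 (hE _ e.2)
    · exact (inv_mem_iff U _ he').1 (hE _ (E.inv_mem e.2))
  have key : ∀ l (s : Finset (Fin m)), (∀ j ∈ s, l < j) → ∀ d : Fin m → ℕ,
      v (a l) < ∏ j ∈ s, v (a j) ^ d j := by
    intro l s
    induction s using Finset.induction_on with
    | empty => intro _ d; simpa using ha1 l
    | insert i s his ih =>
      intro hs d
      rw [Finset.prod_insert his]
      have e1 := ih (fun j hj => hs j (Finset.mem_insert_of_mem hj)) (fun j => d j * 2)
      have e2 := ha2 l i (hs i (Finset.mem_insert_self _ _)) (d i * 2)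
      simp only [pow_mul] at e1 e2
      rw [Finset.prod_pow] at e1
      set y := ∏ j ∈ s, v (a j) ^ d j
      set x := v (a i) ^ d i
      rcases le_total x y with h | h
      · exact e2.trans_le (by rw [pow_two]; exact mul_le_mul_right h _)
      · exact e1.trans_le (by rw [pow_two]; exact mul_le_mul_left h _)
  have hne : ∀ j, v (a j) ≠ 0 := fun j => (Valuation.ne_zero_iff _).2 (h0 j)
  -- distinct monomials have distinct values
  have hlt : ∀ (d d' : Fin m →₀ ℕ) (l : Fin m), (∀ j < l, d j = d' j) → d' l < d l →
      ∏ j, v (a j) ^ d j < ∏ j, v (a j) ^ d' j := by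
    intro d d' l hl hdl
    have hsplit : ∀ e : Fin m →₀ ℕ, ∏ j, v (a j) ^ e j =
        (∏ j ∈ Finset.univ.filter (· < l), v (a j) ^ e j) *
          (v (a l) ^ e l * ∏ j ∈ Finset.univ.filter (l < ·), v (a j) ^ e j) := by
      intro e
      rw [← Finset.prod_insert (f := fun j => v (a j) ^ e j) (by simp), ← Finset.prod_filter_mul_prod_filter_not _ (· < l)]
      congr 2
      ext j
      simp [le_iff_eq_or_lt, eq_comm]
    rw [hsplit d, hsplit d']
    have e1 : (∏ j ∈ Finset.univ.filter (· < l), v (a j) ^ d j) =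
        ∏ j ∈ Finset.univ.filter (· < l), v (a j) ^ d' j := by
      refine Finset.prod_congr rfl fun j hj => ?_
      rw [hl j (by simpa using hj)]
    rw [e1]
    have e2 : (0 : U.ValueGroup) < ∏ j ∈ Finset.univ.filter (· < l), v (a j) ^ d' j :=
      zero_lt_iff.2 (Finset.prod_ne_zero_iff.2 fun j _ => pow_ne_zero _ (hne j))
    rw [mul_lt_mul_iff_right₀ e2]
    have e3 := key l (Finset.univ.filter (l < ·)) (by simp) d'
    calc v (a l) ^ d l * ∏ j ∈ Finset.univ.filter (l < ·), v (a j) ^ d j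
        ≤ v (a l) ^ d l * 1 := by
          refine mul_le_mul_right (Finset.prod_le_one' fun j _ => pow_le_one' (ha1 j).le _) _
      _ ≤ v (a l) ^ (d' l + 1) := by
          rw [mul_one]
          exact pow_le_pow_right_of_le_one' (ha1 l).le (by omega)
      _ < _ := by
          rw [pow_succ, mul_lt_mul_iff_right₀ (zero_lt_iff.2 (pow_ne_zero _ (hne l)))]
          exact e3
  have hinj : ∀ (d d' : Fin m →₀ ℕ), ∏ j, v (a j) ^ d j = ∏ j, v (a j) ^ d' j → d = d' := by
    intro d d' h
    by_contra hdd
    have hex : ∃ l, d l ≠ d' l := by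
      by_contra! hh
      exact hdd (Finsupp.ext hh)
    obtain ⟨l, hl, hmin⟩ := WellFounded.has_min (wellFounded_lt (α := Fin m)) {l | d l ≠ d' l} hex
    have hmin' : ∀ j < l, d j = d' j := fun j hj => by
      by_contra hh
      exact hmin j hh hj
    rcases lt_or_gt_of_ne hl with h3 | h3
    · exact absurd h (hlt d' d l (fun j hj => (hmin' j hj).symm) h3).ne'
    · exact absurd h (hlt d d' l hmin' h3).ne
  rw [algebraicIndependent_iff]
  intro p hp
  by_contra hp0
  have hsupp : p.support.Nonempty := by
    rwa [Finset.nonempty_iff_ne_empty, Ne, MvPolynomial.support_eq_empty]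
  have hterm : ∀ d ∈ p.support, v (((MvPolynomial.coeff d p : E) : F) * ∏ j, a j ^ d j) =
      ∏ j, v (a j) ^ d j := fun d hd => by
    rw [map_mul, hE1 _ (MvPolynomial.mem_support_iff.1 hd), one_mul, map_prod]
    simp
  obtain ⟨d, hd, hmax⟩ := p.support.exists_max_image (fun d => ∏ j, v (a j) ^ d j) hsupp
  have hsum : (MvPolynomial.aeval a p : F) =
      ∑ d ∈ p.support, ((MvPolynomial.coeff d p : E) : F) * ∏ j, a j ^ d j := by
    rw [MvPolynomial.aeval_eq_eval₂Hom, MvPolynomial.coe_eval₂Hom, MvPolynomial.eval₂_eq']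
    rfl
  rw [hsum, ← Finset.add_sum_erase _ _ hd] at hp
  have hrest : v (∑ d ∈ p.support.erase d, ((MvPolynomial.coeff d p : E) : F) * ∏ j, a j ^ d j) <
      ∏ j, v (a j) ^ d j := by
    apply Valuation.map_sum_lt
    · exact Finset.prod_ne_zero_iff.2 fun j _ => pow_ne_zero _ (hne j)
    · intro d' hd'
      rw [Finset.mem_erase] at hd'
      rw [hterm d' hd'.2]
      exact lt_of_le_of_ne (hmax d' hd'.2) fun h => hd'.1 (hinj _ _ h)
  rw [eq_neg_of_add_eq_zero_right hp, Valuation.map_neg, hterm d hd] at hrest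
  exact lt_irrefl _ hrest

end EssJ

namespace EssJ

open Polynomial

variable {F : Type*} [Field F]

theorem exists_fracEquiv {R : Type*} [CommRing R] [IsDomain R] (f : R →+* F)
    (hf : Function.Injective f) (hfr : ∀ x : F, ∃ a b, b ≠ 0 ∧ x = f a / f b) :
    ∃ φ : FractionRing R ≃+* F, ∀ a, φ (algebraMap R (FractionRing R) a) = f a := by
  let _ := f.toAlgebra
  have hfa : ∀ a, algebraMap R F a = f a := fun a => rfl
  have : IsFractionRing R F := by
    refine (isLocalization_iff _ _).2 ⟨?_, ?_, ?_⟩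
    · intro y
      have : f y ≠ 0 := fun h => nonZeroDivisors.ne_zero y.2 (hf (by rw [h, map_zero]))
      exact isUnit_iff_ne_zero.2 this
    · intro z
      obtain ⟨a, b, hb, rfl⟩ := hfr z
      refine ⟨(a, ⟨b, mem_nonZeroDivisors_of_ne_zero hb⟩), ?_⟩
      have : f b ≠ 0 := fun h => hb (hf (by rw [h, map_zero]))
      simp only [hfa]
      field_simp
    · intro x y h
      exact ⟨1, by rw [hf h]⟩
  let e := FractionRing.algEquiv R F
  exact ⟨e.toRingEquiv, fun a => e.commutes a⟩

/-- The localization inside an arbitrary model of the quotient field. -/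
def LocIn {R : Type*} [CommRing R] (f : R →+* F) (p : Ideal R) : Set F :=
  {x | ∃ a s : R, s ∉ p ∧ x = f a / f s}

theorem isEssential_iff {R : Type*} [CommRing R] [IsDomain R] (f : R →+* F)
    (hf : Function.Injective f) (hfr : ∀ x : F, ∃ a b, b ≠ 0 ∧ x = f a / f b) :
    IsEssential R ↔ ∃ Δ : Set (Ideal R), (∀ p ∈ Δ, p.IsPrime) ∧
      (∀ p ∈ Δ, ∀ x : F, x ∈ LocIn f p ∨ x⁻¹ ∈ LocIn f p) ∧
      ∀ x : F, (∀ p ∈ Δ, x ∈ LocIn f p) → ∃ a, f a = x := by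
  obtain ⟨φ, hφ⟩ := exists_fracEquiv f hf hfr
  have hloc : ∀ p x, x ∈ locSet R p ↔ φ x ∈ LocIn f p := by
    intro p x
    constructor
    · rintro ⟨a, s, hs, rfl⟩
      exact ⟨a, s, hs, by rw [map_div₀, hφ, hφ]⟩
    · rintro ⟨a, s, hs, h⟩
      exact ⟨a, s, hs, φ.injective (by rw [map_div₀, hφ, hφ, h])⟩
  unfold IsEssential
  refine exists_congr fun Δ => and_congr_right fun hΔ => and_congr ?_ ?_
  · refine forall₂_congr fun p _ => ?_
    simp only [hloc, map_inv₀]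
    constructor
    · intro h x
      simpa using h (φ.symm x)
    · intro h x
      exact h _
  · constructor
    · intro h x hx
      have : φ.symm x ∈ ⋂ p ∈ Δ, locSet R p := by
        simp only [Set.mem_iInter, hloc, RingEquiv.apply_symm_apply]
        exact hx
      rw [← h] at this
      obtain ⟨a, ha⟩ := this
      exact ⟨a, by rw [← hφ, ha, RingEquiv.apply_symm_apply]⟩
    · intro h
      ext x
      simp only [Set.mem_iInter, hloc]
      constructor
      · rintro ⟨a, rfl⟩ p hp
        refine ⟨a, 1, (Ideal.ne_top_iff_one _).1 (hΔ p hp).ne_top, ?_⟩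
        rw [hφ, map_one, div_one]
      · intro hx
        obtain ⟨a, ha⟩ := h _ hx
        exact ⟨a, φ.injective (by rw [hφ, ha])⟩

theorem ringKrullDim_comap {K : Type*} [Field K] (φ : K ≃+* F) (V : ValuationSubring F) :
    ringKrullDim (V.comap φ.toRingHom) = ringKrullDim V := by
  let g : V.comap φ.toRingHom →+* V :=
    { toFun := fun x => ⟨φ x.1, x.2⟩
      map_one' := Subtype.ext (map_one φ)
      map_zero' := Subtype.ext (map_zero φ)
      map_mul' := fun x y => Subtype.ext (map_mul φ x.1 y.1)
      map_add' := fun x y => Subtype.ext (map_add φ x.1 y.1) }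
  have hg : Function.Bijective g := by
    constructor
    · intro x y h
      exact Subtype.ext (φ.injective (congrArg Subtype.val h))
    · intro y
      refine ⟨⟨φ.symm y.1, ?_⟩, Subtype.ext (φ.apply_symm_apply y.1)⟩
      change φ (φ.symm y.1) ∈ V
      rw [φ.apply_symm_apply]
      exact y.2
  exact ringKrullDim_eq_of_ringEquiv (RingEquiv.ofBijective g hg)

theorem valuativeDim_le {R : Type*} [CommRing R] [IsDomain R] (f : R →+* F)
    (hf : Function.Injective f) (hfr : ∀ x : F, ∃ a b, b ≠ 0 ∧ x = f a / f b) (r : WithBot ℕ∞)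
    (h : ∀ V : ValuationSubring F, (∀ a, f a ∈ V) → ringKrullDim V ≤ r) : valuativeDim R ≤ r := by
  obtain ⟨φ, hφ⟩ := exists_fracEquiv f hf hfr
  refine iSup_le fun W => ?_
  rw [← ringKrullDim_comap φ.symm]
  refine h _ fun a => ?_
  change φ.symm (f a) ∈ W.1
  rw [← hφ, RingEquiv.symm_apply_apply]
  exact W.2 ⟨a, rfl⟩

theorem le_valuativeDim {R : Type*} [CommRing R] [IsDomain R] (f : R →+* F)
    (hf : Function.Injective f) (hfr : ∀ x : F, ∃ a b, b ≠ 0 ∧ x = f a / f b)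
    (V : ValuationSubring F) (hV : ∀ a, f a ∈ V) : ringKrullDim V ≤ valuativeDim R := by
  obtain ⟨φ, hφ⟩ := exists_fracEquiv f hf hfr
  rw [← ringKrullDim_comap φ]
  refine le_iSup (fun W : {W : ValuationSubring (FractionRing R) //
      Set.range (algebraMap R (FractionRing R)) ⊆ (W : Set (FractionRing R))} =>
    ringKrullDim (W : ValuationSubring (FractionRing R))) ⟨V.comap φ.toRingHom, ?_⟩
  rintro _ ⟨a, rfl⟩
  change φ _ ∈ V
  rw [hφ]
  exact hV a

end EssJ

namespace EssJ

open Polynomial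

theorem unit_add {F : Type*} [Field F] (V : ValuationSubring F) {a b : F} (ha : a ≠ 0)
    (ha' : a⁻¹ ∈ V) (hb : b⁻¹ ∉ V) : a + b ≠ 0 ∧ (a + b)⁻¹ ∈ V := by
  have hb0 : b ≠ 0 := by
    rintro rfl
    exact hb (by simp)
  have h1 : 1 ≤ V.valuation a := (inv_mem_iff V a ha).1 ha'
  have h2 : V.valuation b < 1 := by
    rwa [inv_mem_iff V b hb0, not_le] at hb
  have h3 : V.valuation (a + b) = V.valuation a :=
    Valuation.map_add_eq_of_lt_left _ (h2.trans_le h1)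
  have h4 : a + b ≠ 0 := by
    intro h
    rw [h, map_zero] at h3
    rw [← h3] at h1
    exact absurd h1 (by simp)
  exact ⟨h4, (inv_mem_iff V _ h4).2 (by rw [h3]; exact h1)⟩

theorem mem_of_inv_not_mem {F : Type*} [Field F] (V : ValuationSubring F) {a : F}
    (h : a⁻¹ ∉ V) : a ∈ V := (V.mem_or_inv_mem a).resolve_right h

theorem VChain.congr {F : Type*} [Field F] {V : ValuationSubring F} {m : ℕ} {a b : Fin m → F}
    (ha : VChain (V : Set F) a) (h : ∀ j, b j ≠ 0 ∧ a j / b j ∈ V ∧ b j / a j ∈ V) :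
    VChain (V : Set F) b := by
  refine ⟨fun j => (h j).1, fun j hj => ha.2.1 j ?_, fun l j hlj n hn => ha.2.2 l j hlj n ?_⟩
  · have := V.mul_mem _ _ (h j).2.2 hj
    have hb := (h j).1
    have ha := ha.1 j
    have e : b j / a j * (b j)⁻¹ = (a j)⁻¹ := by field_simp
    rwa [e] at this
  · have h1 := V.mul_mem _ _ (pow_mem (h j).2.1 n) (V.mul_mem _ _ hn (h l).2.2)
    have hb := (h j).1
    have hbl := (h l).1
    have hal := ha.1 l
    have e : (a j / b j) ^ n * (b j ^ n / b l * (b l / a l)) = a j ^ n / a l := by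
      rw [div_mul_div_cancel₀ hbl, div_pow, div_mul_div_cancel₀ (pow_ne_zero n hb)]
    rwa [e] at h1

/-- The data from which the counterexample is built. -/
structure Core (F : Type) [Field F] (r : ℕ) where
  E : Subfield F
  R : Subring F
  W : ValuationSubring F
  V : ℕ → ValuationSubring F
  B : ℕ → Subfield F
  x : ℕ → ℕ → F
  u : F
  t : F
  E_le : ∀ e ∈ E, e ∈ R
  R_le : ∀ h ∈ R, h ∈ W
  M_le : ∀ h, h⁻¹ ∉ W → h ∈ R
  R_loc : ∀ h ∈ R, h⁻¹ ∈ W → h⁻¹ ∈ R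
  u_mem : u ∈ W
  u_notMem : u ∉ R
  u_notMem' : u⁻¹ ∉ R
  t_inv : t⁻¹ ∉ W
  x_ne : ∀ i n, x i n ≠ 0
  x_mem : ∀ i n, x i n ∈ E
  B_le : ∀ m, ∀ b ∈ B m, b ∈ V m
  x_mem_B : ∀ i n m, i ≠ m → x i n ∈ B m
  cofin : ∀ h ∈ R, {j | h ∉ V j}.Finite
  inter : ∀ h, (∀ j, h ∈ V j) → h ∈ R
  val : ∀ i f, f ≠ 0 → ∃ n, f / x i n ∈ V i ∧ x i n / f ∈ V i
  bound : ∀ i m (a : Fin m → F), VChain (V i : Set F) a → m ≤ r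
  boundR : ∀ U : ValuationSubring F, (∀ h ∈ R, h ∈ U) →
    ∀ m (a : Fin m → F), VChain (U : Set F) a → m ≤ r
  chain : ∃ a : Fin r → F, VChain (V 0 : Set F) a

namespace Core

variable {F : Type} [Field F] {r : ℕ} (C : Core F r)

/-- The essential domain. -/
def D : Subring F := ⨅ i, (C.V i).toSubring

theorem mem_D {d : F} : d ∈ C.D ↔ ∀ i, d ∈ C.V i := by
  simp [D, Subring.mem_iInf]

theorem D_le {d : F} (h : d ∈ C.D) : d ∈ C.R := C.inter d (C.mem_D.1 h)

theorem x_unit {i m : ℕ} (n : ℕ) (h : i ≠ m) : C.x i n ∈ C.V m ∧ (C.x i n)⁻¹ ∈ C.V m :=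
  ⟨C.B_le m _ (C.x_mem_B i n m h), C.B_le m _ ((C.B m).inv_mem (C.x_mem_B i n m h))⟩

theorem x_mem_D {i n : ℕ} (h : C.x i n ∈ C.V i) : C.x i n ∈ C.D := by
  rw [mem_D]
  intro m
  by_cases hm : i = m
  · exact hm ▸ h
  · exact (C.x_unit n hm).1

theorem x_inv_mem_D {i n : ℕ} (h : (C.x i n)⁻¹ ∈ C.V i) : (C.x i n)⁻¹ ∈ C.D := by
  rw [mem_D]
  intro m
  by_cases hm : i = m
  · exact hm ▸ h
  · exact (C.x_unit n hm).2

/-- The multiplicative set used to clear denominators. -/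
def S (J : Set ℕ) : Submonoid F :=
  Submonoid.closure {y | ∃ j ∈ J, ∃ n, C.x j n ∈ C.V j ∧ y = C.x j n}

theorem clear_aux (J : Set ℕ) (A : Finset ℕ) : ∀ h : F, (∀ j ∈ A, j ∈ J) →
    (∀ j ∉ A, h ∈ C.V j) → ∃ s ∈ C.S J, s * h ∈ C.D := by
  induction A using Finset.induction_on with
  | empty =>
    intro h _ hh
    exact ⟨1, one_mem _, by rw [one_mul, mem_D]; exact fun j => hh j (by simp)⟩
  | insert b A hb ih =>
    intro h hJ hh
    by_cases hhb : h ∈ C.V b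
    · refine ih h (fun j hj => hJ j (Finset.mem_insert_of_mem hj)) fun j hj => ?_
      by_cases hjb : j = b
      · exact hjb ▸ hhb
      · exact hh j (by simp [hj, hjb])
    · have h0 : h ≠ 0 := by
        rintro rfl
        exact hhb (zero_mem _)
      have hinv : h⁻¹ ∈ C.V b := ((C.V b).mem_or_inv_mem h).resolve_left hhb
      obtain ⟨n, -, hn⟩ := C.val b h⁻¹ (inv_ne_zero h0)
      rw [div_inv_eq_mul] at hn
      have hxb : C.x b n ∈ C.V b := by
        have := (C.V b).mul_mem _ _ hn hinv
        rwa [mul_assoc, mul_inv_cancel₀ h0, mul_one] at this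
      obtain ⟨s, hs, hsD⟩ := ih (C.x b n * h) (fun j hj => hJ j (Finset.mem_insert_of_mem hj)) (by
        intro j hj
        by_cases hjb : j = b
        · exact hjb ▸ hn
        · exact (C.V j).mul_mem _ _ (C.x_unit n (Ne.symm hjb)).1 (hh j (by simp [hj, hjb])))
      refine ⟨s * C.x b n, mul_mem hs (Submonoid.subset_closure
        ⟨b, hJ b (Finset.mem_insert_self _ _), n, hxb, rfl⟩), ?_⟩
      rwa [mul_assoc]

theorem clear (J : Set ℕ) {h : F} (hR : h ∈ C.R) (hJ : ∀ j ∉ J, h ∈ C.V j) :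
    ∃ s ∈ C.S J, s * h ∈ C.D := by
  refine C.clear_aux J (C.cofin h hR).toFinset h (fun j hj => ?_) fun j hj => ?_
  · by_contra hjJ
    exact ((C.cofin h hR).mem_toFinset.1 hj) (hJ j hjJ)
  · by_contra hh
    exact hj ((C.cofin h hR).mem_toFinset.2 hh)

theorem S_prop (J : Set ℕ) {s : F} (hs : s ∈ C.S J) : s ∈ C.E ∧ s ≠ 0 ∧ s ∈ C.D := by
  induction hs using Submonoid.closure_induction with
  | mem y hy =>
    obtain ⟨j, _, n, hn, rfl⟩ := hy
    exact ⟨C.x_mem j n, C.x_ne j n, C.x_mem_D hn⟩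
  | one => exact ⟨one_mem _, one_ne_zero, one_mem _⟩
  | mul a b _ _ ha hb =>
    exact ⟨mul_mem ha.1 hb.1, mul_ne_zero ha.2.1 hb.2.1, mul_mem ha.2.2 hb.2.2⟩

theorem S_inv (J : Set ℕ) (U : ValuationSubring F)
    (hU : ∀ j ∈ J, ∀ n, C.x j n ∈ C.V j → (C.x j n)⁻¹ ∈ U) {s : F} (hs : s ∈ C.S J) :
    s⁻¹ ∈ U := by
  induction hs using Submonoid.closure_induction with
  | mem y hy =>
    obtain ⟨j, hj, n, hn, rfl⟩ := hy
    exact hU j hj n hn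
  | one => rw [inv_one]; exact one_mem _
  | mul a b _ _ ha hb => rw [mul_inv]; exact mul_mem ha hb

theorem t_ne : C.t ≠ 0 := by
  intro h
  exact C.t_inv (by rw [h, inv_zero]; exact zero_mem _)

theorem mulM {m w : F} (hm : m⁻¹ ∉ C.W) (hw : w ∈ C.W) : m * w ∈ C.R := by
  by_cases hw0 : w = 0
  · rw [hw0, mul_zero]; exact zero_mem _
  · refine C.M_le _ fun h => hm ?_
    have := C.W.mul_mem _ _ h hw
    rwa [mul_inv, mul_assoc, inv_mul_cancel₀ hw0, mul_one] at this

theorem fracR (v : F) (hv : v ≠ 0) : ∃ a ∈ C.R, ∃ b ∈ C.R, b ≠ 0 ∧ v = a / b := by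
  have ht := C.t_ne
  rcases C.W.mem_or_inv_mem v with h | h
  · exact ⟨C.t * v, C.mulM C.t_inv h, C.t, C.M_le _ C.t_inv, ht, by field_simp⟩
  · exact ⟨C.t, C.M_le _ C.t_inv, C.t * v⁻¹, C.mulM C.t_inv h, mul_ne_zero ht (inv_ne_zero hv),
      by field_simp⟩

theorem loc (i : ℕ) {v : F} (hv : v ∈ C.V i) :
    ∃ a ∈ C.D, ∃ b ∈ C.D, b ≠ 0 ∧ b⁻¹ ∈ C.V i ∧ v = a / b := by
  by_cases hv0 : v = 0
  · exact ⟨0, zero_mem _, 1, one_mem _, one_ne_zero, by simp, by simp [hv0]⟩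
  obtain ⟨a, ha, b, hb, hb0, rfl⟩ := C.fracR v hv0
  obtain ⟨n, h1, h2⟩ := C.val i b hb0
  have hx := C.x_ne i n
  have hxR : (C.x i n)⁻¹ ∈ C.R := C.E_le _ (C.E.inv_mem (C.x_mem i n))
  have ha' : a / C.x i n ∈ C.V i := by
    have := (C.V i).mul_mem _ _ hv h1
    rwa [div_mul_div_cancel₀ hb0] at this
  have hU : ∀ j ∈ ({i}ᶜ : Set ℕ), ∀ n, C.x j n ∈ C.V j → (C.x j n)⁻¹ ∈ C.V i :=
    fun j hj n _ => (C.x_unit n hj).2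
  obtain ⟨s, hs, hsa⟩ := C.clear {i}ᶜ (h := a / C.x i n)
    (by rw [div_eq_mul_inv]; exact mul_mem ha hxR) (by simpa using ha')
  obtain ⟨s', hs', hsb⟩ := C.clear {i}ᶜ (h := b / C.x i n)
    (by rw [div_eq_mul_inv]; exact mul_mem hb hxR) (by simpa using h1)
  have p1 := C.S_prop _ hs
  have p2 := C.S_prop _ hs'
  have q1 := C.S_inv _ _ hU hs
  have q2 := C.S_inv _ _ hU hs'
  have s0 := p1.2.1
  have s0' := p2.2.1
  refine ⟨s' * (s * (a / C.x i n)), mul_mem p2.2.2 hsa, s * (s' * (b / C.x i n)),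
    mul_mem p1.2.2 hsb, ?_, ?_, ?_⟩
  · exact mul_ne_zero s0 (mul_ne_zero s0' (div_ne_zero hb0 hx))
  · rw [mul_inv, mul_inv, inv_div]
    exact mul_mem q1 (mul_mem q2 h2)
  · field_simp

theorem dich (U : ValuationSubring F) (hU : ∀ d ∈ C.D, d ∈ U) :
    (∀ h ∈ C.R, h ∈ U) ∨ ∃ i, ∀ v ∈ C.V i, v ∈ U := by
  have cancel : ∀ s h : F, s ≠ 0 → s⁻¹ ∈ U → s * h ∈ U → h ∈ U := by
    intro s h hs h1 h2
    have := U.mul_mem _ _ h1 h2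
    rwa [inv_mul_cancel_left₀ hs] at this
  by_cases hall : ∀ j n, C.x j n ∈ C.V j → (C.x j n)⁻¹ ∈ U
  · left
    intro h hR
    obtain ⟨s, hs, hsD⟩ := C.clear Set.univ hR (by simp)
    exact cancel s h (C.S_prop _ hs).2.1 (C.S_inv _ U (fun j _ n => hall j n) hs) (hU _ hsD)
  · right
    push Not at hall
    obtain ⟨i, n, hxV, hxU⟩ := hall
    refine ⟨i, ?_⟩
    set x := C.x i n with hx
    have hx0 : x ≠ 0 := C.x_ne i n
    have hxD : x ∈ C.D := C.x_mem_D hxV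
    have hxV' : x⁻¹ ∉ C.V i := fun h => hxU (hU _ (C.x_inv_mem_D h))
    have hother : ∀ j ∈ ({i}ᶜ : Set ℕ), ∀ l, C.x j l ∈ C.V j → (C.x j l)⁻¹ ∈ U := by
      intro j hj l hl
      have hji : j ≠ i := hj
      by_cases hinv : (C.x j l)⁻¹ ∈ C.V j
      · exact hU _ (C.x_inv_mem_D hinv)
      · have hi := unit_add (C.V i) (C.x_ne j l) (C.x_unit l hji).2 hxV'
        have hyD : (C.x j l + x)⁻¹ ∈ C.D := by
          rw [mem_D]
          intro m
          by_cases hmi : m = i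
          · rw [hmi]; exact hi.2
          · by_cases hmj : m = j
            · rw [hmj, add_comm]
              exact (unit_add (C.V j) hx0 (C.x_unit n hji.symm).2 hinv).2
            · exact C.B_le m _ ((C.B m).inv_mem ((C.B m).add_mem
                (C.x_mem_B j l m (Ne.symm hmj)) (C.x_mem_B i n m (Ne.symm hmi))))
        have := (unit_add U hi.1 (hU _ hyD) (b := -x) (by rwa [inv_neg, neg_mem_iff])).2
        rwa [add_neg_cancel_right] at this
    have hRV : ∀ h ∈ C.R, h ∈ C.V i → h ∈ U := by
      intro h hR hV
      obtain ⟨s, hs, hsD⟩ := C.clear {i}ᶜ hR (by simpa using hV)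
      exact cancel s h (C.S_prop _ hs).2.1 (C.S_inv _ U hother hs) (hU _ hsD)
    intro v hv
    obtain ⟨a, ha, b, hb, hb0, hbV, rfl⟩ := C.loc i hv
    have hpow : ∀ k : ℕ, k ≠ 0 → ∀ V' : ValuationSubring F, x⁻¹ ∉ V' → (x ^ k)⁻¹ ∉ V' := by
      intro k hk V' h1 h2
      rw [inv_mem_iff V' _ hx0, not_le] at h1
      rw [inv_mem_iff V' _ (pow_ne_zero _ hx0), map_pow] at h2
      exact absurd (pow_lt_one₀ zero_le h1 hk) (not_lt.2 h2)
    have hk : ∀ k : ℕ, k ≠ 0 → (b + x ^ k)⁻¹ ∈ C.W → b⁻¹ ∈ U := by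
      intro k hk hW
      have h1 := unit_add (C.V i) hb0 hbV (hpow k hk _ hxV')
      have h2 : b + x ^ k ∈ C.R := C.D_le (add_mem hb (pow_mem hxD k))
      have h3 : (b + x ^ k)⁻¹ ∈ U := hRV _ (C.R_loc _ h2 hW) h1.2
      have := (unit_add U h1.1 h3 (b := -x ^ k)
        (by rw [inv_neg, neg_mem_iff]; exact hpow k hk _ hxU)).2
      rwa [add_neg_cancel_right] at this
    have hbU : b⁻¹ ∈ U := by
      by_cases h1 : (b + x ^ 1)⁻¹ ∈ C.W
      · exact hk 1 one_ne_zero h1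
      · apply hk 2 two_ne_zero
        have hxE : x ∈ C.E := C.x_mem i n
        have hx1 : x ^ 2 - x ^ 1 ≠ 0 := by
          intro h
          have : x * (x - 1) = 0 := by rw [← h]; ring
          rcases mul_eq_zero.1 this with h | h
          · exact hx0 h
          · rw [sub_eq_zero.1 h] at hxU
            exact hxU (by simp)
        have := (unit_add C.W hx1 (C.R_le _ (C.E_le _ (C.E.inv_mem
          (C.E.sub_mem (pow_mem hxE 2) (pow_mem hxE 1))))) h1).2
        have e : x ^ 2 - x ^ 1 + (b + x ^ 1) = b + x ^ 2 := by ring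
        rwa [e] at this
    rw [div_eq_mul_inv]
    exact mul_mem (hU _ ha) hbU

theorem boundU (U : ValuationSubring F) (hU : ∀ d ∈ C.D, d ∈ U) (m : ℕ) (a : Fin m → F)
    (ha : VChain (U : Set F) a) : m ≤ r := by
  rcases C.dich U hU with h | ⟨i, h⟩
  · exact C.boundR U h m a ha
  · exact C.bound i m a (ha.mono h)

theorem dimU (U : ValuationSubring F) (hU : ∀ d ∈ C.D, d ∈ U) : ringKrullDim U ≤ r := by
  refine rank_upper' U.subtype Subtype.val_injective r fun Q => ⟨U, ?_, ?_, C.boundU U hU⟩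
  · intro v hv y _
    refine ⟨1, (Ideal.ne_top_iff_one _).1 Q.isPrime.ne_top, ⟨v, hv⟩ * y, ?_⟩
    simp
  · intro y hy hy0 hinv
    refine Q.isPrime.ne_top ((Ideal.eq_top_iff_one _).2 ?_)
    have : (1 : U) = ⟨(y : F)⁻¹, hinv⟩ * y := by
      apply Subtype.ext
      have : (y : F) ≠ 0 := fun h => hy0 (Subtype.ext h)
      exact (inv_mul_cancel₀ this).symm
    rw [this]
    exact Ideal.mul_mem_left _ _ hy

theorem dimD_le : ringKrullDim C.D ≤ r := by
  refine rank_upper' C.D.subtype Subtype.val_injective r fun Q => ?_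
  have := Q.isPrime
  obtain ⟨U, hU⟩ := exists_dominating C.D.subtype Subtype.val_injective
    (Ideal.Quotient.mk Q.asIdeal)
  simp only [Ideal.Quotient.eq_zero_iff_mem, Subring.coe_subtype, ne_eq] at hU
  have hDU : ∀ d ∈ C.D, d ∈ U := fun d hd => (hU ⟨d, hd⟩).1
  have hQ : ∀ y ∈ Q.asIdeal, y ≠ 0 → (y : F)⁻¹ ∉ U := fun y hy hy0 =>
    ((hU y).2.1 hy).resolve_left fun h => hy0 (Subtype.ext h)
  have hQ' : ∀ y : C.D, (y : F) ≠ 0 → (y : F)⁻¹ ∈ U → y ∉ Q.asIdeal := fun y hy0 hy h =>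
    hQ y h (fun h => hy0 (by rw [h]; rfl)) hy
  rcases C.dich U hDU with h | ⟨i, h⟩
  · have hW : ∀ y ∈ Q.asIdeal, y ≠ 0 → (y : F)⁻¹ ∉ C.W := fun y hy hy0 hW =>
      hQ y hy hy0 (h _ (C.R_loc _ (C.D_le y.2) hW))
    refine ⟨C.W, ?_, hW, C.boundR _ C.R_le⟩
    intro v hv y hy
    by_cases hy0 : y = 0
    · exact ⟨1, (Ideal.ne_top_iff_one _).1 Q.isPrime.ne_top, 0, by simp [hy0]⟩
    · obtain ⟨s, hs, hsD⟩ := C.clear Set.univ (C.mulM (hW y hy hy0) hv) (by simp)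
      obtain ⟨p1, p2, p3⟩ := C.S_prop _ hs
      refine ⟨⟨s, p3⟩, hQ' _ p2 (h _ (C.E_le _ (C.E.inv_mem p1))), ⟨_, hsD⟩, ?_⟩
      simp only [Subring.coe_subtype]
      ring
  · refine ⟨C.V i, ?_, fun y hy hy0 hV => hQ y hy hy0 (h _ hV), C.bound i⟩
    intro v hv y hy
    obtain ⟨a, ha, b, hb, hb0, hbV, rfl⟩ := C.loc i hv
    refine ⟨⟨b, hb⟩, hQ' _ hb0 (h _ hbV), ⟨a, ha⟩ * y, ?_⟩
    simp only [Subring.coe_subtype, Subring.coe_mul]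
    field_simp

theorem fracD (v : F) : ∃ a b : C.D, b ≠ 0 ∧ v = C.D.subtype a / C.D.subtype b := by
  rcases (C.V 0).mem_or_inv_mem v with h | h
  · obtain ⟨a, ha, b, hb, hb0, -, rfl⟩ := C.loc 0 h
    exact ⟨⟨a, ha⟩, ⟨b, hb⟩, fun h => hb0 (congrArg Subtype.val h), rfl⟩
  · by_cases hv : v = 0
    · exact ⟨0, 1, one_ne_zero, by simp [hv]⟩
    obtain ⟨a, ha, b, hb, hb0, -, he⟩ := C.loc 0 h
    have ha0 : a ≠ 0 := by
      rintro rfl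
      rw [zero_div] at he
      exact hv (inv_eq_zero.1 he)
    refine ⟨⟨b, hb⟩, ⟨a, ha⟩, fun h => ha0 (congrArg Subtype.val h), ?_⟩
    simp only [Subring.coe_subtype]
    rw [← inv_inv v, he, inv_div]

theorem exists_chain : ∃ n : Fin r → ℕ, (∀ j, C.x 0 (n j) ∈ C.D) ∧
    VChain (C.V 0 : Set F) (fun j => C.x 0 (n j)) := by
  obtain ⟨a, ha⟩ := C.chain
  choose n h1 h2 using fun j => C.val 0 (a j) (ha.1 j)
  have hc := ha.congr (b := fun j => C.x 0 (n j)) fun j => ⟨C.x_ne _ _, h1 j, h2 j⟩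
  exact ⟨n, fun j => C.x_mem_D (mem_of_inv_not_mem _ (hc.2.1 j)), hc⟩

theorem dimD : ringKrullDim C.D = r := by
  refine le_antisymm C.dimD_le ?_
  obtain ⟨n, hn, hc⟩ := C.exists_chain
  exact rank_lower C.D.subtype (C.V 0) (fun d => C.mem_D.1 d.2 0) r (fun j => ⟨_, hn j⟩) hc

theorem dimvD : valuativeDim C.D = r := by
  refine le_antisymm (valuativeDim_le C.D.subtype Subtype.val_injective C.fracD _
    fun U hU => C.dimU U fun d hd => hU ⟨d, hd⟩) ?_
  refine le_trans ?_ (le_valuativeDim C.D.subtype Subtype.val_injective C.fracD (C.V 0)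
    fun d => C.mem_D.1 d.2 0)
  obtain ⟨n, hn, hc⟩ := C.exists_chain
  exact rank_lower (C.V 0).subtype (C.V 0) (fun d => d.2) r (fun j => ⟨_, C.mem_D.1 (hn j) 0⟩) hc

/-- The center of a valuation ring on `D`. -/
def center (U : ValuationSubring F) (hU : ∀ d ∈ C.D, d ∈ U) : Ideal C.D :=
  (IsLocalRing.maximalIdeal U).comap (Subring.inclusion (S := C.D) (T := U.toSubring) hU)

theorem center_prime (U : ValuationSubring F) (hU : ∀ d ∈ C.D, d ∈ U) :
    (C.center U hU).IsPrime := Ideal.comap_isPrime _ _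

theorem mem_center (U : ValuationSubring F) (hU : ∀ d ∈ C.D, d ∈ U) (d : C.D) :
    d ∈ C.center U hU ↔ ((d : F) = 0 ∨ (d : F)⁻¹ ∉ U) := by
  have : d ∈ C.center U hU ↔ U.valuation (d : F) < 1 :=
    U.valuation_lt_one_iff ⟨(d : F), hU _ d.2⟩
  rw [this]
  by_cases h0 : (d : F) = 0
  · simp [h0]
  · rw [inv_mem_iff U _ h0, not_le]
    simp [h0]

theorem essential : IsEssential C.D := by
  have hV : ∀ i, ∀ d ∈ C.D, d ∈ C.V i := fun i d hd => C.mem_D.1 hd i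
  rw [isEssential_iff C.D.subtype Subtype.val_injective C.fracD]
  have key : ∀ i v, v ∈ C.V i ↔ v ∈ LocIn C.D.subtype (C.center (C.V i) (hV i)) := by
    intro i v
    constructor
    · intro hv
      obtain ⟨a, ha, b, hb, hb0, hbV, rfl⟩ := C.loc i hv
      refine ⟨⟨a, ha⟩, ⟨b, hb⟩, ?_, rfl⟩
      rw [mem_center]
      simp [hb0, hbV]
    · rintro ⟨a, s, hs, rfl⟩
      rw [mem_center, not_or, not_not] at hs
      rw [div_eq_mul_inv]
      exact mul_mem (hV i _ a.2) hs.2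
  refine ⟨Set.range fun i => C.center (C.V i) (hV i), ?_, ?_, ?_⟩
  · rintro _ ⟨i, rfl⟩
    exact C.center_prime _ _
  · rintro _ ⟨i, rfl⟩ x
    rw [← key, ← key]
    exact (C.V i).mem_or_inv_mem x
  · intro x hx
    refine ⟨⟨x, C.mem_D.2 fun i => ?_⟩, rfl⟩
    rw [key]
    exact hx _ ⟨i, rfl⟩

theorem not_essential : ∃ (q : Ideal C.D) (hq : q.IsPrime),
        haveI := hq
        ¬ IsEssential (Localization.AtPrime q) := by
  have hDW : ∀ d ∈ C.D, d ∈ C.W := fun d hd => C.R_le _ (C.D_le hd)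
  have hq := C.center_prime C.W hDW
  refine ⟨C.center C.W hDW, hq, ?_⟩
  set q := C.center C.W hDW with hqdef
  have hu : ∀ y : q.primeCompl, IsUnit (C.D.subtype y) := by
    intro y
    have := y.2
    rw [Ideal.mem_primeCompl_iff, mem_center, not_or] at this
    exact isUnit_iff_ne_zero.2 this.1
  let f : Localization.AtPrime q →+* F := IsLocalization.lift (M := q.primeCompl) hu
  have hfm : ∀ (a : C.D) (s : q.primeCompl), f (IsLocalization.mk' _ a s) = (a : F) / (s : C.D) := by
    intro a s
    have hs0 : ((s : C.D) : F) ≠ 0 := (hu s).ne_zero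
    rw [eq_div_iff hs0, mul_comm]
    exact ((IsLocalization.lift_mk'_spec (g := C.D.subtype) (hg := hu) _ _ _).1 rfl).symm
  have hfi : Function.Injective f := by
    rw [injective_iff_map_eq_zero]
    intro z hz
    obtain ⟨a, s, rfl⟩ := IsLocalization.exists_mk'_eq q.primeCompl z
    rw [hfm, div_eq_zero_iff] at hz
    have ha : a = 0 := Subtype.ext (hz.resolve_right (hu s).ne_zero)
    rw [ha, IsLocalization.mk'_zero]
  have hfR : ∀ z, f z ∈ C.R := by
    intro z
    obtain ⟨a, s, rfl⟩ := IsLocalization.exists_mk'_eq q.primeCompl z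
    have := s.2
    rw [Ideal.mem_primeCompl_iff, mem_center, not_or, not_not] at this
    rw [hfm, div_eq_mul_inv]
    exact mul_mem (C.D_le a.2) (C.R_loc _ (C.D_le (s : C.D).2) this.2)
  have hfR' : ∀ h ∈ C.R, ∃ z, f z = h := by
    intro h hR
    obtain ⟨s, hs, hsD⟩ := C.clear Set.univ hR (by simp)
    obtain ⟨p1, p2, p3⟩ := C.S_prop _ hs
    have hsq : (⟨s, p3⟩ : C.D) ∈ q.primeCompl := by
      rw [Ideal.mem_primeCompl_iff, mem_center, not_or, not_not]
      exact ⟨p2, C.R_le _ (C.E_le _ (C.E.inv_mem p1))⟩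
    refine ⟨IsLocalization.mk' _ (⟨_, hsD⟩ : C.D) ⟨_, hsq⟩, ?_⟩
    rw [hfm]
    exact mul_div_cancel_left₀ _ p2
  have hfr : ∀ x : F, ∃ a b, b ≠ 0 ∧ x = f a / f b := by
    intro x
    obtain ⟨a, b, hb, rfl⟩ := C.fracD x
    obtain ⟨a', ha'⟩ := hfR' _ (C.D_le a.2)
    obtain ⟨b', hb'⟩ := hfR' _ (C.D_le b.2)
    refine ⟨a', b', ?_, by rw [ha', hb']; rfl⟩
    rintro rfl
    rw [map_zero] at hb'
    exact hb (Subtype.ext hb'.symm)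
  rw [isEssential_iff f hfi hfr]
  rintro ⟨Δ, h1, h2, h3⟩
  have hmem : ∀ p ∈ Δ, C.u ∈ LocIn f p := by
    intro p hp
    by_cases hM : ∃ z, z ∉ p ∧ (f z)⁻¹ ∉ C.W
    · obtain ⟨z, hz, hzW⟩ := hM
      obtain ⟨a, ha⟩ := hfR' _ (C.mulM hzW C.u_mem)
      have hz0 : f z ≠ 0 := fun h => hz (by
        rw [hfi (h.trans (map_zero f).symm)]; exact zero_mem _)
      refine ⟨a, z, hz, ?_⟩
      rw [ha]
      field_simp
    · push Not at hM
      have hsub : ∀ x ∈ LocIn f p, x ∈ C.R := by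
        rintro _ ⟨a, s, hs, rfl⟩
        rw [div_eq_mul_inv]
        exact mul_mem (hfR a) (C.R_loc _ (hfR s) (hM s hs))
      rcases h2 p hp C.u with h | h
      · exact absurd (hsub _ h) C.u_notMem
      · exact absurd (hsub _ h) C.u_notMem'
  obtain ⟨a, ha⟩ := h3 _ hmem
  exact C.u_notMem (ha ▸ hfR a)

theorem main {F : Type} [Field F] {r : ℕ} (C : Core F r) : ∃ (D : Type) (_ : CommRing D) (_ : IsDomain D),
      IsEssential D ∧
      ringKrullDim D = (r : WithBot ℕ∞) ∧
      valuativeDim D = (r : WithBot ℕ∞) ∧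
      ∃ (q : Ideal D) (hq : q.IsPrime),
        haveI := hq
        ¬ IsEssential (Localization.AtPrime q) :=
  ⟨C.D, inferInstance, inferInstance, C.essential, C.dimD, C.dimvD, C.not_essential⟩

end Core

end EssJ

namespace EssJ

open Polynomial

section Fields

variable {k F σ : Type*} [Field k] [Field F] [Algebra k F] (X : σ → F)

/-- The subfield generated by some of the variables. -/
def LF (k : Type*) {F σ : Type*} [Field k] [Field F] [Algebra k F] (X : σ → F) (A : Set σ) :
    Subfield F := (IntermediateField.adjoin k (X '' A)).toSubfield

theorem LF_mono {A B : Set σ} (h : A ⊆ B) : LF k X A ≤ LF k X B :=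
  fun _ hx => IntermediateField.adjoin.mono k _ _ (Set.image_mono h) hx

theorem mem_LF {A : Set σ} {s : σ} (h : s ∈ A) : X s ∈ LF k X A :=
  IntermediateField.subset_adjoin k _ ⟨s, h, rfl⟩

theorem LF_algInd (hX : AlgebraicIndependent k X) {ι : Type*} (e : ι → σ)
    (he : Function.Injective e) (A : Set σ) (hA : ∀ i, e i ∉ A) :
    AlgebraicIndependent (LF k X A) (fun i => X (e i)) := by
  have h1 : Disjoint A (Set.range e) := by
    rw [Set.disjoint_right]
    rintro _ ⟨i, rfl⟩
    exact hA i
  have h2 := IntermediateField.algebraicIndependent_adjoin_iff.2 (hX.adjoin_of_disjoint h1)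
  have h3 := h2.comp (fun i => (⟨e i, i, rfl⟩ : Set.range e))
    (fun i j h => he (congrArg Subtype.val h))
  exact h3

theorem LF_trans (hX : AlgebraicIndependent k X) (A : Set σ) {s : σ} (hs : s ∉ A) :
    Transcendental (LF k X A) (X s) :=
  IntermediateField.transcendental_adjoin_iff.2 (hX.transcendental_adjoin hs)

theorem LF_gen (hgen : IntermediateField.adjoin k (Set.range X) = ⊤) {ι : Type*} (e : ι → σ)
    (A : Set σ) (hA : ∀ s, s ∈ A ∨ ∃ i, e i = s) (f : F) :
    ∃ p q : MvPolynomial ι (LF k X A), f = MvPolynomial.aeval (fun i => X (e i)) p /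
      MvPolynomial.aeval (fun i => X (e i)) q := by
  rw [← IntermediateField.mem_adjoin_range_iff]
  have hf : f ∈ IntermediateField.adjoin k (Set.range X) := by rw [hgen]; trivial
  induction hf using IntermediateField.adjoin_induction with
  | mem y hy =>
    obtain ⟨s, rfl⟩ := hy
    rcases hA s with h | ⟨i, rfl⟩
    · exact IntermediateField.algebraMap_mem _ (⟨X s, mem_LF X h⟩ : LF k X A)
    · exact IntermediateField.subset_adjoin _ _ ⟨i, rfl⟩
  | algebraMap c =>
    exact IntermediateField.algebraMap_mem _ (⟨algebraMap k F c,
      IntermediateField.algebraMap_mem _ c⟩ : LF k X A)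
  | add a b _ _ ha hb => exact add_mem ha hb
  | inv a _ ha => exact inv_mem ha
  | mul a b _ _ ha hb => exact mul_mem ha hb

theorem LF_finite (hgen : IntermediateField.adjoin k (Set.range X) = ⊤) (f : F) :
    ∃ A : Set σ, A.Finite ∧ f ∈ LF k X A := by
  have hf : f ∈ IntermediateField.adjoin k (Set.range X) := by rw [hgen]; trivial
  obtain ⟨T, hT, hfT⟩ := IntermediateField.exists_finset_of_mem_adjoin hf
  rw [← Set.image_univ] at hT
  obtain ⟨A, -, hA, hAT⟩ := (Set.exists_subset_image_finite_and
    (p := fun T => f ∈ IntermediateField.adjoin k T)).1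
    ⟨(T : Set F), hT, T.finite_toSet, hfT⟩
  exact ⟨A, hA, hAT⟩

theorem trdeg_bound {F : Type} [Field F] (E : Subfield F) {r : ℕ} (y : Fin r → F)
    (hy : ∀ f : F, ∃ p q : MvPolynomial (Fin r) E, f = MvPolynomial.aeval y p /
      MvPolynomial.aeval y q) {m : ℕ} (a : Fin m → F) (ha : AlgebraicIndependent E a) : m ≤ r := by
  have halg : Algebra.IsAlgebraic (Algebra.adjoin E (Set.range y)) F := by
    constructor
    intro f
    obtain ⟨p, q, rfl⟩ := hy f
    have hmem : ∀ p : MvPolynomial (Fin r) E, MvPolynomial.aeval y p ∈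
        Algebra.adjoin E (Set.range y) := fun p => by
      rw [Algebra.adjoin_range_eq_range_aeval]
      exact ⟨p, rfl⟩
    have h := fun p => isAlgebraic_algebraMap (A := F)
      (⟨_, hmem p⟩ : Algebra.adjoin E (Set.range y))
    rw [div_eq_mul_inv]
    exact (h p).mul (h q).inv
  have h1 := Algebra.IsAlgebraic.trdeg_le_cardinalMk E (Set.range y) (A := F)
  have h2 := (ha.cardinalMk_le_trdeg.trans h1).trans Cardinal.mk_range_le
  simpa using h2

end Fields

end EssJ

namespace EssJ

open Polynomial

/-- Composite of a valuation ring with a valuation ring of its residue field. -/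
theorem exists_composite {F : Type*} [Field F] (W : ValuationSubring F)
    (U' : ValuationSubring (IsLocalRing.ResidueField W)) :
    ∃ U : ValuationSubring F, ∀ x, x ∈ U ↔ ∃ h : x ∈ W, IsLocalRing.residue W ⟨x, h⟩ ∈ U' := by
  have hmem : ∀ x, x ∈ (U'.toSubring.comap (IsLocalRing.residue W)).map W.subtype ↔
      ∃ h : x ∈ W, IsLocalRing.residue W ⟨x, h⟩ ∈ U' := by
    intro x
    rw [Subring.mem_map]
    constructor
    · rintro ⟨w, hw, rfl⟩
      exact ⟨w.2, hw⟩
    · rintro ⟨h, hx⟩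
      exact ⟨⟨x, h⟩, hx, rfl⟩
  refine ⟨{ (U'.toSubring.comap (IsLocalRing.residue W)).map W.subtype with
    mem_or_inv_mem' := ?_ }, hmem⟩
  have hh : ∀ x, x ∈ W → x ∈ (U'.toSubring.comap (IsLocalRing.residue W)).map W.subtype ∨
      x⁻¹ ∈ (U'.toSubring.comap (IsLocalRing.residue W)).map W.subtype := by
    intro x hx
    rw [hmem, hmem]
    by_cases hinv : x⁻¹ ∈ W
    · by_cases hx0 : x = 0
      · left
        refine ⟨hx, ?_⟩
        subst hx0
        have : (⟨0, hx⟩ : W) = 0 := rfl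
        rw [this, map_zero]
        exact zero_mem _
      · have e : IsLocalRing.residue W ⟨x⁻¹, hinv⟩ = (IsLocalRing.residue W ⟨x, hx⟩)⁻¹ := by
          apply eq_inv_of_mul_eq_one_left
          rw [← map_mul, ← map_one (IsLocalRing.residue W)]
          congr 1
          exact Subtype.ext (inv_mul_cancel₀ hx0)
        rcases U'.mem_or_inv_mem (IsLocalRing.residue W ⟨x, hx⟩) with h | h
        · exact Or.inl ⟨hx, h⟩
        · exact Or.inr ⟨hinv, e ▸ h⟩
    · left
      refine ⟨hx, ?_⟩
      have : IsLocalRing.residue W ⟨x, hx⟩ = 0 := by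
        rw [IsLocalRing.residue_eq_zero_iff]
        intro hu
        apply hinv
        obtain ⟨y, hy⟩ := hu.exists_right_inv
        have hy' : x * (y : F) = 1 := congrArg Subtype.val hy
        rw [← eq_inv_of_mul_eq_one_right hy']
        exact y.2
      rw [this]
      exact zero_mem _
  intro x
  rcases W.mem_or_inv_mem x with h | h
  · exact hh x h
  · have := hh _ h
    rw [inv_inv] at this
    exact this.symm

theorem exists_R {F : Type*} [Field F] (E : Subfield F) (W : ValuationSubring F)
    (hEW : ∀ e ∈ E, e ∈ W) : ∃ R : Subring F, (∀ e ∈ E, e ∈ R) ∧ (∀ h ∈ R, h ∈ W) ∧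
      (∀ h, h⁻¹ ∉ W → h ∈ R) ∧ (∀ h ∈ R, h⁻¹ ∈ W → h⁻¹ ∈ R) ∧
      (∀ f, f ∉ R → ∃ U : ValuationSubring F, (∀ h ∈ R, h ∈ U) ∧ f ∉ U) ∧
      ∀ K : Subfield F, E ≤ K → (∀ e ∈ K, e ∈ W) → ∀ u ∈ K, Transcendental E u → u ∉ R := by
  let j : E →+* W :=
    { toFun := fun e => ⟨e, hEW _ e.2⟩
      map_one' := rfl
      map_zero' := rfl
      map_mul' := fun _ _ => rfl
      map_add' := fun _ _ => rfl }
  let π := IsLocalRing.residue W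
  let _ : Algebra E (IsLocalRing.ResidueField W) := (π.comp j).toAlgebra
  let A := integralClosure E (IsLocalRing.ResidueField W)
  let R := (A.toSubring.comap π).map W.subtype
  have hmem : ∀ x, x ∈ R ↔ ∃ h : x ∈ W, IsIntegral E (π ⟨x, h⟩) := by
    intro x
    rw [Subring.mem_map]
    constructor
    · rintro ⟨w, hw, rfl⟩
      exact ⟨w.2, hw⟩
    · rintro ⟨h, hx⟩
      exact ⟨⟨x, h⟩, hx, rfl⟩
  refine ⟨R, ?_, ?_, ?_, ?_, ?_, ?_⟩
  · intro e he
    rw [hmem]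
    exact ⟨hEW e he, isIntegral_algebraMap (x := (⟨e, he⟩ : E))⟩
  · intro h hh
    exact ((hmem h).1 hh).1
  · intro h hh
    rw [hmem]
    refine ⟨mem_of_inv_not_mem W hh, ?_⟩
    have : π ⟨h, mem_of_inv_not_mem W hh⟩ = 0 := by
      rw [IsLocalRing.residue_eq_zero_iff]
      intro hu
      apply hh
      obtain ⟨y, hy⟩ := hu.exists_right_inv
      have hy' : h * (y : F) = 1 := congrArg Subtype.val hy
      rw [← eq_inv_of_mul_eq_one_right hy']
      exact y.2
    rw [this]
    exact isIntegral_zero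
  · intro h hR hinv
    by_cases h0 : h = 0
    · rw [h0, inv_zero]; exact zero_mem _
    obtain ⟨hW, hi⟩ := (hmem h).1 hR
    rw [hmem]
    refine ⟨hinv, ?_⟩
    have e : π ⟨h⁻¹, hinv⟩ = (π ⟨h, hW⟩)⁻¹ := by
      apply eq_inv_of_mul_eq_one_left
      rw [← map_mul, ← map_one π]
      congr 1
      exact Subtype.ext (inv_mul_cancel₀ h0)
    rw [e, ← isAlgebraic_iff_isIntegral]
    exact (isAlgebraic_iff_isIntegral.2 hi).inv
  · intro f hf
    by_cases hW : f ∈ W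
    · have hA : π ⟨f, hW⟩ ∉ A.toSubring := fun h => hf ((hmem f).2 ⟨hW, h⟩)
      have : IsIntegrallyClosedIn A.toSubring (IsLocalRing.ResidueField W) := by
        rw [Subring.isIntegrallyClosedIn_iff]
        intro z hz
        have hz' : IsIntegral A z := hz
        exact isIntegral_trans (R := E) (A := A) z hz'
      obtain ⟨U', h1, h2⟩ := Subring.exists_le_valuationSubring_of_isIntegrallyClosedIn hA
      obtain ⟨U, hU⟩ := exists_composite W U'
      refine ⟨U, fun h hh => ?_, fun h => ?_⟩
      · obtain ⟨hW, hi⟩ := (hmem h).1 hh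
        exact (hU h).2 ⟨hW, h1 hi⟩
      · obtain ⟨hW, hi⟩ := (hU f).1 h
        exact h2 hi
    · exact ⟨W, fun h hh => ((hmem h).1 hh).1, hW⟩
  · intro K hEK hKW u hu htr hR
    obtain ⟨hW, p, hp, hpe⟩ := (hmem u).1 hR
    have h1 : π (p.eval₂ j ⟨u, hW⟩) = 0 := by
      rw [Polynomial.hom_eval₂]
      exact hpe
    have h2 : ((p.eval₂ j ⟨u, hW⟩ : W) : F) = aeval u p := by
      have := Polynomial.hom_eval₂ p j W.subtype ⟨u, hW⟩
      exact this
    have h3 : aeval u p ≠ 0 := fun h => hp.ne_zero (transcendental_iff.1 htr p h)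
    have h4 : (aeval u p : F) ∈ K := by
      rw [aeval_eq_sum_range]
      refine sum_mem fun i _ => ?_
      rw [Algebra.smul_def]
      exact mul_mem (hEK (p.coeff i).2) (pow_mem hu i)
    have h5 : (aeval u p : F)⁻¹ ∈ W := hKW _ (K.inv_mem h4)
    rw [IsLocalRing.residue_eq_zero_iff] at h1
    apply h1
    refine IsUnit.of_mul_eq_one ⟨_, h5⟩ (Subtype.ext ?_)
    change ((p.eval₂ j ⟨u, hW⟩ : W) : F) * (aeval u p : F)⁻¹ = 1
    rw [h2, mul_inv_cancel₀ h3]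

end EssJ

namespace EssJ

open Polynomial

section Construct

variable {k F : Type} [Field k] [Field F] [Algebra k F] {r : ℕ} (X : (ℕ × ℕ) ⊕ Fin r → F)

/-- The variables of index less than `j`. -/
def AJ (r j : ℕ) : Set ((ℕ × ℕ) ⊕ Fin r) := {s | ∀ i, s = Sum.inr i → (i : ℕ) < j}

theorem AJ_mono {r j l : ℕ} (h : j ≤ l) : AJ r j ⊆ AJ r l := fun _ hs i hi => (hs i hi).trans_le h

theorem inr_mem_AJ {r j : ℕ} (i : Fin r) : Sum.inr i ∈ AJ r j ↔ (i : ℕ) < j := by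
  constructor
  · intro h; exact h i rfl
  · rintro h l hl
    rw [← Sum.inr_injective hl]; exact h

theorem inl_mem_AJ {r j : ℕ} (p : ℕ × ℕ) : Sum.inl p ∈ AJ r j := fun i hi => by simp at hi

/-- The variables which are not in the `i`-th row. -/
def AC (r i : ℕ) : Set ((ℕ × ℕ) ⊕ Fin r) := {s | ∀ n, s ≠ Sum.inl (i, n)}

theorem inr_mem_AC {r i : ℕ} (l : Fin r) : Sum.inr l ∈ AC r i := fun n => by simp

theorem inl_mem_AC {r i m n : ℕ} (h : m ≠ i) : Sum.inl (m, n) ∈ AC r i := fun l => by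
  simp [h]

theorem exists_U0 (hX : AlgebraicIndependent k X) (j : ℕ) (hj : j ≤ r) :
    ∃ U : ValuationSubring F, (∀ e ∈ LF k X (AJ r 0), e ∈ U) ∧
      (∀ i : Fin r, (i : ℕ) < j → (X (Sum.inr i))⁻¹ ∉ U) ∧
      ∀ i l : Fin r, i < l → (l : ℕ) < j → ∀ n : ℕ, X (Sum.inr i) ^ n / X (Sum.inr l) ∉ U := by
  induction j with
  | zero => exact ⟨⊤, fun _ _ => ValuationSubring.mem_top _, by simp, by simp⟩
  | succ j ih =>
    obtain ⟨U, h1, h2, h3⟩ := ih (by omega)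
    let t : Fin r := ⟨j, by omega⟩
    obtain ⟨V, v1, v2, v3⟩ := exists_step (LF k X (AJ r j)) (X (Sum.inr t))
      (LF_trans X hX (AJ r j) (by rw [inr_mem_AJ]; simp [t])) U
    have hm : ∀ i : Fin r, (i : ℕ) < j → X (Sum.inr i) ∈ LF k X (AJ r j) :=
      fun i hi => mem_LF X ((inr_mem_AJ i).2 hi)
    refine ⟨V, fun e he => v1 e (LF_mono X (AJ_mono (by omega)) he) (h1 e he), ?_, ?_⟩
    · intro i hi
      by_cases hij : (i : ℕ) < j
      · exact v2 _ (inv_mem (hm i hij)) (h2 i hij)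
      · have : i = t := Fin.ext (by simp only [t]; omega)
        have h := (v3 1 (one_mem _)).resolve_left one_ne_zero
        rw [one_mul] at h
        rw [this]; exact h
    · intro i l hil hl n
      by_cases hij : (l : ℕ) < j
      · have hi : (i : ℕ) < j := lt_trans hil hij
        exact v2 _ (div_mem (pow_mem (hm i hi) n) (hm l hij)) (h3 i l hil hij n)
      · have hlt : l = t := Fin.ext (by simp only [t]; omega)
        have hi : (i : ℕ) < j := by
          have : (i : ℕ) < l := hil
          omega
        have hne : X (Sum.inr i) ≠ 0 := hX.ne_zero _
        have h := (v3 _ (inv_mem (pow_mem (hm i hi) n))).resolve_left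
          (inv_ne_zero (pow_ne_zero n hne))
        rw [mul_inv, inv_inv, ← div_eq_mul_inv] at h
        rw [hlt]; exact h

theorem exists_U0' (hX : AlgebraicIndependent k X) :
    ∃ U : ValuationSubring F, (∀ e ∈ LF k X (AJ r 0), e ∈ U) ∧
      VChain (U : Set F) (fun j : Fin r => X (Sum.inr j.rev)) := by
  obtain ⟨U, h1, h2, h3⟩ := exists_U0 X hX r le_rfl
  exact ⟨U, h1, fun j => hX.ne_zero _, fun j => h2 _ j.rev.2, fun l j hlj n =>
    h3 _ _ (Fin.rev_lt_rev.2 hlj) l.rev.2 n⟩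

theorem exists_W (hX : AlgebraicIndependent k X) (hr : 2 ≤ r) :
    ∃ W : ValuationSubring F, (∀ e ∈ LF k X (AJ r (r - 1)), e ∈ W) ∧ ∃ t, t⁻¹ ∉ W := by
  let t : Fin r := ⟨r - 1, by omega⟩
  obtain ⟨V, v1, v2, v3⟩ := exists_step (LF k X (AJ r (r - 1))) (X (Sum.inr t))
    (LF_trans X hX (AJ r (r - 1)) (by rw [inr_mem_AJ]; simp [t])) ⊤
  refine ⟨V, fun e he => v1 e he (ValuationSubring.mem_top _), X (Sum.inr t), ?_⟩
  have h := (v3 1 (one_mem _)).resolve_left one_ne_zero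
  rwa [one_mul] at h

theorem mem_AC_cofinite (hgen : IntermediateField.adjoin k (Set.range X) = ⊤) (f : F) :
    {i | f ∉ LF k X (AC r i)}.Finite := by
  obtain ⟨A, hA, hf⟩ := LF_finite X hgen f
  refine (hA.image (fun s => Sum.elim (fun p : ℕ × ℕ => p.1) (fun _ => 0) s)).subset ?_
  intro i hi
  by_contra hcon
  refine hi (LF_mono X ?_ hf)
  intro s hs n hsn
  exact hcon ⟨s, hs, by rw [hsn]; rfl⟩

/-- The valuation rings `V i` obtained from the `U i`. -/
theorem exists_V [Countable F] (hX : AlgebraicIndependent k X)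
    (hgen : IntermediateField.adjoin k (Set.range X) = ⊤) (i : ℕ) (U : ValuationSubring F) :
    ∃ V : ValuationSubring F, (∀ a ∈ LF k X (AC r i), a ∈ V ↔ a ∈ U) ∧
      (∀ f, f ≠ 0 → ∃ n, f / X (Sum.inl (i, n)) ∈ V ∧ X (Sum.inl (i, n)) / f ∈ V) ∧
      (∀ f, f ≠ 0 → ∃ a ∈ LF k X (AC r i), a ≠ 0 ∧ f / a ∈ V ∧ a / f ∈ V) := by
  classical
  obtain ⟨g, hg⟩ := exists_surjective_nat F
  let c : ℕ → F := fun n => if g n ∈ LF k X (AC r i) ∧ g n ≠ 0 then g n else 1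
  obtain ⟨V, h1, h2, h3⟩ := exists_gauss (LF k X (AC r i)) (fun n => X (Sum.inl (i, n)))
    (LF_algInd X hX (fun n => Sum.inl (i, n)) (fun a b h => by simpa using h) _
      (fun n h => h n rfl))
    (LF_gen X hgen (fun n => Sum.inl (i, n)) _ (fun s => by
      by_cases hs : s ∈ AC r i
      · exact Or.inl hs
      · right
        simp only [AC, Set.mem_setOf_eq, not_forall, not_not] at hs
        obtain ⟨n, hn⟩ := hs
        exact ⟨n, hn.symm⟩))
    c (fun n => by
      by_cases h : g n ∈ LF k X (AC r i) ∧ g n ≠ 0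
      · simp only [c, if_pos h]; exact h.1
      · simp only [c, if_neg h]; exact one_mem _)
    (fun n => by
      by_cases h : g n ∈ LF k X (AC r i) ∧ g n ≠ 0
      · simp only [c, if_pos h]; exact h.2
      · simp only [c, if_neg h]; exact one_ne_zero) U
  refine ⟨V, h1, ?_, h3⟩
  intro f hf
  obtain ⟨a, ha, ha0, hfa, haf⟩ := h3 f hf
  obtain ⟨n, hn⟩ := hg a
  have hc : c n = a := by
    simp only [c, hn]
    rw [if_pos ⟨ha, ha0⟩]
  have h2n := h2 n
  rw [hc] at h2n
  refine ⟨n, ?_, ?_⟩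
  · have := mul_mem hfa h2n.2
    rwa [div_mul_div_cancel₀ ha0] at this
  · have := mul_mem h2n.1 haf
    rwa [div_mul_div_cancel₀ ha0] at this

theorem exists_core [Countable F] (hX : AlgebraicIndependent k X)
    (hgen : IntermediateField.adjoin k (Set.range X) = ⊤) (hr : 2 ≤ r) : Nonempty (Core F r) := by
  classical
  obtain ⟨W, hW, t, ht⟩ := exists_W X hX hr
  let E := LF k X (AJ r 0)
  have hEK : E ≤ LF k X (AJ r (r - 1)) := LF_mono X (AJ_mono (by omega))
  obtain ⟨R, hER, hRW, hMR, hRl, hRc, hRu⟩ := exists_R E W (fun e he => hW e (hEK he))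
  obtain ⟨U0, hU0, hchain⟩ := exists_U0' X hX
  obtain ⟨g, hg⟩ := exists_surjective_nat F
  have hUex : ∀ i : ℕ, ∃ U : ValuationSubring F, (∀ h ∈ R, h ∈ U) ∧
      (g (Nat.unpair i).1 ∉ R → g (Nat.unpair i).1 ∉ U) := by
    intro i
    by_cases h : g (Nat.unpair i).1 ∈ R
    · exact ⟨W, hRW, fun h' => absurd h h'⟩
    · obtain ⟨U, h1, h2⟩ := hRc _ h
      exact ⟨U, h1, fun _ => h2⟩
  choose U' hU'R hU'e using hUex
  let U : ℕ → ValuationSubring F := fun i => if i = 0 then U0 else U' i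
  have hU_zero : U 0 = U0 := if_pos rfl
  have hU_pos : ∀ i, i ≠ 0 → U i = U' i := fun i hi => if_neg hi
  have hUE : ∀ i, ∀ e ∈ E, e ∈ U i := by
    intro i e he
    by_cases hi : i = 0
    · rw [hi, hU_zero]; exact hU0 e he
    · rw [hU_pos i hi]; exact hU'R i e (hER e he)
  choose V hV1 hV2 hV3 using fun i => exists_V X hX hgen i (U i)
  have htr : ∀ (U : ValuationSubring F), (∀ e ∈ E, e ∈ U) →
      ∀ m (a : Fin m → F), VChain (U : Set F) a → m ≤ r := by
    intro U hU m a ha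
    refine trdeg_bound E (fun i : Fin r => X (Sum.inr i)) ?_ a (ha.algebraicIndependent E U hU)
    refine LF_gen X hgen (fun i : Fin r => Sum.inr i) _ fun s => ?_
    rcases s with p | i
    · exact Or.inl (inl_mem_AJ p)
    · exact Or.inr ⟨i, rfl⟩
  let u0 : Fin r := ⟨0, by omega⟩
  have huK : X (Sum.inr u0) ∈ LF k X (AJ r (r - 1)) :=
    mem_LF X ((inr_mem_AJ u0).2 (by simp only [u0]; omega))
  have hutr : Transcendental E (X (Sum.inr u0)) :=
    LF_trans X hX _ (by rw [inr_mem_AJ]; simp)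
  refine ⟨{
    E := E
    R := R
    W := W
    V := V
    B := fun m => LF k X (AJ r 0 ∩ AC r m)
    x := fun i n => X (Sum.inl (i, n))
    u := X (Sum.inr u0)
    t := t
    E_le := hER
    R_le := hRW
    M_le := hMR
    R_loc := hRl
    u_mem := hW _ huK
    u_notMem := hRu _ hEK hW _ huK hutr
    u_notMem' := hRu _ hEK hW _ (inv_mem huK) fun h => hutr (by simpa using h.inv)
    t_inv := ht
    x_ne := fun i n => hX.ne_zero _
    x_mem := fun i n => mem_LF X (inl_mem_AJ _)
    B_le := ?_
    x_mem_B := fun i n m h => mem_LF X ⟨inl_mem_AJ _, inl_mem_AC h⟩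
    cofin := ?_
    inter := ?_
    val := hV2
    bound := ?_
    boundR := fun U hU => htr U fun e he => hU e (hER e he)
    chain := ?_ }⟩
  · intro m b hb
    exact (hV1 m b (LF_mono X Set.inter_subset_right hb)).2
      (hUE m b (LF_mono X Set.inter_subset_left hb))
  · intro h hh
    refine ((mem_AC_cofinite X hgen h).union (Set.finite_singleton 0)).subset ?_
    intro j hj
    by_contra hcon
    simp only [Set.mem_union, Set.mem_setOf_eq, Set.mem_singleton_iff, not_or, not_not] at hcon
    apply hj
    rw [hV1 j h hcon.1, hU_pos j hcon.2]
    exact hU'R j h hh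
  · intro h hh
    by_contra hR
    obtain ⟨n, hn⟩ := hg h
    have hinf : (Set.range fun l => Nat.pair n l).Infinite :=
      Set.infinite_range_of_injective fun a b hab => (Nat.pair_eq_pair.1 hab).2
    obtain ⟨i, ⟨l, hl⟩, hi⟩ := hinf.exists_notMem_finite
      ((mem_AC_cofinite X hgen h).union (Set.finite_singleton 0))
    simp only [Set.mem_union, Set.mem_setOf_eq, Set.mem_singleton_iff, not_or, not_not] at hi
    have h1 := hh i
    rw [hV1 i h hi.1, hU_pos i hi.2] at h1
    have h2 := hU'e i
    rw [← hl] at h2 h1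
    simp only [Nat.unpair_pair, hn] at h2
    exact h2 hR h1
  · intro i m a ha
    choose b hbK hb0 hab hba using fun j => hV3 i (a j) (ha.1 j)
    have hb := ha.congr (b := b) fun j => ⟨hb0 j, hab j, hba j⟩
    refine htr (U i) (hUE i) m b ⟨hb.1, fun j hj => hb.2.1 j ?_, fun l j hlj n hn =>
      hb.2.2 l j hlj n ?_⟩
    · exact (hV1 i _ (inv_mem (hbK j))).2 hj
    · exact (hV1 i _ (div_mem (pow_mem (hbK j) n) (hbK l))).2 hn
  · have hK : ∀ l : Fin r, X (Sum.inr l) ∈ LF k X (AC r 0) := fun l => mem_LF X (inr_mem_AC l)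
    rw [← hU_zero] at hchain
    refine ⟨_, hchain.1, fun j hj => hchain.2.1 j ?_, fun l j hlj n hn => hchain.2.2 l j hlj n ?_⟩
    · exact (hV1 0 _ (inv_mem (hK _))).1 hj
    · exact (hV1 0 _ (div_mem (pow_mem (hK _) n) (hK _))).1 hn

end Construct

theorem final (r : ℕ) (hr : 2 ≤ r) : ∃ (F : Type) (_ : Field F), Nonempty (Core F r) := by
  let P := MvPolynomial ((ℕ × ℕ) ⊕ Fin r) ℚ
  let F := FractionRing P
  let X : (ℕ × ℕ) ⊕ Fin r → F := fun s => algebraMap P F (MvPolynomial.X s)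
  have hcP : Countable P := by
    rw [← Cardinal.mk_le_aleph0_iff]
    refine MvPolynomial.cardinalMk_le_max.trans ?_
    simp
  have hc : Countable F := by
    have : Function.Surjective (fun p : P × P => algebraMap P F p.1 / algebraMap P F p.2) := by
      intro z
      obtain ⟨a, b, -, h⟩ := IsFractionRing.div_surjective (A := P) z
      exact ⟨(a, b), h⟩
    exact this.countable
  have haev : ∀ p : P, MvPolynomial.aeval X p = algebraMap P F p := by
    intro p
    have := MvPolynomial.aeval_algebraMap_apply F (MvPolynomial.X : (ℕ × ℕ) ⊕ Fin r → P) p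
    rw [MvPolynomial.aeval_X_left_apply] at this
    exact this
  have hX : AlgebraicIndependent ℚ X := by
    intro p q h
    rw [haev, haev] at h
    exact IsFractionRing.injective P F h
  have hgen : IntermediateField.adjoin ℚ (Set.range X) = ⊤ := by
    rw [eq_top_iff]
    intro z _
    rw [IntermediateField.mem_adjoin_range_iff]
    obtain ⟨a, b, -, h⟩ := IsFractionRing.div_surjective (A := P) z
    exact ⟨a, b, by rw [haev, haev, h]⟩
  exact ⟨F, inferInstance, exists_core X hX hgen hr⟩

end EssJ

/-- For every integer `r ≥ 2` there exists an integral domain `D` which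
is essential, satisfies `dim(D) = dim_v(D) = r` (hence is an `r`-dimensional Jaffard
domain), but is not locally essential: some localization `D_q` at a prime `q` is not
essential. -/
theorem exists_essential_jaffard_not_locallyEssential (r : ℕ) (hr : 2 ≤ r) :
    ∃ (D : Type) (_ : CommRing D) (_ : IsDomain D),
      IsEssential D ∧
      ringKrullDim D = (r : WithBot ℕ∞) ∧
      valuativeDim D = (r : WithBot ℕ∞) ∧
      ∃ (q : Ideal D) (hq : q.IsPrime),
        haveI := hq
        ¬ IsEssential (Localization.AtPrime q) := by
  obtain ⟨F, _, ⟨C⟩⟩ := EssJ.final r hr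
  exact EssJ.Core.main C
end
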